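/- (Statistical error of the stochastic gradient Euler–Maruyama integrator, strong order p = 1, q = 1.) Assume A1, A2', A3 and A4. Consider the stochastic gradient Euler–Maruyama chain (X̃_n,Ṽ_n) with time step h and damping rate γ, started from initial data with E(|X̃₀|+|Ṽ₀|+1)⁴ < ∞. There exists γ₀ > 0 such that whenever γ ≥ γ₀, there exist constants C, h₀ > 0 depending on γ such that for every 0 < h ≤ h₀ and every integer N ≥ 1: E[((1/N)·Σ_{n=0}^{N−1} f(X̃_n,Ṽ_n) − π(f))²] ≤ C·(h² + 1/(Nh))·E(|X̃₀|+|Ṽ₀|+1)⁴. -/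

import Mathlib

open MeasureTheory ProbabilityTheory RealInnerProductSpace
open scoped ENNReal

/-!
Large damping makes the noiseless dynamics contractive in the twisted norm
`√(|x|² + |x + (2/γ) v|²)`. We compare the chain with a reference integrator: a symplectic Euler
step followed by damping and Gaussian noise whose variance is chosen so that this second half
preserves the Maxwell distribution of velocities exactly. Its transition operator `Q` contracts the
first and second derivatives of observables at the rate `1 - O(h)`, so the truncated Neumann series
`φ = h ∑_{j < K} Q^j f` has derivatives bounded uniformly in `h` and `K`, and it solves the discrete
Poisson equation `φ - Q φ = h (f - Q^K f)`.

The transition operator of the stochastic gradient chain agrees with `Q` up to a weak local error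
`O(h²)`, because the stochastic gradient is unbiased, and the symplectic Euler step preserves `π`
up to `O(h²)`, so that `Q^K f` is within `O(h)` of `π(f)` as `K → ∞`. Summing the Poisson equation
along the chain, the time average of `f - π(f)` is a telescoping term plus a martingale, whose
second moments are `O(1/(Nh)²)` and `O(1/(Nh))`, plus a bias of size `O(h)`; the drift condition
bounds the fourth moments of the chain uniformly in time. When `Nh ≤ 1` the Lipschitz bound on `f`
suffices.
-/

namespace UnderdampedLangevin

set_option maxSynthPendingDepth 3

section TwistedNorm

variable {E : Type*} [NormedAddCommGroup E] [InnerProductSpace ℝ E]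

/-- The twisted Euclidean norm `√(‖x‖² + ‖x + c v‖²)` on phase space. The damped Euler step is not
a contraction for the product norm, but it is one for this norm with `c = 2 / γ`. -/
noncomputable def twistedNorm (c : ℝ) (z : E × E) : ℝ :=
  √(‖z.1‖ ^ 2 + ‖z.1 + c • z.2‖ ^ 2)

lemma twistedNorm_nonneg (c : ℝ) (z : E × E) : 0 ≤ twistedNorm c z := Real.sqrt_nonneg _

lemma twistedNorm_sq (c : ℝ) (z : E × E) :
    twistedNorm c z ^ 2 = ‖z.1‖ ^ 2 + ‖z.1 + c • z.2‖ ^ 2 :=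
  Real.sq_sqrt (by positivity)

lemma norm_fst_le_twistedNorm (c : ℝ) (z : E × E) : ‖z.1‖ ≤ twistedNorm c z :=
  Real.le_sqrt_of_sq_le (le_add_of_nonneg_right (by positivity))

lemma norm_fst_add_smul_snd_le_twistedNorm (c : ℝ) (z : E × E) :
    ‖z.1 + c • z.2‖ ≤ twistedNorm c z :=
  Real.le_sqrt_of_sq_le (le_add_of_nonneg_left (by positivity))

lemma twistedNorm_zero_left {c : ℝ} (hc : 0 < c) (v : E) : twistedNorm c (0, v) = c * ‖v‖ := by
  have : 0 ≤ c * ‖v‖ := by positivity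
  simp [twistedNorm, norm_smul, abs_of_pos hc, Real.sqrt_sq this]

lemma norm_le_twistedNorm {c : ℝ} (hc : 0 < c) (z : E × E) :
    ‖z‖ ≤ (1 + 2 / c) * twistedNorm c z := by
  have hx := norm_fst_le_twistedNorm c z
  have hcv : c * ‖z.2‖ ≤ 2 * twistedNorm c z := by
    calc c * ‖z.2‖ = ‖(z.1 + c • z.2) - z.1‖ := by
          rw [add_sub_cancel_left, norm_smul, Real.norm_of_nonneg hc.le]
      _ ≤ ‖z.1 + c • z.2‖ + ‖z.1‖ := norm_sub_le _ _
      _ ≤ 2 * twistedNorm c z := by linarith [norm_fst_add_smul_snd_le_twistedNorm c z]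
  have hv : ‖z.2‖ ≤ 2 / c * twistedNorm c z := by
    rw [div_mul_eq_mul_div, le_div_iff₀ hc]
    linarith
  have h0 := twistedNorm_nonneg c z
  have hv0 : 0 ≤ 2 / c * twistedNorm c z := by positivity
  exact max_le (by linarith) (by linarith)

lemma twistedNorm_le_norm {c : ℝ} (hc : 0 < c) (z : E × E) : twistedNorm c z ≤ (2 + c) * ‖z‖ := by
  have hx : ‖z.1‖ ≤ ‖z‖ := norm_fst_le z
  have hxv : ‖z.1 + c • z.2‖ ≤ (1 + c) * ‖z‖ := by
    calc ‖z.1 + c • z.2‖ ≤ ‖z.1‖ + c * ‖z.2‖ := by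
          simpa [norm_smul, abs_of_pos hc] using norm_add_le z.1 (c • z.2)
      _ ≤ ‖z‖ + c * ‖z‖ := by gcongr; exact norm_snd_le z
      _ = (1 + c) * ‖z‖ := by ring
  refine Real.sqrt_le_iff.2 ⟨by positivity, ?_⟩
  calc ‖z.1‖ ^ 2 + ‖z.1 + c • z.2‖ ^ 2 ≤ ‖z‖ ^ 2 + ((1 + c) * ‖z‖) ^ 2 := by gcongr
    _ ≤ ((2 + c) * ‖z‖) ^ 2 := by
        nlinarith [mul_nonneg hc.le (sq_nonneg ‖z‖), sq_nonneg ‖z‖]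

lemma one_add_norm_pow_four_le {γ : ℝ} (hγ : 0 < γ) (z : E × E) :
    (1 + ‖z‖) ^ 4 ≤ 8 + 8 * (1 + γ) ^ 4 * twistedNorm (2 / γ) z ^ 4 := by
  have hz : ‖z‖ ≤ (1 + γ) * twistedNorm (2 / γ) z :=
    (norm_le_twistedNorm (c := 2 / γ) (by positivity) z).trans_eq
      (by rw [div_div_cancel₀ two_ne_zero])
  have hz4 := pow_le_pow_left₀ (norm_nonneg _) hz 4
  have hconvex := add_pow_le (zero_le_one' ℝ) (norm_nonneg z) 4
  norm_num at hconvex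
  linarith [mul_pow (1 + γ) (twistedNorm (2 / γ) z) 4]

lemma twistedNorm_pow_four_le {γ : ℝ} (hγ : 0 < γ) (z : E × E) :
    twistedNorm (2 / γ) z ^ 4 ≤ (2 + 2 / γ) ^ 4 * (‖z.1‖ + ‖z.2‖ + 1) ^ 4 := by
  have hz : ‖z‖ ≤ ‖z.1‖ + ‖z.2‖ + 1 :=
    max_le (by linarith [norm_nonneg z.2]) (by linarith [norm_nonneg z.1])
  rw [← mul_pow]
  refine pow_le_pow_left₀ (twistedNorm_nonneg _ _) ?_ 4
  exact (twistedNorm_le_norm (by positivity) z).trans (by gcongr)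

lemma norm_sq_drift_damp (τ : ℝ) (u q : E) :
    ‖u + τ • q‖ ^ 2 + ‖u + (1 - τ) • q‖ ^ 2 =
      ‖u‖ ^ 2 + ‖u + q‖ ^ 2 - 2 * τ * (1 - τ) * ‖q‖ ^ 2 := by
  simp only [norm_add_sq_real, inner_smul_right, norm_smul, mul_pow, Real.norm_eq_abs, sq_abs]
  ring

lemma norm_sq_add_norm_add_sq_le {τ : ℝ} (hτ0 : 0 ≤ τ) (hτ1 : τ ≤ 1 / 4) (u q : E) :
    ‖u‖ ^ 2 + ‖u + q‖ ^ 2 ≤ 6 * ‖u + τ • q‖ ^ 2 + 3 * ‖q‖ ^ 2 := by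
  have hu : ‖u‖ ≤ ‖u + τ • q‖ + 1 / 4 * ‖q‖ := by
    calc ‖u‖ = ‖(u + τ • q) - τ • q‖ := by rw [add_sub_cancel_right]
      _ ≤ ‖u + τ • q‖ + τ * ‖q‖ := by
        simpa [norm_smul, abs_of_nonneg hτ0] using norm_sub_le (u + τ • q) (τ • q)
      _ ≤ ‖u + τ • q‖ + 1 / 4 * ‖q‖ := by gcongr
  have hu2 := pow_le_pow_left₀ (norm_nonneg u) hu 2
  have huq := pow_le_pow_left₀ (norm_nonneg _) (norm_add_le u q) 2
  nlinarith only [hu2, huq, sq_nonneg (‖u + τ • q‖ - 1 / 4 * ‖q‖), sq_nonneg (‖u‖ - ‖q‖),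
    sq_nonneg ‖q‖]

lemma rate_mul_norm_sq_le_dissipation {γ m τ : ℝ} (hγ : 0 < γ) (hm : 0 ≤ m) (hmγ : m ≤ γ ^ 2)
    (hτ0 : 0 ≤ τ) (hτ1 : τ ≤ 1 / 4) (u q : E) :
    m / (16 * γ) * (‖u‖ ^ 2 + ‖u + q‖ ^ 2) ≤ γ / 2 * ‖q‖ ^ 2 + m / γ * ‖u + τ • q‖ ^ 2 := by
  have hsum := norm_sq_add_norm_add_sq_le hτ0 hτ1 u q
  have hmγ' : m / γ ≤ γ := by rwa [div_le_iff₀ hγ, ← sq]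
  have : 0 ≤ m / γ * ‖u + τ • q‖ ^ 2 := by positivity
  have : 0 ≤ γ * ‖q‖ ^ 2 := by positivity
  calc m / (16 * γ) * (‖u‖ ^ 2 + ‖u + q‖ ^ 2)
      ≤ m / (16 * γ) * (6 * ‖u + τ • q‖ ^ 2 + 3 * ‖q‖ ^ 2) := by gcongr
    _ = 6 / 16 * (m / γ * ‖u + τ • q‖ ^ 2) + 3 / 16 * (m / γ) * ‖q‖ ^ 2 := by field_simp
    _ ≤ 6 / 16 * (m / γ * ‖u + τ • q‖ ^ 2) + 3 / 16 * γ * ‖q‖ ^ 2 := by gcongr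
    _ ≤ _ := by linarith

lemma norm_sub_smul_sq_le_of_coercive {m C s η κ : ℝ} (hm : 0 < m) (hC : 0 ≤ C) (hs : 0 ≤ s)
    (hη : 1 / 2 ≤ η) (hη1 : η ≤ 1) (hsC : s * C ^ 2 ≤ m / 4) (hκ : 4 * C ^ 2 ≤ κ * m)
    {u q g : E} (hcoer : m * ‖u‖ ^ 2 ≤ ⟪u, g⟫) (hg : ‖g‖ ≤ C * ‖u‖) :
    ‖u + η • q - (η * s) • g‖ ^ 2 ≤
      ‖u + η • q‖ ^ 2 - s * m / 2 * ‖u‖ ^ 2 + s * κ * ‖q‖ ^ 2 := by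
  have hqg : -(C * ‖q‖ * ‖u‖) ≤ ⟪q, g⟫ := by
    have h := (abs_le.1 (abs_real_inner_le_norm q g)).1
    have : ‖q‖ * ‖g‖ ≤ ‖q‖ * (C * ‖u‖) := by gcongr
    linarith
  have hcross : s * (m / 2 * ‖u‖ ^ 2 - C * ‖q‖ * ‖u‖) ≤ η * s * (⟪u, g⟫ + η * ⟪q, g⟫) := by
    have h₁ : 1 / 2 * (m * ‖u‖ ^ 2) ≤ η * ⟪u, g⟫ := by gcongr
    have h₂ : η ^ 2 * -(C * ‖q‖ * ‖u‖) ≤ η ^ 2 * ⟪q, g⟫ := by gcongr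
    have h₃ : η ^ 2 * (C * ‖q‖ * ‖u‖) ≤ 1 * (C * ‖q‖ * ‖u‖) := by gcongr; nlinarith
    calc _ ≤ s * (η * ⟪u, g⟫ + η ^ 2 * ⟪q, g⟫) := by gcongr; linarith
      _ = _ := by ring
  have hsq : (η * s * ‖g‖) ^ 2 ≤ s * (m / 4) * ‖u‖ ^ 2 := by
    calc (η * s * ‖g‖) ^ 2 ≤ (1 * s * (C * ‖u‖)) ^ 2 := by gcongr
      _ = s * (s * C ^ 2) * ‖u‖ ^ 2 := by ring
      _ ≤ s * (m / 4) * ‖u‖ ^ 2 := by gcongr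
  have hyoung : 2 * (C * ‖q‖ * ‖u‖) ≤ m / 4 * ‖u‖ ^ 2 + κ * ‖q‖ ^ 2 := by
    refine le_of_mul_le_mul_left ?_ hm
    have : 4 * C ^ 2 * ‖q‖ ^ 2 ≤ κ * m * ‖q‖ ^ 2 := by gcongr
    nlinarith only [this, sq_nonneg (m / 2 * ‖u‖ - 2 * C * ‖q‖)]
  have hsyoung := mul_le_mul_of_nonneg_left hyoung hs
  rw [norm_sub_sq_real, norm_smul, Real.norm_of_nonneg (by positivity : 0 ≤ η * s),
    inner_smul_right, inner_add_left, real_inner_smul_left]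
  linarith only [hcross, hsq, hsyoung]

end TwistedNorm

section Admissible

/-- Step sizes and damping rates for which the damped Euler step contracts the twisted norm, for a
force that is `m`-strongly monotone and `C₁`-Lipschitz: the damping is large compared to `C₁²/m`
and the step size is small. -/
structure Admissible (γ m C₁ h : ℝ) : Prop where
  γ_pos : 0 < γ
  m_pos : 0 < m
  C₁_pos : 0 < C₁
  h_pos : 0 < h
  h_le_one : h ≤ 1
  damping_large : 32 * C₁ ^ 2 ≤ m * γ ^ 2
  m_le_sq : m ≤ γ ^ 2
  γh_le_half : γ * h ≤ 1 / 2
  hC₁_small : 8 * h * C₁ ^ 2 ≤ m * γ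

/-- The contraction factor of one damped Euler step in the twisted norm. -/
noncomputable def contractionRate (γ m h : ℝ) : ℝ := 1 - m / (32 * γ) * h

variable {γ m C₁ h : ℝ}

lemma Admissible.contractionRate_lt_one (hp : Admissible γ m C₁ h) :
    contractionRate γ m h < 1 := by
  obtain ⟨hγ, hm, -, hh, -⟩ := hp
  exact sub_lt_self _ (by positivity)

lemma Admissible.half_le_contractionRate (hp : Admissible γ m C₁ h) :
    1 / 2 ≤ contractionRate γ m h := by
  have hγ := hp.γ_pos
  have hmh : m / (32 * γ) * h ≤ 1 / 2 := by
    rw [div_mul_eq_mul_div, div_le_iff₀ (by positivity)]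
    nlinarith [mul_le_mul_of_nonneg_right hp.m_le_sq hp.h_pos.le, hp.γh_le_half]
  unfold contractionRate
  linarith

lemma Admissible.contractionRate_nonneg (hp : Admissible γ m C₁ h) :
    0 ≤ contractionRate γ m h := by
  linarith [hp.half_le_contractionRate]

variable {E : Type*} [NormedAddCommGroup E] [InnerProductSpace ℝ E]

lemma Admissible.twistedNorm_sq_step_le (hp : Admissible γ m C₁ h) {u v g : E}
    (hcoer : m * ‖u + h • v‖ ^ 2 ≤ ⟪u + h • v, g⟫) (hg : ‖g‖ ≤ C₁ * ‖u + h • v‖) :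
    twistedNorm (2 / γ) (u + h • v, (1 - γ * h) • (v - h • g)) ^ 2 ≤
      (1 - m / (16 * γ) * h) * twistedNorm (2 / γ) (u, v) ^ 2 := by
  obtain ⟨hγ, hm, hC, hh, -, hdamp, hmγ, hγh, hhC⟩ := hp
  set q : E := (2 / γ) • v with hq
  set τ : ℝ := γ * h / 2 with hτ
  have hhv : h • v = τ • q := by rw [hq, hτ, smul_smul]; congr 1; field_simp
  have hkick : u + h • v + (2 / γ) • (1 - γ * h) • (v - h • g) =
      u + τ • q + (1 - γ * h) • q - ((1 - γ * h) * (h * (2 / γ))) • g := by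
    rw [hhv, hq]; module
  have hγh0 : 0 < γ * h := by positivity
  have hsC : h * (2 / γ) * C₁ ^ 2 ≤ m / 4 := by
    rw [show h * (2 / γ) * C₁ ^ 2 = 2 * h * C₁ ^ 2 / γ by ring, div_le_iff₀ hγ]
    linarith
  have hkicked := norm_sub_smul_sq_le_of_coercive (κ := γ ^ 2 / 8) (η := 1 - γ * h)
    (s := h * (2 / γ)) (q := q) hm hC.le (by positivity) (by linarith) (by linarith) hsC
    (by linarith) hcoer hg
  have hdrift := norm_sq_drift_damp τ u q
  have hpt : u + τ • q + (1 - γ * h) • q = u + (1 - τ) • q := by rw [hτ]; module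
  have hloss := rate_mul_norm_sq_le_dissipation hγ hm.le hmγ (by positivity : 0 ≤ τ) (by linarith)
    u q
  have hτq : 3 / 4 * (γ * h) * ‖q‖ ^ 2 ≤ 2 * τ * (1 - τ) * ‖q‖ ^ 2 := by
    refine mul_le_mul_of_nonneg_right ?_ (sq_nonneg _)
    nlinarith
  have hcoef₁ : h * (2 / γ) * (γ ^ 2 / 8) = γ * h / 4 := by field_simp; norm_num
  have hcoef₂ : h * (2 / γ) * m / 2 = h * (m / γ) := by ring
  simp only [twistedNorm_sq]
  rw [hkick]
  rw [hcoef₁, hcoef₂, hhv, hpt] at hkicked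
  rw [hhv, hpt]
  linarith only [hkicked, hdrift, hτq, mul_le_mul_of_nonneg_left hloss hh.le]

lemma Admissible.twistedNorm_step_le (hp : Admissible γ m C₁ h) {u v g : E}
    (hcoer : m * ‖u + h • v‖ ^ 2 ≤ ⟪u + h • v, g⟫) (hg : ‖g‖ ≤ C₁ * ‖u + h • v‖) :
    twistedNorm (2 / γ) (u + h • v, (1 - γ * h) • (v - h • g)) ≤
      contractionRate γ m h * twistedNorm (2 / γ) (u, v) := by
  have hr := hp.contractionRate_nonneg
  refine le_of_sq_le_sq ?_ (mul_nonneg hr (twistedNorm_nonneg _ _))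
  rw [mul_pow]
  refine (hp.twistedNorm_sq_step_le hcoer hg).trans ?_
  refine mul_le_mul_of_nonneg_right ?_ (sq_nonneg _)
  have : m / (16 * γ) = 2 * (m / (32 * γ)) := by ring
  rw [contractionRate, this]
  nlinarith [sq_nonneg (m / (32 * γ) * h)]

end Admissible

section DampedEuler

variable {E : Type*} [NormedAddCommGroup E] [InnerProductSpace ℝ E]

/-- An `m`-strongly monotone, `C₁`-Lipschitz vector field with `C₁`-Lipschitz derivative: the
properties of the force `∇U` on which the contraction argument rests. -/
structure IsMonotoneC11 (m C₁ : ℝ) (G : E → E) : Prop where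
  differentiable : Differentiable ℝ G
  norm_fderiv_le : ∀ x, ‖fderiv ℝ G x‖ ≤ C₁
  coercive : ∀ x k, m * ‖k‖ ^ 2 ≤ ⟪k, fderiv ℝ G x k⟫
  norm_fderiv_sub_le : ∀ x y, ‖fderiv ℝ G x - fderiv ℝ G y‖ ≤ C₁ * ‖x - y‖
  norm_le : ∀ x, ‖G x‖ ≤ C₁ * (‖x‖ + 1)

variable {γ m C₁ h : ℝ} {G : E → E}

lemma IsMonotoneC11.norm_sub_le (hG : IsMonotoneC11 m C₁ G) (x y : E) :
    ‖G x - G y‖ ≤ C₁ * ‖x - y‖ :=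
  convex_univ.norm_image_sub_le_of_norm_fderiv_le (fun x _ => hG.differentiable x)
    (fun x _ => hG.norm_fderiv_le x) trivial trivial

lemma IsMonotoneC11.mul_norm_sub_sq_le_inner (hG : IsMonotoneC11 m C₁ G) (x y : E) :
    m * ‖x - y‖ ^ 2 ≤ ⟪x - y, G x - G y⟫ := by
  set k := x - y with hk
  have hderiv (t : ℝ) : HasDerivAt (fun t : ℝ => ⟪k, G (y + t • k)⟫)
      ⟪k, fderiv ℝ G (y + t • k) k⟫ t := by
    have hline : HasDerivAt (fun t : ℝ => y + t • k) k t := by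
      simpa using ((hasDerivAt_id t).smul_const k).const_add y
    simpa using (hasDerivAt_const t k).inner ℝ
      ((hG.differentiable (y + t • k)).hasFDerivAt.comp_hasDerivAt t hline)
  obtain ⟨t, -, ht⟩ := exists_hasDerivAt_eq_slope _ _ zero_lt_one
    (fun t _ => (hderiv t).continuousAt.continuousWithinAt) (fun t _ => hderiv t)
  have hslope := hG.coercive (y + t • k) k
  rwa [ht, one_smul, zero_smul, sub_zero, div_one, add_zero, ← inner_sub_right,
    show y + k = x by rw [hk]; abel] at hslope

/-- The deterministic part of one step of the reference integrator: a symplectic Euler step for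
the Hamiltonian `‖v‖² / 2 + U x` with `∇U = G`, followed by damping of the velocity. -/
noncomputable def dampedEuler (γ h : ℝ) (G : E → E) (z : E × E) : E × E :=
  (z.1 + h • z.2, (1 - γ * h) • (z.2 - h • G (z.1 + h • z.2)))

lemma differentiable_dampedEuler (hG : Differentiable ℝ G) :
    Differentiable ℝ (dampedEuler γ h G) := by
  unfold dampedEuler
  fun_prop

lemma fderiv_dampedEuler_apply (hG : Differentiable ℝ G) (z k : E × E) :
    fderiv ℝ (dampedEuler γ h G) z k = (k.1 + h • k.2,
      (1 - γ * h) • (k.2 - h • fderiv ℝ G (z.1 + h • z.2) (k.1 + h • k.2))) := by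
  have hx : HasFDerivAt (fun z : E × E => z.1 + h • z.2)
      (ContinuousLinearMap.fst ℝ E E + h • ContinuousLinearMap.snd ℝ E E) z :=
    hasFDerivAt_fst.add (hasFDerivAt_snd.const_smul h)
  have hv := (hasFDerivAt_snd.sub
    (((hG (z.1 + h • z.2)).hasFDerivAt.comp z hx).const_smul h)).const_smul (1 - γ * h)
  rw [show fderiv ℝ (dampedEuler γ h G) z = _ from (hx.prodMk hv).fderiv]
  simp

lemma twistedNorm_fderiv_dampedEuler_le (hp : Admissible γ m C₁ h) (hG : IsMonotoneC11 m C₁ G)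
    (z k : E × E) :
    twistedNorm (2 / γ) (fderiv ℝ (dampedEuler γ h G) z k) ≤
      contractionRate γ m h * twistedNorm (2 / γ) k := by
  rw [fderiv_dampedEuler_apply hG.differentiable]
  exact hp.twistedNorm_step_le (hG.coercive _ _)
    (ContinuousLinearMap.le_of_opNorm_le _ (hG.norm_fderiv_le _) _)

lemma twistedNorm_dampedEuler_sub_le (hp : Admissible γ m C₁ h) (hG : IsMonotoneC11 m C₁ G)
    (z z' : E × E) :
    twistedNorm (2 / γ) (dampedEuler γ h G z - dampedEuler γ h G z') ≤
      contractionRate γ m h * twistedNorm (2 / γ) (z - z') := by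
  have hx : z.1 - z'.1 + h • (z.2 - z'.2) = (z.1 + h • z.2) - (z'.1 + h • z'.2) := by module
  have hstep : dampedEuler γ h G z - dampedEuler γ h G z' = (z.1 - z'.1 + h • (z.2 - z'.2),
      (1 - γ * h) • (z.2 - z'.2 - h • (G (z.1 + h • z.2) - G (z'.1 + h • z'.2)))) := by
    ext1 <;> simp only [dampedEuler, Prod.fst_sub, Prod.snd_sub] <;> module
  rw [hstep]
  refine hp.twistedNorm_step_le ?_ ?_ <;> rw [hx]
  · exact hG.mul_norm_sub_sq_le_inner _ _
  · exact hG.norm_sub_le _ _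

lemma twistedNorm_fderiv_dampedEuler_sub_le (hp : Admissible γ m C₁ h)
    (hG : IsMonotoneC11 m C₁ G) (z z' k : E × E) :
    twistedNorm (2 / γ) (fderiv ℝ (dampedEuler γ h G) z k - fderiv ℝ (dampedEuler γ h G) z' k) ≤
      2 / γ * C₁ * h * (twistedNorm (2 / γ) (z - z') * twistedNorm (2 / γ) k) := by
  have hγ := hp.γ_pos
  have hh := hp.h_pos
  have hC := hp.C₁_pos
  have hγh := hp.γh_le_half
  have hγh0 : 0 < γ * h := by positivity
  set x := z.1 + h • z.2
  set x' := z'.1 + h • z'.2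
  set l := k.1 + h • k.2
  have hz := twistedNorm_nonneg (2 / γ) (z - z')
  have hx : ‖x - x'‖ ≤ twistedNorm (2 / γ) (z - z') :=
    (norm_fst_le_twistedNorm (2 / γ) (dampedEuler γ h G z - dampedEuler γ h G z')).trans
      ((twistedNorm_dampedEuler_sub_le hp hG z z').trans
        (mul_le_of_le_one_left (twistedNorm_nonneg _ _) hp.contractionRate_lt_one.le))
  have hl : ‖l‖ ≤ twistedNorm (2 / γ) k := by
    have hfst := norm_fst_le_twistedNorm (2 / γ) (fderiv ℝ (dampedEuler γ h G) z k)
    rw [fderiv_dampedEuler_apply hG.differentiable] at hfst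
    refine hfst.trans ((twistedNorm_fderiv_dampedEuler_le hp hG z k).trans' ?_ |>.trans
      (mul_le_of_le_one_left (twistedNorm_nonneg _ _) hp.contractionRate_lt_one.le))
    rw [fderiv_dampedEuler_apply hG.differentiable]
  have hforce : ‖(fderiv ℝ G x - fderiv ℝ G x') l‖ ≤
      C₁ * (twistedNorm (2 / γ) (z - z') * twistedNorm (2 / γ) k) := by
    calc _ ≤ ‖fderiv ℝ G x - fderiv ℝ G x'‖ * ‖l‖ := ContinuousLinearMap.le_opNorm _ _
      _ ≤ C₁ * ‖x - x'‖ * ‖l‖ := by gcongr; exact hG.norm_fderiv_sub_le x x'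
      _ ≤ C₁ * twistedNorm (2 / γ) (z - z') * twistedNorm (2 / γ) k := by gcongr
      _ = _ := by ring
  have hdiff : fderiv ℝ (dampedEuler γ h G) z k - fderiv ℝ (dampedEuler γ h G) z' k =
      (0, -((1 - γ * h) * h) • (fderiv ℝ G x - fderiv ℝ G x') l) := by
    rw [fderiv_dampedEuler_apply hG.differentiable, fderiv_dampedEuler_apply hG.differentiable]
    ext1
    · simp only [Prod.fst_sub, sub_self]
    · simp only [Prod.snd_sub, sub_apply]; module
  rw [hdiff, twistedNorm_zero_left (by positivity), norm_smul, norm_neg,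
    Real.norm_of_nonneg (mul_nonneg (by linarith) hh.le)]
  calc _ ≤ 2 / γ * (1 * h * (C₁ * (twistedNorm (2 / γ) (z - z') * twistedNorm (2 / γ) k))) := by
        gcongr
        linarith
    _ = _ := by ring

end DampedEuler

section TwistedC11

variable {E : Type*} [NormedAddCommGroup E] [InnerProductSpace ℝ E]

/-- A `C^{1,1}` function on phase space, with its first derivative bounded by `L` and its first
derivative `M`-Lipschitz, both measured in the twisted norm. -/
structure TwistedC11 (c L M : ℝ) (g : E × E → ℝ) : Prop where
  differentiable : Differentiable ℝ g
  abs_fderiv_le : ∀ z k, |fderiv ℝ g z k| ≤ L * twistedNorm c k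
  abs_fderiv_sub_le : ∀ z z' k,
    |fderiv ℝ g z k - fderiv ℝ g z' k| ≤ M * twistedNorm c (z - z') * twistedNorm c k

namespace TwistedC11

variable {c L M : ℝ} {g : E × E → ℝ}

lemma norm_fderiv_le (hc : 0 < c) (hL : 0 ≤ L) (hg : TwistedC11 c L M g) (z : E × E) :
    ‖fderiv ℝ g z‖ ≤ L * (2 + c) := by
  refine ContinuousLinearMap.opNorm_le_bound _ (by positivity) fun k => ?_
  calc ‖fderiv ℝ g z k‖ ≤ L * twistedNorm c k := hg.abs_fderiv_le z k
    _ ≤ L * ((2 + c) * ‖k‖) := by gcongr; exact twistedNorm_le_norm hc k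
    _ = L * (2 + c) * ‖k‖ := by ring

lemma norm_fderiv_sub_le (hc : 0 < c) (hM : 0 ≤ M) (hg : TwistedC11 c L M g) (z z' : E × E) :
    ‖fderiv ℝ g z - fderiv ℝ g z'‖ ≤ M * (2 + c) ^ 2 * ‖z - z'‖ := by
  refine ContinuousLinearMap.opNorm_le_bound _ (by positivity) fun k => ?_
  have hk := twistedNorm_nonneg c k
  calc _ ≤ M * twistedNorm c (z - z') * twistedNorm c k := hg.abs_fderiv_sub_le z z' k
    _ ≤ M * ((2 + c) * ‖z - z'‖) * ((2 + c) * ‖k‖) := by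
        gcongr <;> exact twistedNorm_le_norm hc _
    _ = _ := by ring

lemma lipschitzWith_fderiv (hc : 0 < c) (hM : 0 ≤ M) (hg : TwistedC11 c L M g) :
    LipschitzWith (M * (2 + c) ^ 2).toNNReal (fderiv ℝ g) :=
  .of_dist_le_mul fun z z' => by
    rw [dist_eq_norm, dist_eq_norm, Real.coe_toNNReal _ (by positivity)]
    exact hg.norm_fderiv_sub_le hc hM z z'

lemma lipschitzWith (hc : 0 < c) (hL : 0 ≤ L) (hg : TwistedC11 c L M g) :
    LipschitzWith (L * (2 + c)).toNNReal g :=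
  lipschitzWith_of_nnnorm_fderiv_le hg.differentiable fun z =>
    NNReal.coe_le_coe.1 ((hg.norm_fderiv_le hc hL z).trans (Real.le_coe_toNNReal _))

lemma mono (hg : TwistedC11 c L M g) {L' M' : ℝ} (hL : L ≤ L') (hM : M ≤ M') :
    TwistedC11 c L' M' g where
  differentiable := hg.differentiable
  abs_fderiv_le z k := (hg.abs_fderiv_le z k).trans
    (mul_le_mul_of_nonneg_right hL (twistedNorm_nonneg _ _))
  abs_fderiv_sub_le z z' k := (hg.abs_fderiv_sub_le z z' k).trans
    (mul_le_mul_of_nonneg_right (mul_le_mul_of_nonneg_right hM (twistedNorm_nonneg _ _))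
      (twistedNorm_nonneg _ _))

lemma const_mul {a : ℝ} (ha : 0 ≤ a) (hg : TwistedC11 c L M g) :
    TwistedC11 c (a * L) (a * M) (fun z => a * g z) where
  differentiable := hg.differentiable.const_mul a
  abs_fderiv_le z k := by
    rw [fderiv_const_mul (hg.differentiable z), smul_apply, smul_eq_mul, abs_mul,
      abs_of_nonneg ha, mul_assoc]
    gcongr
    exact hg.abs_fderiv_le z k
  abs_fderiv_sub_le z z' k := by
    rw [fderiv_const_mul (hg.differentiable z), fderiv_const_mul (hg.differentiable z'),
      smul_apply, smul_apply, ← smul_sub, smul_eq_mul, abs_mul, abs_of_nonneg ha, mul_assoc a M,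
      mul_assoc]
    gcongr
    exact hg.abs_fderiv_sub_le z z' k

lemma sum {ι : Type*} (s : Finset ι) {L M : ι → ℝ} {g : ι → E × E → ℝ}
    (hg : ∀ i ∈ s, TwistedC11 c (L i) (M i) (g i)) :
    TwistedC11 c (∑ i ∈ s, L i) (∑ i ∈ s, M i) (fun z => ∑ i ∈ s, g i z) where
  differentiable := Differentiable.fun_sum fun i hi => (hg i hi).differentiable
  abs_fderiv_le z k := by
    rw [fderiv_fun_sum fun i hi => (hg i hi).differentiable z, sum_apply, Finset.sum_mul]
    exact (Finset.abs_sum_le_sum_abs _ _).trans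
      (Finset.sum_le_sum fun i hi => (hg i hi).abs_fderiv_le z k)
  abs_fderiv_sub_le z z' k := by
    rw [fderiv_fun_sum fun i hi => (hg i hi).differentiable z,
      fderiv_fun_sum fun i hi => (hg i hi).differentiable z', sum_apply, sum_apply,
      ← Finset.sum_sub_distrib, Finset.sum_mul, Finset.sum_mul]
    exact (Finset.abs_sum_le_sum_abs _ _).trans
      (Finset.sum_le_sum fun i hi => (hg i hi).abs_fderiv_sub_le z z' k)

lemma integral {α : Type*} [MeasurableSpace α] {ν : Measure α} [IsProbabilityMeasure ν]
    {g : α → E × E → ℝ} (hc : 0 < c) (hL : 0 ≤ L) (hg : ∀ a, TwistedC11 c L M (g a))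
    (hint : ∀ z, Integrable (fun a => g a z) ν)
    (hmeas : ∀ z, AEStronglyMeasurable (fun a => fderiv ℝ (g a) z) ν) :
    TwistedC11 c L M (fun z => ∫ a, g a z ∂ν) := by
  have hbound (z : E × E) (a : α) := (hg a).norm_fderiv_le hc hL z
  have hint' (z : E × E) : Integrable (fun a => fderiv ℝ (g a) z) ν :=
    .of_bound (hmeas z) _ (.of_forall (hbound z))
  have hderiv (z : E × E) :
      HasFDerivAt (fun z => ∫ a, g a z ∂ν) (∫ a, fderiv ℝ (g a) z ∂ν) z :=
    hasFDerivAt_integral_of_dominated_of_fderiv_le Filter.univ_mem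
      (.of_forall fun z => (hint z).aestronglyMeasurable) (hint z) (hmeas z)
      (.of_forall fun a z _ => hbound z a) (integrable_const _)
      (.of_forall fun a z _ => ((hg a).differentiable z).hasFDerivAt)
  have happly (z k : E × E) :
      fderiv ℝ (fun z => ∫ a, g a z ∂ν) z k = ∫ a, fderiv ℝ (g a) z k ∂ν := by
    rw [(hderiv z).fderiv, ContinuousLinearMap.integral_apply (hint' z)]
  refine ⟨fun z => (hderiv z).differentiableAt, fun z k => ?_, fun z z' k => ?_⟩
  · rw [happly]
    simpa using norm_integral_le_of_norm_le_const (μ := ν) (f := fun a => fderiv ℝ (g a) z k)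
      (.of_forall fun a => (hg a).abs_fderiv_le z k)
  · rw [happly, happly, ← integral_sub ((hint' z).apply_continuousLinearMap k)
      ((hint' z').apply_continuousLinearMap k)]
    simpa using norm_integral_le_of_norm_le_const (μ := ν)
      (f := fun a => fderiv ℝ (g a) z k - fderiv ℝ (g a) z' k)
      (.of_forall fun a => (hg a).abs_fderiv_sub_le z z' k)

end TwistedC11

end TwistedC11

lemma integrable_comp_of_lipschitzWith {α F : Type*} [MeasurableSpace α] {ν : Measure α}
    [IsFiniteMeasure ν] [NormedAddCommGroup F] {g : F → ℝ} {K : NNReal} (hg : LipschitzWith K g)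
    {X : α → F} (hX : Integrable X ν) : Integrable (fun a => g (X a)) ν := by
  refine ((integrable_const ‖g 0‖).add (hX.norm.const_mul (K : ℝ))).mono'
    (hg.continuous.comp_aestronglyMeasurable hX.1) (.of_forall fun a => ?_)
  calc ‖g (X a)‖ ≤ ‖g 0‖ + ‖g (X a) - g 0‖ := norm_le_insert' _ _
    _ ≤ ‖g 0‖ + K * ‖X a‖ := by gcongr; simpa using hg.norm_sub_le (X a) 0

section ReferenceOperator

variable {E : Type*} [NormedAddCommGroup E] [InnerProductSpace ℝ E] [MeasurableSpace E]

/-- The transition operator of the reference integrator: a damped Euler step, after which the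
velocity receives the noise `σ ξ` with `ξ` of law `ν`. -/
noncomputable def refOp (ν : Measure E) (γ h σ : ℝ) (G : E → E) (g : E × E → ℝ) (z : E × E) : ℝ :=
  ∫ ξ, g (dampedEuler γ h G z + (0, σ • ξ)) ∂ν

/-- The truncated solution `h ∑_{j < K} Q^j f` of the Poisson equation `φ - Q φ = h f`, where `Q`
is the transition operator of the reference integrator. -/
noncomputable def poissonSum (ν : Measure E) (γ h σ : ℝ) (G : E → E) (f : E × E → ℝ) (K : ℕ)
    (z : E × E) : ℝ :=
  h * ∑ j ∈ Finset.range K, (refOp ν γ h σ G)^[j] f z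

lemma integrable_comp_add_noise {ν : Measure E} [IsFiniteMeasure ν] (hν : Integrable id ν)
    {g : E × E → ℝ} {K : NNReal} (hg : LipschitzWith K g) (z : E × E) (σ : ℝ) :
    Integrable (fun ξ : E => g (z + (0, σ • ξ))) ν :=
  integrable_comp_of_lipschitzWith hg
    ((integrable_const z).add ((integrable_const (0 : E)).prodMk (hν.smul σ)))

variable {γ m C₁ h σ L M : ℝ} {G : E → E} {f g : E × E → ℝ}

omit [MeasurableSpace E] in
lemma TwistedC11.comp_dampedEuler_add (hp : Admissible γ m C₁ h) (hG : IsMonotoneC11 m C₁ G)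
    (hL : 0 ≤ L) (hM : 0 ≤ M) (hg : TwistedC11 (2 / γ) L M g) (w : E × E) :
    TwistedC11 (2 / γ) (contractionRate γ m h * L)
      (contractionRate γ m h ^ 2 * M + 2 / γ * C₁ * h * L)
      (fun z => g (dampedEuler γ h G z + w)) := by
  set r := contractionRate γ m h
  have hT : Differentiable ℝ (dampedEuler γ h G) := differentiable_dampedEuler hG.differentiable
  have hderiv (z k : E × E) : fderiv ℝ (fun z => g (dampedEuler γ h G z + w)) z k =
      fderiv ℝ g (dampedEuler γ h G z + w) (fderiv ℝ (dampedEuler γ h G) z k) :=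
    DFunLike.congr_fun ((hg.differentiable _).hasFDerivAt.comp z
      ((hT z).hasFDerivAt.add_const w)).fderiv k
  refine ⟨hg.differentiable.comp (hT.add_const w), fun z k => ?_, fun z z' k => ?_⟩
  · rw [hderiv]
    calc _ ≤ L * twistedNorm (2 / γ) (fderiv ℝ (dampedEuler γ h G) z k) :=
          hg.abs_fderiv_le _ _
      _ ≤ L * (r * twistedNorm (2 / γ) k) := by
          gcongr; exact twistedNorm_fderiv_dampedEuler_le hp hG z k
      _ = _ := by ring
  · set y := dampedEuler γ h G z + w
    set y' := dampedEuler γ h G z' + w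
    set l := fderiv ℝ (dampedEuler γ h G) z k
    set l' := fderiv ℝ (dampedEuler γ h G) z' k
    have hz := twistedNorm_nonneg (2 / γ) (z - z')
    have hl := twistedNorm_nonneg (2 / γ) l
    have hr := hp.contractionRate_nonneg
    have hyy' : twistedNorm (2 / γ) (y - y') ≤ r * twistedNorm (2 / γ) (z - z') := by
      simpa [y, y'] using twistedNorm_dampedEuler_sub_le hp hG z z'
    calc _ = |(fderiv ℝ g y l - fderiv ℝ g y' l) + fderiv ℝ g y' (l - l')| := by
          rw [hderiv, hderiv, map_sub, sub_add_sub_cancel]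
      _ ≤ M * twistedNorm (2 / γ) (y - y') * twistedNorm (2 / γ) l +
          L * twistedNorm (2 / γ) (l - l') :=
        (abs_add_le _ _).trans (add_le_add (hg.abs_fderiv_sub_le _ _ _) (hg.abs_fderiv_le _ _))
      _ ≤ M * (r * twistedNorm (2 / γ) (z - z')) * (r * twistedNorm (2 / γ) k) +
          L * (2 / γ * C₁ * h * (twistedNorm (2 / γ) (z - z') * twistedNorm (2 / γ) k)) := by
        gcongr
        · exact twistedNorm_fderiv_dampedEuler_le hp hG z k
        · exact twistedNorm_fderiv_dampedEuler_sub_le hp hG z z' k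
      _ = _ := by ring

variable [BorelSpace E] [SecondCountableTopology E] {ν : Measure E} [IsProbabilityMeasure ν]

lemma TwistedC11.refOp (hν : Integrable id ν) (hp : Admissible γ m C₁ h)
    (hG : IsMonotoneC11 m C₁ G) (hL : 0 ≤ L) (hM : 0 ≤ M) (hg : TwistedC11 (2 / γ) L M g) :
    TwistedC11 (2 / γ) (contractionRate γ m h * L)
      (contractionRate γ m h ^ 2 * M + 2 / γ * C₁ * h * L) (refOp ν γ h σ G g) := by
  have hγ := hp.γ_pos
  have hc : 0 < 2 / γ := by positivity
  refine TwistedC11.integral hc (mul_nonneg hp.contractionRate_nonneg hL)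
    (fun ξ => hg.comp_dampedEuler_add hp hG hL hM (0, σ • ξ))
    (fun z => integrable_comp_add_noise hν (hg.lipschitzWith hc hL) _ σ) fun z => ?_
  have hderiv (ξ : E) : fderiv ℝ (fun z => g (dampedEuler γ h G z + (0, σ • ξ))) z =
      (fderiv ℝ g (dampedEuler γ h G z + (0, σ • ξ))).comp (fderiv ℝ (dampedEuler γ h G) z) :=
    ((hg.differentiable _).hasFDerivAt.comp z
      ((differentiable_dampedEuler hG.differentiable z).hasFDerivAt.add_const _)).fderiv
  have hcont : Continuous fun ξ : E => fderiv ℝ g (dampedEuler γ h G z + (0, σ • ξ)) :=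
    (hg.lipschitzWith_fderiv hc hM).continuous.comp (by fun_prop)
  simp only [hderiv]
  exact (hcont.clm_comp continuous_const).aestronglyMeasurable

lemma TwistedC11.refOp_iterate (hν : Integrable id ν) (hp : Admissible γ m C₁ h)
    (hG : IsMonotoneC11 m C₁ G) (hL : 0 ≤ L) (hM : 0 ≤ M)
    (hLM : 2 * (2 / γ * C₁ * L) ≤ m / (32 * γ) * M) (hf : TwistedC11 (2 / γ) L M f) (j : ℕ) :
    TwistedC11 (2 / γ) (contractionRate γ m h ^ j * L) (contractionRate γ m h ^ j * M)
      ((UnderdampedLangevin.refOp ν γ h σ G)^[j] f) := by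
  set r := contractionRate γ m h with hr
  have : 0 ≤ r := hp.contractionRate_nonneg
  have hr1 : 1 / 2 ≤ r := hp.half_le_contractionRate
  have hh := hp.h_pos
  have habsorb : r ^ 2 * M + 2 / γ * C₁ * h * L ≤ r * M := by
    calc r ^ 2 * M + 2 / γ * C₁ * h * L = r ^ 2 * M + 1 / 2 * (h * (2 * (2 / γ * C₁ * L))) := by
          ring
      _ ≤ r ^ 2 * M + 1 / 2 * (h * (m / (32 * γ) * M)) := by gcongr
      _ ≤ r ^ 2 * M + r * (h * (m / (32 * γ) * M)) := by
          have := hp.m_pos; have := hp.γ_pos; gcongr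
      _ = r * M := by rw [hr, contractionRate]; ring
  induction j with
  | zero => simpa using hf
  | succ j ih =>
    rw [Function.iterate_succ_apply']
    refine (ih.refOp hν hp hG (by positivity) (by positivity)).mono
      (by rw [pow_succ', mul_assoc]) ?_
    calc _ = r ^ j * (r ^ 2 * M + 2 / γ * C₁ * h * L) := by ring
      _ ≤ r ^ j * (r * M) := by gcongr
      _ = _ := by ring

lemma TwistedC11.poissonSum (hν : Integrable id ν) (hp : Admissible γ m C₁ h)
    (hG : IsMonotoneC11 m C₁ G) (hL : 0 ≤ L) (hM : 0 ≤ M)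
    (hLM : 2 * (2 / γ * C₁ * L) ≤ m / (32 * γ) * M) (hf : TwistedC11 (2 / γ) L M f) (K : ℕ) :
    TwistedC11 (2 / γ) (32 * γ / m * L) (32 * γ / m * M)
      (UnderdampedLangevin.poissonSum ν γ h σ G f K) := by
  have hm := hp.m_pos
  have hγ := hp.γ_pos
  have hh := hp.h_pos
  have hr := hp.contractionRate_nonneg
  have hgeom : h * ∑ j ∈ Finset.range K, contractionRate γ m h ^ j ≤ 32 * γ / m := by
    have hsum := mul_neg_geom_sum (contractionRate γ m h) K
    have hrate : 1 - contractionRate γ m h = m / (32 * γ) * h := sub_sub_cancel _ _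
    rw [hrate] at hsum
    rw [le_div_iff₀ hm]
    calc _ = 32 * γ * (m / (32 * γ) * h * ∑ j ∈ Finset.range K, contractionRate γ m h ^ j) := by
          field_simp
      _ ≤ 32 * γ * 1 := by rw [hsum]; gcongr; exact sub_le_self _ (by positivity)
      _ = _ := mul_one _
  refine (TwistedC11.const_mul hh.le (TwistedC11.sum (Finset.range K) fun j _ =>
    hf.refOp_iterate (σ := σ) hν hp hG hL hM hLM j)).mono ?_ ?_ <;>
  · rw [← Finset.sum_mul, ← mul_assoc]
    gcongr

lemma poissonSum_sub_refOp (hν : Integrable id ν) (hp : Admissible γ m C₁ h)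
    (hG : IsMonotoneC11 m C₁ G) (hL : 0 ≤ L) (hM : 0 ≤ M)
    (hLM : 2 * (2 / γ * C₁ * L) ≤ m / (32 * γ) * M) (hf : TwistedC11 (2 / γ) L M f) (K : ℕ)
    (z : E × E) :
    poissonSum ν γ h σ G f K z - refOp ν γ h σ G (poissonSum ν γ h σ G f K) z =
      h * (f z - (refOp ν γ h σ G)^[K] f z) := by
  have hγ := hp.γ_pos
  have hr := hp.contractionRate_nonneg
  have hint (j : ℕ) : Integrable (fun ξ : E =>
      (refOp ν γ h σ G)^[j] f (dampedEuler γ h G z + (0, σ • ξ))) ν :=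
    integrable_comp_add_noise hν ((hf.refOp_iterate hν hp hG hL hM hLM j).lipschitzWith
      (by positivity) (by positivity)) _ σ
  have hstep : refOp ν γ h σ G (poissonSum ν γ h σ G f K) z =
      h * ∑ j ∈ Finset.range K, (refOp ν γ h σ G)^[j + 1] f z := by
    simp only [Function.iterate_succ_apply', refOp, poissonSum]
    rw [integral_const_mul, integral_finsetSum _ fun j _ => hint j]
  rw [hstep, poissonSum, ← mul_sub, ← Finset.sum_sub_distrib,
    Finset.sum_range_sub' (fun j => (refOp ν γ h σ G)^[j] f z), Function.iterate_zero, id]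

end ReferenceOperator

section Taylor

variable {F : Type*} [NormedAddCommGroup F] [NormedSpace ℝ F] {ψ : F → ℝ} {L M : NNReal}

lemma abs_sub_sub_fderiv_le (hψ : Differentiable ℝ ψ) (hlip : LipschitzWith M (fderiv ℝ ψ))
    (x₀ x y : F) :
    |ψ y - ψ x - fderiv ℝ ψ x₀ (y - x)| ≤ M * ((‖x - x₀‖ + ‖y - x₀‖) * ‖y - x‖) := by
  have hseg : segment ℝ x y ⊆ Metric.closedBall x₀ (‖x - x₀‖ + ‖y - x₀‖) :=
    (convex_closedBall _ _).segment_subset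
      (mem_closedBall_iff_norm.2 (le_add_of_nonneg_right (norm_nonneg _)))
      (mem_closedBall_iff_norm.2 (le_add_of_nonneg_left (norm_nonneg _)))
  rw [← mul_assoc]
  refine (convex_segment x y).norm_image_sub_le_of_norm_fderiv_le' (fun v _ => hψ v)
    (fun v hv => (hlip.norm_sub_le v x₀).trans ?_)
    (left_mem_segment ℝ x y) (right_mem_segment ℝ x y)
  gcongr
  exact mem_closedBall_iff_norm.1 (hseg hv)

lemma abs_integral_comp_sub_integral_comp_le [CompleteSpace F] {α : Type*} [MeasurableSpace α]
    {ρ : Measure α} [IsProbabilityMeasure ρ] (hψ : Differentiable ℝ ψ) (hL : LipschitzWith L ψ)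
    (hlip : LipschitzWith M (fderiv ℝ ψ)) {Y Y' : α → F} (hY : Integrable Y ρ)
    (hY' : Integrable Y' ρ) (hmean : ∫ a, Y a ∂ρ = ∫ a, Y' a ∂ρ)
    (hYY' : Integrable (fun a => (‖Y' a‖ + ‖Y a‖) * ‖Y a - Y' a‖) ρ) (x : F) :
    |∫ a, ψ (x + Y a) ∂ρ - ∫ a, ψ (x + Y' a) ∂ρ| ≤
      M * ∫ a, (‖Y' a‖ + ‖Y a‖) * ‖Y a - Y' a‖ ∂ρ := by
  have hint {Z : α → F} (hZ : Integrable Z ρ) : Integrable (fun a => ψ (x + Z a)) ρ :=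
    integrable_comp_of_lipschitzWith hL ((integrable_const x).add hZ)
  have hsub : Integrable (fun a => Y a - Y' a) ρ := hY.sub hY'
  have hdiff : Integrable (fun a => ψ (x + Y a) - ψ (x + Y' a)) ρ := (hint hY).sub (hint hY')
  have hlin0 : ∫ a, fderiv ℝ ψ x (Y a - Y' a) ∂ρ = 0 := by
    rw [(fderiv ℝ ψ x).integral_comp_comm hsub, integral_sub hY hY', hmean, sub_self, map_zero]
  have hcorrected : ∫ a, ψ (x + Y a) ∂ρ - ∫ a, ψ (x + Y' a) ∂ρ =
      ∫ a, (ψ (x + Y a) - ψ (x + Y' a) - fderiv ℝ ψ x (Y a - Y' a)) ∂ρ := by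
    rw [integral_sub hdiff ((fderiv ℝ ψ x).integrable_comp hsub), integral_sub (hint hY) (hint hY'),
      hlin0, sub_zero]
  rw [hcorrected, ← integral_const_mul, ← Real.norm_eq_abs]
  refine norm_integral_le_of_norm_le (hYY'.const_mul _) (.of_forall fun a => ?_)
  simpa using abs_sub_sub_fderiv_le hψ hlip x (x + Y' a) (x + Y a)

end Taylor

section LocalError

variable {E : Type*} [NormedAddCommGroup E] [InnerProductSpace ℝ E] [MeasurableSpace E]
  {Ω' : Type*} [MeasurableSpace Ω']

/-- One step of the stochastic gradient Euler–Maruyama chain, driven by the Gaussian increment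
`p.1` and the stochastic gradient sample `p.2`. -/
noncomputable def sgStep (γ h : ℝ) (b : E → Ω' → E) (z : E × E) (p : E × Ω') : E × E :=
  (z.1 + h • z.2, z.2 - h • b z.1 p.2 - (γ * h) • z.2 + √(2 * γ * h) • p.1)

/-- An unbiased estimator `b` of the force `G`, of linear growth and satisfying the dissipativity
condition uniformly over the samples. -/
structure IsStochasticGradient (m C₀ C₁ : ℝ) (μ : Measure Ω') (G : E → E) (b : E → Ω' → E) :
    Prop where
  measurable : Measurable (Function.uncurry b)
  norm_le : ∀ x ω, ‖b x ω‖ ≤ C₁ * (1 + ‖x‖)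
  drift : ∀ x ω, m * ‖x‖ ^ 2 - C₀ ≤ ⟪x, b x ω⟫
  unbiased : ∀ x, ∫ ω, b x ω ∂μ = G x

/-- The transition operator of the stochastic gradient Euler–Maruyama chain. -/
noncomputable def chainOp (ν : Measure E) (μ : Measure Ω') (γ h : ℝ) (b : E → Ω' → E)
    (g : E × E → ℝ) (z : E × E) : ℝ := ∫ p, g (sgStep γ h b z p) ∂(ν.prod μ)

/-- The drift part of an Euler–Maruyama step with the exact force. -/
def explicitEuler (γ h : ℝ) (G : E → E) (z : E × E) : E × E :=
  (z.1 + h • z.2, (1 - γ * h) • z.2 - h • G z.1)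

variable {γ m C₀ C₁ h σ L M : ℝ} {G : E → E} {g : E × E → ℝ} {ν : Measure E} {μ : Measure Ω'}
  {b : E → Ω' → E}

omit [MeasurableSpace E] [MeasurableSpace Ω'] in
lemma sgStep_eq (G : E → E) (z : E × E) (p : E × Ω') :
    sgStep γ h b z p = explicitEuler γ h G z + (0, √(2 * γ * h) • p.1) +
      (0, -(h • (b z.1 p.2 - G z.1))) := by
  ext1 <;> simp only [sgStep, explicitEuler, Prod.fst_add, Prod.snd_add] <;> module

lemma IsStochasticGradient.measurable_sgStep [BorelSpace E] [SecondCountableTopology E]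
    (hb : IsStochasticGradient m C₀ C₁ μ G b) :
    Measurable fun q : (E × E) × (E × Ω') => sgStep γ h b q.1 q.2 := by
  have hbq : Measurable fun q : (E × E) × (E × Ω') => b q.1.1 q.2.2 :=
    hb.measurable.comp (measurable_fst.fst.prodMk measurable_snd.snd)
  exact Measurable.prodMk (by fun_prop)
    (((measurable_fst.snd.sub (hbq.const_smul h)).sub (by fun_prop)).add (by fun_prop))

lemma IsStochasticGradient.norm_noise_le (hG : IsMonotoneC11 m C₁ G)
    (hb : IsStochasticGradient m C₀ C₁ μ G b) (hC : 0 ≤ C₁) (z : E × E) (ω : Ω') :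
    ‖b z.1 ω - G z.1‖ ≤ 2 * C₁ * (1 + ‖z‖) := by
  calc ‖b z.1 ω - G z.1‖ ≤ C₁ * (1 + ‖z.1‖) + C₁ * (‖z.1‖ + 1) :=
        (norm_sub_le _ _).trans (add_le_add (hb.norm_le _ _) (hG.norm_le _))
    _ = 2 * C₁ * (1 + ‖z.1‖) := by ring
    _ ≤ 2 * C₁ * (1 + ‖z‖) := by gcongr; exact norm_fst_le z

omit [MeasurableSpace E] in
lemma norm_explicitEuler_sub_dampedEuler_le (hp : Admissible γ m C₁ h)
    (hG : IsMonotoneC11 m C₁ G) (z : E × E) :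
    ‖explicitEuler γ h G z - dampedEuler γ h G z‖ ≤
      (C₁ + 2 * γ * C₁) * h ^ 2 * (1 + ‖z‖) := by
  have hγ := hp.γ_pos
  have hh := hp.h_pos
  have hC := hp.C₁_pos
  set x := z.1 + h • z.2 with hx
  have hdiff : explicitEuler γ h G z - dampedEuler γ h G z =
      (0, h • (G x - G z.1) - (γ * h ^ 2) • G x) := by
    ext1 <;> simp only [explicitEuler, dampedEuler, Prod.fst_sub, Prod.snd_sub] <;> module
  have hz₁ : ‖z.1‖ ≤ ‖z‖ := norm_fst_le z
  have hhv : ‖h • z.2‖ ≤ h * ‖z‖ := by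
    rw [norm_smul, Real.norm_of_nonneg hh.le]
    gcongr
    exact norm_snd_le z
  have hforce : ‖G x - G z.1‖ ≤ C₁ * (h * (1 + ‖z‖)) := by
    refine (hG.norm_sub_le x z.1).trans ?_
    rw [hx, add_sub_cancel_left]
    gcongr
    linarith
  have hgrowth : ‖G x‖ ≤ C₁ * (2 * (1 + ‖z‖)) := by
    refine (hG.norm_le x).trans ?_
    gcongr
    have : h * ‖z‖ ≤ 1 * ‖z‖ := by gcongr; exact hp.h_le_one
    linarith [norm_add_le z.1 (h • z.2)]
  calc _ ≤ h * ‖G x - G z.1‖ + γ * h ^ 2 * ‖G x‖ := by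
        rw [hdiff, Prod.norm_mk, norm_zero, max_eq_right (norm_nonneg _)]
        refine (norm_sub_le _ _).trans (le_of_eq ?_)
        rw [norm_smul, norm_smul, Real.norm_of_nonneg hh.le, Real.norm_of_nonneg (by positivity)]
    _ ≤ h * (C₁ * (h * (1 + ‖z‖))) + γ * h ^ 2 * (C₁ * (2 * (1 + ‖z‖))) := by gcongr
    _ = _ := by ring

variable [BorelSpace E] [SecondCountableTopology E] [IsProbabilityMeasure ν]
  [IsProbabilityMeasure μ]

lemma IsStochasticGradient.integrable_comp_sgStep (hG : IsMonotoneC11 m C₁ G)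
    (hb : IsStochasticGradient m C₀ C₁ μ G b) (hC : 0 ≤ C₁) (hν : Integrable id ν)
    {K : NNReal} (hg : LipschitzWith K g) (z : E × E) :
    Integrable (fun p => g (sgStep γ h b z p)) (ν.prod μ) := by
  have hbz : Measurable (b z.1) := hb.measurable.comp measurable_prodMk_left
  have hbi : Integrable (fun ω => b z.1 ω - G z.1) μ :=
    .of_bound (by fun_prop) _ (.of_forall (hb.norm_noise_le hG hC z))
  refine integrable_comp_of_lipschitzWith hg ?_
  rw [funext (sgStep_eq G z)]
  exact ((integrable_const _).add ((integrable_const _).prodMk ((hν.comp_fst μ).smul _))).add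
    ((integrable_const _).prodMk ((hbi.comp_snd ν).smul h).neg)

lemma IsStochasticGradient.abs_chainOp_sub_integral_le [CompleteSpace E]
    (hp : Admissible γ m C₁ h) (hG : IsMonotoneC11 m C₁ G)
    (hb : IsStochasticGradient m C₀ C₁ μ G b) (hν : Integrable id ν) (hL : 0 ≤ L) (hM : 0 ≤ M)
    (hg : TwistedC11 (2 / γ) L M g) (z : E × E) :
    |chainOp ν μ γ h b g z - ∫ ξ, g (explicitEuler γ h G z + (0, √(2 * γ * h) • ξ)) ∂ν| ≤
      M * (2 + 2 / γ) ^ 2 * (h * (2 * C₁ * (1 + ‖z‖))) ^ 2 := by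
  have hγ := hp.γ_pos
  have hh := hp.h_pos
  have hC := hp.C₁_pos
  have hc : 0 < 2 / γ := by positivity
  have hglip := hg.lipschitzWith hc hL
  set β : Ω' → E × E := fun ω => (0, -(h • (b z.1 ω - G z.1))) with hβ
  have hbz : Measurable (b z.1) := hb.measurable.comp measurable_prodMk_left
  have hbi : Integrable (b z.1) μ :=
    .of_bound hbz.aestronglyMeasurable _ (.of_forall (hb.norm_le z.1))
  have hβ₂ : Integrable (fun ω => -(h • (b z.1 ω - G z.1))) μ :=
    ((hbi.sub (integrable_const _)).smul h).neg
  have hβi : Integrable β μ := (integrable_const 0).prodMk hβ₂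
  have hβ0 : ∫ ω, β ω ∂μ = 0 := by
    rw [integral_pair (integrable_const 0) hβ₂]
    simp [integral_neg, integral_smul, integral_sub hbi (integrable_const _), hb.unbiased]
  have hβB (ω : Ω') : ‖β ω‖ ≤ h * (2 * C₁ * (1 + ‖z‖)) := by
    rw [hβ, Prod.norm_mk, norm_zero, max_eq_right (norm_nonneg _), norm_neg, norm_smul,
      Real.norm_of_nonneg hh.le]
    gcongr
    exact hb.norm_noise_le hG hC.le z ω
  have hβsq (ω : Ω') : ‖‖β ω‖ * ‖β ω‖‖ ≤ (h * (2 * C₁ * (1 + ‖z‖))) ^ 2 := by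
    rw [norm_mul, norm_norm, ← sq]
    exact pow_le_pow_left₀ (norm_nonneg _) (hβB ω) 2
  have hsample (y : E × E) : |∫ ω, g (y + β ω) ∂μ - g y| ≤
      M * (2 + 2 / γ) ^ 2 * (h * (2 * C₁ * (1 + ‖z‖))) ^ 2 := by
    have htaylor := abs_integral_comp_sub_integral_comp_le hg.differentiable hglip
      (hg.lipschitzWith_fderiv hc hM) hβi (integrable_const 0) (by simpa using hβ0)
      (.of_bound (by fun_prop) _ (.of_forall fun ω => by simpa using hβsq ω)) y
    rw [Real.coe_toNNReal _ (by positivity)] at htaylor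
    simp only [add_zero, integral_const, probReal_univ, one_smul, norm_zero, zero_add, sub_zero]
      at htaylor
    refine htaylor.trans (mul_le_mul_of_nonneg_left ?_ (by positivity))
    simpa using (le_abs_self _).trans
      (norm_integral_le_of_norm_le_const (μ := μ) (.of_forall hβsq))
  have hint := hb.integrable_comp_sgStep (γ := γ) (h := h) hG hC.le hν hglip z
  rw [chainOp, integral_prod _ hint,
    ← integral_sub hint.integral_prod_left (integrable_comp_add_noise hν hglip _ _)]
  simp only [sgStep_eq G]
  rw [← Real.norm_eq_abs]
  exact (norm_integral_le_of_norm_le_const (.of_forall fun ξ => hsample _)).trans_eq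
    (by rw [probReal_univ, mul_one])

omit [BorelSpace E] [SecondCountableTopology E] in
lemma TwistedC11.abs_integral_add_smul_sub_le [CompleteSpace E] {c : ℝ} (hc : 0 < c)
    (hν : MemLp id 2 ν) (hν0 : ∫ ξ, ξ ∂ν = 0) (hL : 0 ≤ L) (hM : 0 ≤ M) (hg : TwistedC11 c L M g)
    {s s' : ℝ} (hs : 0 ≤ s) (hs' : 0 ≤ s') (y : E × E) :
    |∫ ξ, g (y + (0, s • ξ)) ∂ν - ∫ ξ, g (y + (0, s' • ξ)) ∂ν| ≤
      M * (2 + c) ^ 2 * (|s ^ 2 - s' ^ 2| * ∫ ξ, ‖ξ‖ ^ 2 ∂ν) := by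
  have hν1 : Integrable id ν := hν.integrable (by norm_num)
  have hsmul (s : ℝ) : Integrable (fun ξ : E => s • ξ) ν := hν1.smul s
  have hnoise (s : ℝ) : Integrable (fun ξ : E => ((0, s • ξ) : E × E)) ν :=
    (integrable_const (0 : E)).prodMk (hsmul s)
  have hmean (s : ℝ) : ∫ ξ : E, ((0, s • ξ) : E × E) ∂ν = 0 := by
    rw [integral_pair (integrable_const 0) (hsmul s)]
    rw [integral_zero, integral_smul s fun ξ : E => ξ, hν0, smul_zero, Prod.mk_zero_zero]
  have hsq (ξ : E) : (‖((0, s' • ξ) : E × E)‖ + ‖((0, s • ξ) : E × E)‖) *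
      ‖((0, s • ξ) : E × E) - (0, s' • ξ)‖ = |s ^ 2 - s' ^ 2| * ‖ξ‖ ^ 2 := by
    rw [Prod.mk_sub_mk, ← sub_smul, sub_zero]
    simp only [Prod.norm_mk, norm_zero, norm_smul, Real.norm_eq_abs, abs_of_nonneg hs,
      abs_of_nonneg hs']
    rw [sq_sub_sq, abs_mul, abs_of_nonneg (add_nonneg hs hs'), max_eq_right (by positivity),
      max_eq_right (by positivity), max_eq_right (by positivity)]
    ring
  have htaylor := abs_integral_comp_sub_integral_comp_le hg.differentiable
    (hg.lipschitzWith hc hL) (hg.lipschitzWith_fderiv hc hM) (hnoise s) (hnoise s')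
    ((hmean s).trans (hmean s').symm)
    (by simpa only [hsq, id_eq] using (hν.integrable_norm_pow' (p := 2)).const_mul _) y
  simpa only [hsq, integral_const_mul, Real.coe_toNNReal _ (by positivity : 0 ≤ M * (2 + c) ^ 2)]
    using htaylor

/-- The constant in the one-step weak error `O(h²)` between the chain and the reference
integrator, for test functions of class `TwistedC11 (2 / γ) L M`. -/
noncomputable def localErrorConst (ν : Measure E) (γ C₁ L M : ℝ) : ℝ :=
  L * (2 + 2 / γ) * (C₁ + 2 * γ * C₁) +
    M * (2 + 2 / γ) ^ 2 * (γ ^ 2 * (∫ ξ, ‖ξ‖ ^ 2 ∂ν) + 4 * C₁ ^ 2)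

omit [InnerProductSpace ℝ E] [BorelSpace E] [SecondCountableTopology E]
  [IsProbabilityMeasure ν] in
lemma localErrorConst_nonneg (hγ : 0 ≤ γ) (hC₁ : 0 ≤ C₁) (hL : 0 ≤ L) (hM : 0 ≤ M) :
    0 ≤ localErrorConst ν γ C₁ L M := by
  unfold localErrorConst
  positivity

lemma IsStochasticGradient.abs_chainOp_sub_refOp_le [CompleteSpace E]
    (hp : Admissible γ m C₁ h) (hG : IsMonotoneC11 m C₁ G)
    (hb : IsStochasticGradient m C₀ C₁ μ G b) (hν : MemLp id 2 ν) (hν0 : ∫ ξ, ξ ∂ν = 0)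
    (hL : 0 ≤ L) (hM : 0 ≤ M) (hg : TwistedC11 (2 / γ) L M g) (hσ : 0 ≤ σ)
    (hσ2 : σ ^ 2 = 2 * γ * h - γ ^ 2 * h ^ 2) (z : E × E) :
    |chainOp ν μ γ h b g z - refOp ν γ h σ G g z| ≤
      localErrorConst ν γ C₁ L M * h ^ 2 * (1 + ‖z‖) ^ 2 := by
  have hγ := hp.γ_pos
  have hh := hp.h_pos
  have hC := hp.C₁_pos
  have hc : 0 < 2 / γ := by positivity
  have hν1 : Integrable id ν := hν.integrable (by norm_num)
  have hglip := hg.lipschitzWith hc hL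
  have hsampling := hb.abs_chainOp_sub_integral_le hp hG hν1 hL hM hg z
  have hnoise := hg.abs_integral_add_smul_sub_le hc hν hν0 hL hM (Real.sqrt_nonneg (2 * γ * h)) hσ
    (explicitEuler γ h G z)
  have hdrift : |∫ ξ, g (explicitEuler γ h G z + (0, σ • ξ)) ∂ν - refOp ν γ h σ G g z| ≤
      L * (2 + 2 / γ) * ((C₁ + 2 * γ * C₁) * h ^ 2 * (1 + ‖z‖)) := by
    rw [refOp, ← integral_sub (integrable_comp_add_noise hν1 hglip _ _)
      (integrable_comp_add_noise hν1 hglip _ _)]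
    rw [← Real.norm_eq_abs]
    refine (norm_integral_le_of_norm_le_const (.of_forall fun ξ => ?_)).trans_eq
      (by rw [probReal_univ, mul_one])
    refine (hglip.norm_sub_le _ _).trans ?_
    rw [add_sub_add_right_eq_sub, Real.coe_toNNReal _ (by positivity)]
    gcongr
    exact norm_explicitEuler_sub_dampedEuler_le hp hG z
  have hvar : |√(2 * γ * h) ^ 2 - σ ^ 2| = γ ^ 2 * h ^ 2 := by
    rw [Real.sq_sqrt (by positivity), hσ2, sub_sub_cancel, abs_of_nonneg (by positivity)]
  rw [hvar] at hnoise
  have hm2 : 0 ≤ ∫ ξ, ‖ξ‖ ^ 2 ∂ν := integral_nonneg fun _ => by positivity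
  have hw : 1 ≤ 1 + ‖z‖ := le_add_of_nonneg_right (norm_nonneg z)
  calc _ ≤ M * (2 + 2 / γ) ^ 2 * (h * (2 * C₁ * (1 + ‖z‖))) ^ 2 +
        M * (2 + 2 / γ) ^ 2 * (γ ^ 2 * h ^ 2 * (∫ ξ, ‖ξ‖ ^ 2 ∂ν)) +
        L * (2 + 2 / γ) * ((C₁ + 2 * γ * C₁) * h ^ 2 * (1 + ‖z‖)) := by
        linarith [abs_sub_le (chainOp ν μ γ h b g z)
          (∫ ξ, g (explicitEuler γ h G z + (0, √(2 * γ * h) • ξ)) ∂ν) (refOp ν γ h σ G g z),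
          abs_sub_le (∫ ξ, g (explicitEuler γ h G z + (0, √(2 * γ * h) • ξ)) ∂ν)
            (∫ ξ, g (explicitEuler γ h G z + (0, σ • ξ)) ∂ν) (refOp ν γ h σ G g z)]
    _ ≤ M * (2 + 2 / γ) ^ 2 * (h * (2 * C₁ * (1 + ‖z‖))) ^ 2 +
        M * (2 + 2 / γ) ^ 2 * (γ ^ 2 * h ^ 2 * ((∫ ξ, ‖ξ‖ ^ 2 ∂ν) * (1 + ‖z‖) ^ 2)) +
        L * (2 + 2 / γ) * ((C₁ + 2 * γ * C₁) * h ^ 2 * (1 + ‖z‖) ^ 2) := by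
        gcongr
        · exact le_mul_of_one_le_right hm2 (one_le_pow₀ hw)
        · exact le_self_pow₀ hw two_ne_zero
    _ = _ := by rw [localErrorConst]; ring

end LocalError

section MartingaleIncrement

lemma lintegral_add_sub_integral_sq_le {α : Type*} [MeasurableSpace α] {ρ : Measure α}
    [IsProbabilityMeasure ρ] {Y : α → ℝ} (hY : MemLp Y 2 ρ) (t c : ℝ) :
    ∫⁻ a, ENNReal.ofReal ((t + (Y a - ∫ a', Y a' ∂ρ)) ^ 2) ∂ρ ≤
      ENNReal.ofReal (t ^ 2 + ∫ a, (Y a - c) ^ 2 ∂ρ) := by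
  set e := ∫ a, Y a ∂ρ with he
  have hYi : Integrable Y ρ := hY.integrable one_le_two
  have hZ : MemLp (fun a => Y a - (e - t)) 2 ρ := hY.sub (memLp_const _)
  have hZmean : ∫ a, (Y a - (e - t)) ∂ρ = t := by
    rw [integral_sub hYi (integrable_const _), ← he]
    simp
  have hvar : ∫ a, (Y a - (e - t)) ^ 2 ∂ρ = t ^ 2 + Var[Y; ρ] := by
    have := variance_eq_sub hZ
    rw [variance_sub_const hY.aestronglyMeasurable, hZmean] at this
    simp only [Pi.pow_apply] at this
    linarith
  have hvar_le : Var[Y; ρ] ≤ ∫ a, (Y a - c) ^ 2 ∂ρ := by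
    rw [← variance_sub_const hY.aestronglyMeasurable c]
    exact variance_le_expectation_sq (hY.aestronglyMeasurable.sub aestronglyMeasurable_const)
  have hcenter (a : α) : t + (Y a - e) = Y a - (e - t) := by ring
  simp only [hcenter]
  rw [← ofReal_integral_eq_lintegral_ofReal hZ.integrable_sq (.of_forall fun _ => sq_nonneg _),
    hvar]
  gcongr

variable {E : Type*} [NormedAddCommGroup E] [InnerProductSpace ℝ E] [MeasurableSpace E]
  {Ω' : Type*} [MeasurableSpace Ω'] {γ m C₀ C₁ h L M : ℝ} {G : E → E} {g : E × E → ℝ}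
  {ν : Measure E} {μ : Measure Ω'} {b : E → Ω' → E}

/-- The constant in the conditional variance bound `O(h)` for the increments of a `TwistedC11`
function with constant `L` along the chain. -/
noncomputable def martingaleConst (ν : Measure E) (γ C₁ L : ℝ) : ℝ :=
  (L * (2 + 2 / γ)) ^ 2 * (4 * γ * (∫ ξ, ‖ξ‖ ^ 2 ∂ν) + 8 * C₁ ^ 2)

lemma IsStochasticGradient.norm_sgStep_sub_explicitEuler_sq_le (hp : Admissible γ m C₁ h)
    (hG : IsMonotoneC11 m C₁ G) (hb : IsStochasticGradient m C₀ C₁ μ G b) (z : E × E)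
    (p : E × Ω') :
    ‖sgStep γ h b z p - explicitEuler γ h G z‖ ^ 2 ≤
      (4 * γ * ‖p.1‖ ^ 2 + 8 * C₁ ^ 2) * h * (1 + ‖z‖) ^ 2 := by
  have hγ := hp.γ_pos
  have hh := hp.h_pos
  have hC := hp.C₁_pos
  have hdiff : sgStep γ h b z p - explicitEuler γ h G z =
      (0, √(2 * γ * h) • p.1 - h • (b z.1 p.2 - G z.1)) := by
    rw [sgStep_eq G]
    ext1 <;> simp only [Prod.fst_add, Prod.snd_add, Prod.fst_sub, Prod.snd_sub] <;> module
  have hnorm : ‖sgStep γ h b z p - explicitEuler γ h G z‖ ≤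
      √(2 * γ * h) * ‖p.1‖ + h * (2 * C₁ * (1 + ‖z‖)) := by
    rw [hdiff, Prod.norm_mk, norm_zero, max_eq_right (norm_nonneg _)]
    refine (norm_sub_le _ _).trans ?_
    rw [norm_smul, norm_smul, Real.norm_of_nonneg hh.le, Real.norm_of_nonneg (Real.sqrt_nonneg _)]
    gcongr
    exact hb.norm_noise_le hG hC.le z p.2
  have hw : 1 ≤ (1 + ‖z‖) ^ 2 := one_le_pow₀ (le_add_of_nonneg_right (norm_nonneg z))
  calc _ ≤ (√(2 * γ * h) * ‖p.1‖ + h * (2 * C₁ * (1 + ‖z‖))) ^ 2 := by gcongr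
    _ ≤ 2 * ((√(2 * γ * h) * ‖p.1‖) ^ 2 + (h * (2 * C₁ * (1 + ‖z‖))) ^ 2) := add_sq_le
    _ = 4 * γ * h * ‖p.1‖ ^ 2 * 1 + 8 * C₁ ^ 2 * (h * h) * (1 + ‖z‖) ^ 2 := by
        rw [mul_pow, Real.sq_sqrt (by positivity)]
        ring
    _ ≤ 4 * γ * h * ‖p.1‖ ^ 2 * (1 + ‖z‖) ^ 2 + 8 * C₁ ^ 2 * (h * 1) * (1 + ‖z‖) ^ 2 := by
        gcongr
        exact hp.h_le_one
    _ = _ := by ring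

variable [BorelSpace E] [SecondCountableTopology E] [IsProbabilityMeasure ν]
  [IsProbabilityMeasure μ]

lemma IsStochasticGradient.memLp_and_integral_sq_sub_le (hp : Admissible γ m C₁ h)
    (hG : IsMonotoneC11 m C₁ G) (hb : IsStochasticGradient m C₀ C₁ μ G b) (hν : MemLp id 2 ν)
    (hL : 0 ≤ L) (hg : TwistedC11 (2 / γ) L M g) (z : E × E) :
    MemLp (fun p => g (sgStep γ h b z p)) 2 (ν.prod μ) ∧
      ∫ p, (g (sgStep γ h b z p) - g (explicitEuler γ h G z)) ^ 2 ∂(ν.prod μ) ≤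
        martingaleConst ν γ C₁ L * h * (1 + ‖z‖) ^ 2 := by
  have hγ := hp.γ_pos
  have hc : 0 < 2 / γ := by positivity
  have hglip := hg.lipschitzWith hc hL
  set y : E × Ω' → ℝ := fun p => g (sgStep γ h b z p) - g (explicitEuler γ h G z)
  set B : E × Ω' → ℝ := fun p =>
    (L * (2 + 2 / γ)) ^ 2 * ((4 * γ * ‖p.1‖ ^ 2 + 8 * C₁ ^ 2) * h * (1 + ‖z‖) ^ 2)
  have hyB (p : E × Ω') : y p ^ 2 ≤ B p := by
    have hlip : |y p| ≤ L * (2 + 2 / γ) * ‖sgStep γ h b z p - explicitEuler γ h G z‖ := by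
      have := hglip.norm_sub_le (sgStep γ h b z p) (explicitEuler γ h G z)
      rwa [Real.coe_toNNReal _ (by positivity)] at this
    calc y p ^ 2 = |y p| ^ 2 := (sq_abs _).symm
      _ ≤ (L * (2 + 2 / γ) * ‖sgStep γ h b z p - explicitEuler γ h G z‖) ^ 2 := by gcongr
      _ ≤ B p := by
        rw [mul_pow]
        exact mul_le_mul_of_nonneg_left (hb.norm_sgStep_sub_explicitEuler_sq_le hp hG z p)
          (sq_nonneg _)
  have hnoise : Integrable (fun ξ : E => ‖ξ‖ ^ 2) ν := by
    simpa only [id_eq] using hν.integrable_norm_pow' (p := 2)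
  have hnoise' : Integrable (fun p : E × Ω' => 4 * γ * ‖p.1‖ ^ 2) (ν.prod μ) :=
    (hnoise.comp_fst μ).const_mul _
  have hB : Integrable B (ν.prod μ) :=
    (((hnoise'.add (integrable_const _)).mul_const _).mul_const _).const_mul _
  have hgi := hb.integrable_comp_sgStep (γ := γ) (h := h) hG hp.C₁_pos.le
    (hν.integrable one_le_two) hglip z
  have hy : AEStronglyMeasurable y (ν.prod μ) :=
    hgi.aestronglyMeasurable.sub aestronglyMeasurable_const
  have hy2 : Integrable (fun p => y p ^ 2) (ν.prod μ) := hB.mono' (hy.pow 2)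
    (.of_forall fun p => (Real.norm_of_nonneg (sq_nonneg _)).trans_le (hyB p))
  have hmem : MemLp (fun p => y p + g (explicitEuler γ h G z)) 2 (ν.prod μ) :=
    ((memLp_two_iff_integrable_sq hy).2 hy2).add (memLp_const _)
  refine ⟨by simpa only [y, sub_add_cancel] using hmem, (integral_mono hy2 hB hyB).trans_eq ?_⟩
  rw [integral_const_mul, integral_mul_const, integral_mul_const,
    integral_add hnoise' (integrable_const _), integral_const_mul,
    integral_fun_fst (fun ξ : E => ‖ξ‖ ^ 2), martingaleConst]
  simp only [integral_const, probReal_univ, one_smul]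
  ring

lemma IsStochasticGradient.lintegral_add_increment_sq_le (hp : Admissible γ m C₁ h)
    (hG : IsMonotoneC11 m C₁ G) (hb : IsStochasticGradient m C₀ C₁ μ G b) (hν : MemLp id 2 ν)
    (hL : 0 ≤ L) (hg : TwistedC11 (2 / γ) L M g) (z : E × E) (t : ℝ) :
    ∫⁻ p, ENNReal.ofReal ((t + (g (sgStep γ h b z p) - chainOp ν μ γ h b g z)) ^ 2) ∂(ν.prod μ) ≤
      ENNReal.ofReal (t ^ 2 + martingaleConst ν γ C₁ L * h * (1 + ‖z‖) ^ 2) := by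
  obtain ⟨hmem, hsq⟩ := hb.memLp_and_integral_sq_sub_le hp hG hν hL hg z
  refine (lintegral_add_sub_integral_sq_le hmem t (g (explicitEuler γ h G z))).trans ?_
  gcongr

end MartingaleIncrement

section Lyapunov

variable {E : Type*} [NormedAddCommGroup E] [InnerProductSpace ℝ E] {γ m C₀ C₁ h : ℝ}

omit [InnerProductSpace ℝ E] in
lemma Admissible.force_sq_le (hp : Admissible γ m C₁ h) {x b : E}
    (hb : ‖b‖ ≤ C₁ * (1 + ‖x‖)) :
    (4 * h * (2 / γ) ^ 2 / γ + (h * (2 / γ)) ^ 2) * ‖b‖ ^ 2 ≤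
      2 * (h * (m / γ)) * (1 + ‖x‖ ^ 2) := by
  obtain ⟨hγ, hm, hC, hh, -, hdamp, -, -, hhC⟩ := hp
  have hb2 : ‖b‖ ^ 2 ≤ 2 * C₁ ^ 2 * (1 + ‖x‖ ^ 2) := by
    calc ‖b‖ ^ 2 ≤ (C₁ * (1 + ‖x‖)) ^ 2 := by gcongr
      _ ≤ C₁ ^ 2 * (2 * (1 ^ 2 + ‖x‖ ^ 2)) := by rw [mul_pow]; gcongr; exact add_sq_le
      _ = _ := by ring
  calc _ ≤ (4 * h * (2 / γ) ^ 2 / γ + (h * (2 / γ)) ^ 2) *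
        (2 * C₁ ^ 2 * (1 + ‖x‖ ^ 2)) := by gcongr
    _ = (h / γ ^ 3 * (32 * C₁ ^ 2) + h / γ ^ 2 * (8 * h * C₁ ^ 2)) * (1 + ‖x‖ ^ 2) := by
        field_simp
        ring
    _ ≤ (h / γ ^ 3 * (m * γ ^ 2) + h / γ ^ 2 * (m * γ)) * (1 + ‖x‖ ^ 2) := by gcongr
    _ = _ := by field_simp; ring

lemma neg_two_mul_inner_le {s t κ : ℝ} (hs : 0 ≤ s) (ht0 : 0 ≤ t) (ht1 : t ≤ 1) (hκ : 0 < κ)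
    (q b : E) : -(2 * s * t * ⟪q, b⟫) ≤ κ * ‖q‖ ^ 2 + s ^ 2 / κ * ‖b‖ ^ 2 := by
  have hqb : -⟪q, b⟫ ≤ ‖q‖ * ‖b‖ := neg_le.1 (abs_le.1 (abs_real_inner_le_norm q b)).1
  calc -(2 * s * t * ⟪q, b⟫) = 2 * s * t * -⟪q, b⟫ := by ring
    _ ≤ 2 * s * t * (‖q‖ * ‖b‖) := by gcongr
    _ ≤ 2 * s * 1 * (‖q‖ * ‖b‖) := by gcongr
    _ = κ * ‖q‖ ^ 2 + s ^ 2 / κ * ‖b‖ ^ 2 - κ * (‖q‖ - s / κ * ‖b‖) ^ 2 := by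
        field_simp
        ring
    _ ≤ κ * ‖q‖ ^ 2 + s ^ 2 / κ * ‖b‖ ^ 2 := sub_le_self _ (by positivity)

omit [InnerProductSpace ℝ E] in
lemma Admissible.lyapunov_rate_mul_le (hp : Admissible γ m C₁ h) (x q : E) :
    m / (4 * γ) * h * (‖x‖ ^ 2 + ‖x + q‖ ^ 2) ≤
      2 * (h * (m / γ)) * ‖x‖ ^ 2 + γ * h / 2 * ‖q‖ ^ 2 := by
  obtain ⟨hγ, hm, -, hh, -, -, hmγ, -⟩ := hp
  have hxq : ‖x + q‖ ^ 2 ≤ 2 * (‖x‖ ^ 2 + ‖q‖ ^ 2) :=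
    (pow_le_pow_left₀ (norm_nonneg _) (norm_add_le x q) 2).trans add_sq_le
  calc _ ≤ m / (4 * γ) * h * (‖x‖ ^ 2 + 2 * (‖x‖ ^ 2 + ‖q‖ ^ 2)) := by gcongr
    _ = 3 / 4 * (h * (m / γ) * ‖x‖ ^ 2) + h / (2 * γ) * m * ‖q‖ ^ 2 := by field_simp; ring
    _ ≤ 2 * (h * (m / γ) * ‖x‖ ^ 2) + h / (2 * γ) * γ ^ 2 * ‖q‖ ^ 2 := by gcongr; norm_num
    _ = _ := by field_simp

lemma Admissible.twistedNorm_sq_explicitEuler_le (hp : Admissible γ m C₁ h) {F : E → E}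
    (hF : ∀ x, ‖F x‖ ≤ C₁ * (1 + ‖x‖)) (hdrift : ∀ x, m * ‖x‖ ^ 2 - C₀ ≤ ⟪x, F x⟫)
    (z : E × E) :
    twistedNorm (2 / γ) (explicitEuler γ h F z) ^ 2 ≤
      (1 - m / (4 * γ) * h) * twistedNorm (2 / γ) z ^ 2 + (4 * C₀ + 2 * m) / γ * h := by
  have hγ := hp.γ_pos
  have hh := hp.h_pos
  have hγh := hp.γh_le_half
  set x := z.1
  set b := F x
  set q := (2 / γ) • z.2 with hq
  set τ := γ * h / 2 with hτ
  set s := h * (2 / γ) with hs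
  have hτ0 : 0 < τ := by positivity
  have hs0 : 0 < s := by positivity
  have hhv : h • z.2 = τ • q := by rw [hq, hτ, smul_smul]; congr 1; field_simp
  have hkick : x + h • z.2 + (2 / γ) • ((1 - γ * h) • z.2 - h • b) =
      x + (1 - τ) • q - s • b := by
    rw [smul_sub, smul_comm, ← hq, hhv, hτ, hs]
    module
  have hexpand : ‖x + (1 - τ) • q - s • b‖ ^ 2 = ‖x + (1 - τ) • q‖ ^ 2 -
      2 * s * ⟪x, b⟫ - 2 * s * (1 - τ) * ⟪q, b⟫ + s ^ 2 * ‖b‖ ^ 2 := by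
    rw [norm_sub_sq_real, norm_smul, mul_pow, Real.norm_eq_abs, sq_abs, inner_smul_right,
      inner_add_left, real_inner_smul_left]
    ring
  have hcross := neg_two_mul_inner_le hs0.le (by linarith : 0 ≤ 1 - τ) (by linarith)
    (by positivity : 0 < γ * h / 4) q b
  have hcoef : s ^ 2 / (γ * h / 4) = 4 * h * (2 / γ) ^ 2 / γ := by rw [hs]; field_simp
  have hinner : 2 * s * (m * ‖x‖ ^ 2 - C₀) ≤ 2 * s * ⟪x, b⟫ :=
    mul_le_mul_of_nonneg_left (hdrift x) (by positivity)
  have hinner' : 2 * s * (m * ‖x‖ ^ 2 - C₀) = 4 * (h * (m / γ)) * ‖x‖ ^ 2 - 4 * C₀ / γ * h := by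
    rw [hs]; field_simp; ring
  have hdamp : 3 / 4 * (γ * h) * ‖q‖ ^ 2 ≤ 2 * τ * (1 - τ) * ‖q‖ ^ 2 :=
    mul_le_mul_of_nonneg_right (by nlinarith) (sq_nonneg _)
  have hconst : (4 * C₀ + 2 * m) / γ * h = 4 * C₀ / γ * h + 2 * (h * (m / γ)) := by ring
  rw [hcoef] at hcross
  simp only [twistedNorm_sq, explicitEuler]
  rw [hkick, hexpand, hhv, hconst]
  linarith only [norm_sq_drift_damp τ x q, hcross, hp.force_sq_le (hF x), hinner, hinner', hdamp,
    hp.lyapunov_rate_mul_le x q]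

lemma twistedNorm_sq_add_snd (c : ℝ) (z : E × E) (v : E) :
    twistedNorm c (z + (0, v)) ^ 2 =
      twistedNorm c z ^ 2 + 2 * (c * ⟪z.1 + c • z.2, v⟫) + c ^ 2 * ‖v‖ ^ 2 := by
  have : z.1 + 0 + c • (z.2 + v) = z.1 + c • z.2 + c • v := by module
  simp only [twistedNorm_sq, Prod.fst_add, Prod.snd_add]
  rw [this, norm_add_sq_real (z.1 + c • z.2), inner_smul_right, norm_smul, mul_pow,
    Real.norm_eq_abs, sq_abs, add_zero]
  ring

lemma twistedNorm_pow_four_add_snd_le (c : ℝ) (z : E × E) (v : E) :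
    twistedNorm c (z + (0, v)) ^ 4 ≤
      twistedNorm c z ^ 4 + 4 * twistedNorm c z ^ 2 * c * ⟪z.1 + c • z.2, v⟫ +
        (10 * twistedNorm c z ^ 2 * c ^ 2 * ‖v‖ ^ 2 + 2 * c ^ 4 * ‖v‖ ^ 4) := by
  have hcs : ⟪z.1 + c • z.2, v⟫ ^ 2 ≤ twistedNorm c z ^ 2 * ‖v‖ ^ 2 := by
    rw [← sq_abs ⟪z.1 + c • z.2, v⟫, ← mul_pow]
    refine pow_le_pow_left₀ (abs_nonneg _) ((abs_real_inner_le_norm _ _).trans ?_) 2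
    gcongr
    exact norm_fst_add_smul_snd_le_twistedNorm c z
  rw [show twistedNorm c (z + (0, v)) ^ 4 = (twistedNorm c (z + (0, v)) ^ 2) ^ 2 by ring,
    twistedNorm_sq_add_snd]
  nlinarith only [mul_le_mul_of_nonneg_left hcs (sq_nonneg c),
    sq_nonneg (2 * (c * ⟪z.1 + c • z.2, v⟫) - c ^ 2 * ‖v‖ ^ 2)]

/-- The constant produced when a Lyapunov inequality `D ≤ (1 - κ h) N + K h` is squared and noise
with scaled second and fourth moments `A₂`, `A₄` is added. -/
noncomputable def squaredLyapunovConst (κ K A₂ A₄ : ℝ) : ℝ :=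
  (2 * K + 10 * A₂) ^ 2 / (2 * κ) + K ^ 2 + 10 * A₂ * K + 2 * A₄

lemma sq_add_noise_le_of_lyapunov {κ K N A₂ A₄ D : ℝ} (hκ : 0 < κ) (hK : 0 ≤ K) (hh : 0 ≤ h)
    (hh1 : h ≤ 1) (hκh : κ * h ≤ 1) (hN : 0 ≤ N) (hA₂ : 0 ≤ A₂) (hA₄ : 0 ≤ A₄) (hD0 : 0 ≤ D)
    (hD : D ≤ (1 - κ * h) * N + K * h) :
    D ^ 2 + 10 * D * (h * A₂) + 2 * (h ^ 2 * A₄) ≤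
      (1 - κ / 2 * h) * N ^ 2 + h * squaredLyapunovConst κ K A₂ A₄ := by
  have hκh0 : 0 ≤ κ * h := by positivity
  have hD2 : D ^ 2 ≤ (1 - κ * h) * N ^ 2 + 2 * K * h * N + K ^ 2 * h := by
    have h₁ : (1 - κ * h) ^ 2 * N ^ 2 ≤ (1 - κ * h) * N ^ 2 := by gcongr; nlinarith
    have h₂ : (1 - κ * h) * (2 * K * h * N) ≤ 1 * (2 * K * h * N) := by gcongr; linarith
    have h₃ : K ^ 2 * h * h ≤ K ^ 2 * h * 1 := by gcongr
    calc D ^ 2 ≤ ((1 - κ * h) * N + K * h) ^ 2 := by gcongr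
      _ ≤ _ := by nlinarith only [h₁, h₂, h₃]
  have hDA : 10 * D * (h * A₂) ≤ 10 * (N + K) * (h * A₂) := by
    have h₁ : (1 - κ * h) * N ≤ 1 * N := by gcongr; linarith
    have h₂ : K * h ≤ K * 1 := by gcongr
    gcongr
    linarith
  have hA : h ^ 2 * A₄ ≤ h * A₄ := by
    gcongr
    nlinarith
  have hyoung : (2 * K + 10 * A₂) * N ≤ κ / 2 * N ^ 2 + (2 * K + 10 * A₂) ^ 2 / (2 * κ) := by
    calc (2 * K + 10 * A₂) * N = κ / 2 * N ^ 2 + (2 * K + 10 * A₂) ^ 2 / (2 * κ) -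
          κ / 2 * (N - (2 * K + 10 * A₂) / κ) ^ 2 := by field_simp; ring
      _ ≤ _ := sub_le_self _ (by positivity)
  rw [squaredLyapunovConst]
  nlinarith only [hD2, hDA, hA, mul_le_mul_of_nonneg_left hyoung hh]

/-- The constant `K` in the fourth-moment Lyapunov inequality
`E ‖Z'‖⁴ ≤ (1 - κ h) ‖Z‖⁴ + K h` for one step of the chain, in the twisted norm. -/
noncomputable def lyapunovConst [MeasurableSpace E] (ν : Measure E) (γ m C₀ : ℝ) : ℝ :=
  squaredLyapunovConst (m / (4 * γ)) ((4 * C₀ + 2 * m) / γ) (8 / γ * ∫ ξ, ‖ξ‖ ^ 2 ∂ν)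
    ((8 / γ) ^ 2 * ∫ ξ, ‖ξ‖ ^ 4 ∂ν)

variable [MeasurableSpace E] {Ω' : Type*} [MeasurableSpace Ω'] {G : E → E} {ν : Measure E}
  {μ : Measure Ω'} {b : E → Ω' → E}

lemma lintegral_twistedNorm_add_noise_le [CompleteSpace E] [IsProbabilityMeasure ν]
    (hν : MemLp id 4 ν) (hν0 : ∫ ξ, ξ ∂ν = 0) (c s : ℝ) (z : E × E) :
    ∫⁻ ξ, ENNReal.ofReal (twistedNorm c (z + (0, s • ξ)) ^ 4) ∂ν ≤
      ENNReal.ofReal ((twistedNorm c z ^ 2) ^ 2 +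
        10 * twistedNorm c z ^ 2 * ((c * s) ^ 2 * ∫ ξ, ‖ξ‖ ^ 2 ∂ν) +
        2 * ((c * s) ^ 4 * ∫ ξ, ‖ξ‖ ^ 4 ∂ν)) := by
  set w := z.1 + c • z.2
  set D := twistedNorm c z ^ 2 with hD
  have hν1 : Integrable (fun ξ : E => ξ) ν := hν.integrable (by norm_num)
  have hpt (ξ : E) : twistedNorm c (z + (0, s • ξ)) ^ 4 ≤ (D ^ 2 + 4 * D * (c * s) * ⟪w, ξ⟫) +
      (10 * D * (c * s) ^ 2 * ‖ξ‖ ^ 2 + 2 * (c * s) ^ 4 * ‖ξ‖ ^ 4) := by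
    refine (twistedNorm_pow_four_add_snd_le c z (s • ξ)).trans_eq ?_
    rw [inner_smul_right, norm_smul, mul_pow, mul_pow, Real.norm_eq_abs, sq_abs,
      (by decide : Even 4).pow_abs, hD]
    ring
  have hlin : Integrable (fun ξ => 4 * D * (c * s) * ⟪w, ξ⟫) ν :=
    ((innerSL ℝ w).integrable_comp hν1).const_mul _
  have hlin0 : ∫ ξ, ⟪w, ξ⟫ ∂ν = 0 := by
    rw [integral_inner hν1, hν0, inner_zero_right]
  have hmom {k : ℕ} (hk : MemLp id k ν) (a : ℝ) : Integrable (fun ξ : E => a * ‖ξ‖ ^ k) ν := by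
    simpa only [id_eq] using hk.integrable_norm_pow'.const_mul a
  have hmom2 : Integrable (fun ξ : E => 10 * D * (c * s) ^ 2 * ‖ξ‖ ^ 2) ν :=
    hmom (hν.mono_exponent (by norm_num)) _
  have hmom4 : Integrable (fun ξ : E => 2 * (c * s) ^ 4 * ‖ξ‖ ^ 4) ν := hmom hν _
  have hfst : Integrable (fun ξ => D ^ 2 + 4 * D * (c * s) * ⟪w, ξ⟫) ν :=
    (integrable_const _).add hlin
  have hsnd : Integrable (fun ξ : E => 10 * D * (c * s) ^ 2 * ‖ξ‖ ^ 2 +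
      2 * (c * s) ^ 4 * ‖ξ‖ ^ 4) ν := hmom2.add hmom4
  have hsum : Integrable (fun ξ : E => D ^ 2 + 4 * D * (c * s) * ⟪w, ξ⟫ +
      (10 * D * (c * s) ^ 2 * ‖ξ‖ ^ 2 + 2 * (c * s) ^ 4 * ‖ξ‖ ^ 4)) ν := hfst.add hsnd
  refine (lintegral_mono fun ξ => ENNReal.ofReal_le_ofReal (hpt ξ)).trans_eq ?_
  refine (ofReal_integral_eq_lintegral_ofReal hsum (.of_forall fun ξ =>
    (pow_nonneg (twistedNorm_nonneg _ _) 4).trans (hpt ξ))).symm.trans (congrArg _ ?_)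
  rw [integral_add hfst hsnd, integral_add (integrable_const _) hlin, integral_add hmom2 hmom4,
    integral_const_mul, integral_const_mul, integral_const_mul, hlin0]
  simp only [integral_const, probReal_univ, one_smul]
  ring

lemma IsStochasticGradient.lintegral_twistedNorm_sgStep_le [BorelSpace E]
    [SecondCountableTopology E] [CompleteSpace E] [IsProbabilityMeasure ν]
    [IsProbabilityMeasure μ] (hν : MemLp id 4 ν) (hν0 : ∫ ξ, ξ ∂ν = 0)
    (hp : Admissible γ m C₁ h) (hC₀ : 0 ≤ C₀) (hb : IsStochasticGradient m C₀ C₁ μ G b)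
    (z : E × E) :
    ∫⁻ p, ENNReal.ofReal (twistedNorm (2 / γ) (sgStep γ h b z p) ^ 4) ∂(ν.prod μ) ≤
      ENNReal.ofReal ((1 - m / (4 * γ) / 2 * h) * twistedNorm (2 / γ) z ^ 4 +
        h * lyapunovConst ν γ m C₀) := by
  have hγ := hp.γ_pos
  have hh := hp.h_pos
  have hm := hp.m_pos
  set R := (1 - m / (4 * γ) / 2 * h) * twistedNorm (2 / γ) z ^ 4 + h * lyapunovConst ν γ m C₀
    with hR
  have hcs : (2 / γ * √(2 * γ * h)) ^ 2 = h * (8 / γ) := by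
    rw [mul_pow, Real.sq_sqrt (by positivity)]
    field_simp
    ring
  have hκh : m / (4 * γ) * h ≤ 1 := by
    rw [div_mul_eq_mul_div, div_le_one (by positivity)]
    nlinarith [mul_le_mul_of_nonneg_right hp.m_le_sq hh.le, hp.γh_le_half]
  have hstep (ω : Ω') :
      ∫⁻ ξ, ENNReal.ofReal (twistedNorm (2 / γ) (sgStep γ h b z (ξ, ω)) ^ 4) ∂ν ≤
        ENNReal.ofReal R := by
    have hsg (ξ : E) : sgStep γ h b z (ξ, ω) =
        explicitEuler γ h (fun x => b x ω) z + (0, √(2 * γ * h) • ξ) := by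
      rw [sgStep_eq fun x => b x ω, sub_self, smul_zero, neg_zero, Prod.mk_zero_zero, add_zero]
    simp only [hsg]
    refine (lintegral_twistedNorm_add_noise_le hν hν0 _ _ _).trans (ENNReal.ofReal_le_ofReal ?_)
    have hsq := sq_add_noise_le_of_lyapunov (A₂ := 8 / γ * ∫ ξ, ‖ξ‖ ^ 2 ∂ν)
      (A₄ := (8 / γ) ^ 2 * ∫ ξ, ‖ξ‖ ^ 4 ∂ν) (by positivity) (by positivity) hh.le hp.h_le_one hκh
      (sq_nonneg _) (by positivity) (by positivity) (sq_nonneg _)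
      (hp.twistedNorm_sq_explicitEuler_le (hb.norm_le · ω) (hb.drift · ω) z)
    rw [hR, lyapunovConst]
    refine le_of_eq_of_le ?_ (hsq.trans_eq (by ring))
    rw [show (2 / γ * √(2 * γ * h)) ^ 4 = ((2 / γ * √(2 * γ * h)) ^ 2) ^ 2 by ring, hcs]
    ring
  have hmeas : Measurable fun p =>
      ENNReal.ofReal (twistedNorm (2 / γ) (sgStep γ h b z p) ^ 4) := by
    have hcont : Continuous fun y : E × E => twistedNorm (2 / γ) y ^ 4 := by
      unfold twistedNorm
      fun_prop
    exact (hcont.measurable.comp (hb.measurable_sgStep.comp measurable_prodMk_left)).ennreal_ofReal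
  rw [lintegral_prod_symm _ hmeas.aemeasurable]
  exact (lintegral_mono hstep).trans_eq (by rw [lintegral_const, measure_univ, mul_one])

end Lyapunov

section Tilted

lemma tilted_prod {X Y : Type*} [MeasurableSpace X] [MeasurableSpace Y] {μ : Measure X}
    {ν : Measure Y} [SFinite μ] [SFinite ν] {f : X → ℝ} {g : Y → ℝ} (hf : AEMeasurable f μ)
    (hg : AEMeasurable g ν) :
    (μ.tilted f).prod (ν.tilted g) = (μ.prod ν).tilted fun z => f z.1 + g z.2 := by
  rw [Measure.tilted, Measure.tilted, prod_withDensity₀ (by fun_prop) (by fun_prop), Measure.tilted]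
  simp only [Real.exp_add]
  congr with z
  rw [integral_prod_mul (fun x => Real.exp (f x)) fun y => Real.exp (g y),
    ← ENNReal.ofReal_mul (div_nonneg (Real.exp_nonneg _) (by positivity)), div_mul_div_comm]

end Tilted

section Gaussian

variable {E : Type*} [NormedAddCommGroup E] [InnerProductSpace ℝ E] [FiniteDimensional ℝ E]
  [MeasurableSpace E] [BorelSpace E]

lemma integrable_exp_neg_mul_sq_norm {β : ℝ} (hβ : 0 < β) :
    Integrable fun v : E => Real.exp (-β * ‖v‖ ^ 2) := by
  have h := (GaussianFourier.integrable_cexp_neg_mul_sq_norm_add (V := E) (b := (β : ℂ))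
    (by simpa using hβ) 0 0).re
  refine h.congr (.of_forall fun v => ?_)
  simp only [zero_mul, add_zero]
  exact_mod_cast Complex.ofReal_re _

variable (E) in
lemma stdGaussian_eq_tilted : stdGaussian E = volume.tilted fun v => -‖v‖ ^ 2 / 2 := by
  have hint : Integrable fun v : E => Real.exp (-‖v‖ ^ 2 / 2) := by
    refine (integrable_exp_neg_mul_sq_norm one_half_pos).congr (.of_forall fun v => ?_)
    simp only
    ring_nf
  have := isProbabilityMeasure_tilted hint
  refine Measure.ext_of_charFun (funext fun t => ?_)
  have hb : (0 : ℝ) < (1 / 2 : ℂ).re := by norm_num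
  set Z := ∫ v : E, Real.exp (-‖v‖ ^ 2 / 2) with hZ
  have hZ_pos : 0 < Z := integral_exp_pos hint
  have hZc : (Z : ℂ) = ∫ v : E, Complex.exp (-(1 / 2) * ‖v‖ ^ 2) := by
    rw [hZ, ← integral_complex_ofReal]
    push_cast
    ring_nf
  have hdensity (v : E) : (Real.exp (-‖v‖ ^ 2 / 2) / Z) • Complex.exp (⟪v, t⟫ * Complex.I) =
      (Z : ℂ)⁻¹ * Complex.exp (-(1 / 2) * ‖v‖ ^ 2 + Complex.I * ⟪t, v⟫) := by
    rw [Complex.real_smul, Complex.exp_add, real_inner_comm t v]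
    push_cast
    ring_nf
  rw [charFun_stdGaussian, charFun_apply, integral_tilted, integral_congr_ae (.of_forall hdensity),
    integral_const_mul, GaussianFourier.integral_cexp_neg_mul_sq_norm_add hb,
    ← GaussianFourier.integral_cexp_neg_mul_sq_norm hb, ← hZc,
    inv_mul_cancel_left₀ (by exact_mod_cast hZ_pos.ne'), Complex.I_sq]
  ring_nf

lemma stdGaussian_map_smul_conv_map_smul {η σ : ℝ} (h : η ^ 2 + σ ^ 2 = 1) :
    (stdGaussian E).map (η • ·) ∗ (stdGaussian E).map (σ • ·) = stdGaussian E := by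
  have : IsProbabilityMeasure ((stdGaussian E).map (η • ·)) :=
    Measure.isProbabilityMeasure_map (by fun_prop)
  have : IsProbabilityMeasure ((stdGaussian E).map (σ • ·)) :=
    Measure.isProbabilityMeasure_map (by fun_prop)
  refine Measure.ext_of_charFun (funext fun t => ?_)
  have h' : ((|η| : ℝ) : ℂ) ^ 2 + ((|σ| : ℝ) : ℂ) ^ 2 = 1 := by
    exact_mod_cast (by rw [sq_abs, sq_abs, h])
  rw [charFun_conv, charFun_map_smul, charFun_map_smul, charFun_stdGaussian, charFun_stdGaussian,
    charFun_stdGaussian, ← Complex.exp_add, norm_smul, norm_smul, Real.norm_eq_abs,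
    Real.norm_eq_abs]
  congr 1
  push_cast
  linear_combination (-(‖t‖ : ℂ) ^ 2 / 2) * h'

lemma integral_integral_smul_add_smul_stdGaussian {η σ : ℝ} (h : η ^ 2 + σ ^ 2 = 1)
    {φ : E → ℝ} (hφ : Continuous φ) (hint : Integrable φ (stdGaussian E)) :
    ∫ v, ∫ ξ, φ (η • v + σ • ξ) ∂(stdGaussian E) ∂(stdGaussian E) = ∫ v, φ v ∂(stdGaussian E) := by
  conv_rhs => rw [← stdGaussian_map_smul_conv_map_smul h]
  rw [integral_conv (by rwa [stdGaussian_map_smul_conv_map_smul h])]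
  have hin (x : E) : ∫ y, φ (x + y) ∂((stdGaussian E).map (σ • ·)) =
      ∫ ξ, φ (x + σ • ξ) ∂(stdGaussian E) :=
    integral_map (by fun_prop) (by fun_prop)
  simp_rw [hin]
  have hmeas : StronglyMeasurable fun x => ∫ ξ, φ (x + σ • ξ) ∂(stdGaussian E) :=
    (hφ.comp (continuous_fst.add (continuous_snd.const_smul σ))).stronglyMeasurable
      |>.integral_prod_right'
  exact (integral_map (by fun_prop) hmeas.aestronglyMeasurable).symm

end Gaussian

section Potential

variable {E : Type*} [NormedAddCommGroup E] [InnerProductSpace ℝ E] [CompleteSpace E]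
  {m C₁ : ℝ} {G : E → E} {U : E → ℝ}

lemma continuous_of_hasGradientAt (hU : ∀ x, HasGradientAt U (G x) x) : Continuous U :=
  continuous_iff_continuousAt.2 fun x => (hU x).continuousAt

lemma IsMonotoneC11.add_inner_add_le_potential (hG : IsMonotoneC11 m C₁ G)
    (hU : ∀ x, HasGradientAt U (G x) x) (x : E) :
    U 0 + ⟪G 0, x⟫ + m / 2 * ‖x‖ ^ 2 ≤ U x := by
  have hderiv (t : ℝ) :
      HasDerivAt (fun t : ℝ => U (t • x) - t * ⟪G 0, x⟫ - m / 2 * ‖x‖ ^ 2 * t ^ 2)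
        (⟪G (t • x), x⟫ - ⟪G 0, x⟫ - m * ‖x‖ ^ 2 * t) t := by
    have hline : HasDerivAt (fun t : ℝ => t • x) x t := by
      simpa using (hasDerivAt_id t).smul_const x
    refine (((hU (t • x)).hasFDerivAt.comp_hasDerivAt t hline).sub
      (hasDerivAt_mul_const _)).sub (((hasDerivAt_pow 2 t).const_mul _).congr_deriv ?_)
    ring
  obtain ⟨t, ht, hslope⟩ := exists_hasDerivAt_eq_slope _ _ zero_lt_one
    (fun t _ => (hderiv t).continuousAt.continuousWithinAt) (fun t _ => hderiv t)
  have hmono : t * (m * ‖x‖ ^ 2 * t) ≤ t * (⟪G (t • x), x⟫ - ⟪G 0, x⟫) := by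
    have := hG.mul_norm_sub_sq_le_inner (t • x) 0
    rw [sub_zero, norm_smul, Real.norm_of_nonneg ht.1.le, real_inner_smul_left, inner_sub_right,
      real_inner_comm, real_inner_comm (G 0)] at this
    linarith
  have hnonneg := le_of_mul_le_mul_left hmono ht.1
  simp only [one_smul, zero_smul] at hslope
  linarith

lemma IsMonotoneC11.mul_norm_sq_sub_le_potential (hm : 0 < m) (hG : IsMonotoneC11 m C₁ G)
    (hU : ∀ x, HasGradientAt U (G x) x) (x : E) :
    m / 4 * ‖x‖ ^ 2 - (‖G 0‖ ^ 2 / m - U 0) ≤ U x := by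
  have hconvex := hG.add_inner_add_le_potential hU x
  have hinner := neg_le_of_abs_le (abs_real_inner_le_norm (G 0) x)
  have hyoung : ‖G 0‖ * ‖x‖ ≤ m / 4 * ‖x‖ ^ 2 + ‖G 0‖ ^ 2 / m := by
    have hsq : m / 4 * ‖x‖ ^ 2 + ‖G 0‖ ^ 2 / m - ‖G 0‖ * ‖x‖ =
        m / 4 * (‖x‖ - 2 * ‖G 0‖ / m) ^ 2 := by
      field_simp
      ring
    rw [← sub_nonneg, hsq]
    positivity
  linarith

lemma IsMonotoneC11.abs_potential_sub_sub_inner_le (hC : 0 ≤ C₁) (hG : IsMonotoneC11 m C₁ G)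
    (hU : ∀ x, HasGradientAt U (G x) x) (x y : E) :
    |U y - U x - ⟪G x, y - x⟫| ≤ C₁ * ‖y - x‖ ^ 2 := by
  have hlip : LipschitzWith ⟨C₁, hC⟩ (fderiv ℝ U) := .of_dist_le_mul fun v w => by
    rw [dist_eq_norm, (hU v).hasFDerivAt.fderiv, (hU w).hasFDerivAt.fderiv, ← map_sub,
      LinearIsometryEquiv.norm_map, dist_eq_norm]
    exact hG.norm_sub_le v w
  have := abs_sub_sub_fderiv_le (fun x => (hU x).differentiableAt) hlip x x y
  rw [(hU x).hasFDerivAt.fderiv, sub_self, norm_zero, zero_add] at this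
  exact this.trans_eq (congrArg (C₁ * ·) (sq _).symm)

end Potential

section SymplecticEuler

variable {E : Type*} [NormedAddCommGroup E] [InnerProductSpace ℝ E]
  {m C₁ h : ℝ} {G : E → E} {U : E → ℝ}

/-- The Hamiltonian `‖v‖² / 2 + U x` of the frictionless dynamics at `z = (x, v)`. -/
noncomputable def hamiltonian (U : E → ℝ) (z : E × E) : ℝ :=
  ‖z.2‖ ^ 2 / 2 + U z.1

omit [InnerProductSpace ℝ E] in
lemma continuous_hamiltonian (hU : Continuous U) : Continuous (hamiltonian U) := by
  unfold hamiltonian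
  fun_prop

/-- One step of the symplectic Euler scheme for `hamiltonian U`, with `G = ∇U`. -/
def symplecticEuler (h : ℝ) (G : E → E) (z : E × E) : E × E :=
  (z.1 + h • z.2, z.2 - h • G (z.1 + h • z.2))

lemma continuous_symplecticEuler (hG : Continuous G) : Continuous (symplecticEuler h G) := by
  unfold symplecticEuler
  fun_prop

lemma norm_fst_add_smul_snd_le (hh : 0 ≤ h) (hh1 : h ≤ 1) (z : E × E) :
    ‖z.1 + h • z.2‖ ≤ 2 * ‖z‖ := by
  calc ‖z.1 + h • z.2‖ ≤ ‖z.1‖ + h * ‖z.2‖ := by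
        simpa only [norm_smul, Real.norm_of_nonneg hh] using norm_add_le z.1 (h • z.2)
    _ ≤ ‖z‖ + 1 * ‖z‖ := by gcongr <;> [exact norm_fst_le z; exact norm_snd_le z]
    _ = 2 * ‖z‖ := by ring

lemma IsMonotoneC11.one_add_norm_symplecticEuler_le (hG : IsMonotoneC11 m C₁ G) (hC : 0 ≤ C₁)
    (hh : 0 ≤ h) (hh1 : h ≤ 1) (z : E × E) :
    1 + ‖symplecticEuler h G z‖ ≤ (2 + 2 * C₁) * (1 + ‖z‖) := by
  have hx := norm_fst_add_smul_snd_le hh hh1 z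
  have hforce : ‖h • G (z.1 + h • z.2)‖ ≤ 2 * C₁ * (1 + ‖z‖) := by
    rw [norm_smul, Real.norm_of_nonneg hh]
    calc h * ‖G (z.1 + h • z.2)‖ ≤ 1 * (C₁ * (2 * ‖z‖ + 1)) := by
          gcongr
          exact (hG.norm_le _).trans (by gcongr)
      _ ≤ 2 * C₁ * (1 + ‖z‖) := by linarith
  have hv : ‖z.2 - h • G (z.1 + h • z.2)‖ ≤ ‖z‖ + 2 * C₁ * (1 + ‖z‖) :=
    (_root_.norm_sub_le _ _).trans (add_le_add (norm_snd_le z) hforce)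
  have : 0 ≤ 2 * C₁ * (1 + ‖z‖) := by positivity
  have hstep : ‖symplecticEuler h G z‖ ≤ 2 * ‖z‖ + 2 * C₁ * (1 + ‖z‖) :=
    max_le (hx.trans (by linarith)) (hv.trans (by linarith [norm_nonneg z]))
  linarith

lemma IsMonotoneC11.one_add_norm_le_symplecticEuler (hG : IsMonotoneC11 m C₁ G) (hC : 0 ≤ C₁)
    (hh : 0 ≤ h) (hh1 : h ≤ 1) (z : E × E) :
    1 + ‖z‖ ≤ (2 + 2 * C₁) * (1 + ‖symplecticEuler h G z‖) := by
  set y := symplecticEuler h G z with hy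
  have hforce : ‖h • G y.1‖ ≤ C₁ * (1 + ‖y‖) := by
    rw [norm_smul, Real.norm_of_nonneg hh]
    calc h * ‖G y.1‖ ≤ 1 * (C₁ * (‖y‖ + 1)) := by
          gcongr
          exact (hG.norm_le _).trans (by gcongr; exact norm_fst_le y)
      _ = C₁ * (1 + ‖y‖) := by ring
  have hv : ‖z.2‖ ≤ ‖y‖ + C₁ * (1 + ‖y‖) := by
    have hz : z.2 = y.2 + h • G y.1 := by simp [hy, symplecticEuler]
    rw [hz]
    exact (norm_add_le _ _).trans (add_le_add (norm_snd_le y) hforce)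
  have hx : ‖z.1‖ ≤ ‖y‖ + ‖z.2‖ := by
    have hz : z.1 = y.1 - h • z.2 := by simp [hy, symplecticEuler]
    calc ‖z.1‖ ≤ ‖y.1‖ + h * ‖z.2‖ := by
          rw [hz]
          simpa only [norm_smul, Real.norm_of_nonneg hh] using _root_.norm_sub_le y.1 (h • z.2)
      _ ≤ ‖y‖ + 1 * ‖z.2‖ := by gcongr; exact norm_fst_le y
      _ = ‖y‖ + ‖z.2‖ := by rw [one_mul]
  have hz : ‖z‖ ≤ 2 * ‖y‖ + C₁ * (1 + ‖y‖) :=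
    max_le (by linarith) (by linarith [norm_nonneg y])
  have : 0 ≤ C₁ * (1 + ‖y‖) := by positivity
  linarith

lemma IsMonotoneC11.abs_hamiltonian_symplecticEuler_sub_le [CompleteSpace E]
    (hG : IsMonotoneC11 m C₁ G) (hU : ∀ x, HasGradientAt U (G x) x) (hC : 0 ≤ C₁) (hh : 0 ≤ h)
    (hh1 : h ≤ 1) (z : E × E) :
    |hamiltonian U (symplecticEuler h G z) - hamiltonian U z| ≤
      (2 * C₁ ^ 2 + C₁) * h ^ 2 * (1 + ‖z‖) ^ 2 := by
  set x := z.1 + h • z.2 with hx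
  have hz : z.1 - x = -(h • z.2) := by rw [hx]; abel
  have htaylor := hG.abs_potential_sub_sub_inner_le hC hU x z.1
  rw [hz, norm_neg, norm_smul, Real.norm_of_nonneg hh, inner_neg_right, inner_smul_right]
    at htaylor
  have hkinetic : ‖z.2 - h • G x‖ ^ 2 =
      ‖z.2‖ ^ 2 - 2 * h * ⟪G x, z.2⟫ + h ^ 2 * ‖G x‖ ^ 2 := by
    rw [norm_sub_sq_real, inner_smul_right, norm_smul, Real.norm_of_nonneg hh, real_inner_comm]
    ring
  have hforce : h ^ 2 * ‖G x‖ ^ 2 ≤ h ^ 2 * (C₁ * (2 * (1 + ‖z‖))) ^ 2 := by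
    gcongr
    exact (hG.norm_le x).trans
      (by gcongr; linarith [norm_fst_add_smul_snd_le hh hh1 z])
  have hremainder : C₁ * (h * ‖z.2‖) ^ 2 ≤ C₁ * (h * (1 + ‖z‖)) ^ 2 := by
    gcongr
    linarith [norm_snd_le z]
  have : 0 ≤ h ^ 2 * ‖G x‖ ^ 2 := by positivity
  change |‖z.2 - h • G x‖ ^ 2 / 2 + U x - (‖z.2‖ ^ 2 / 2 + U z.1)| ≤ _
  rw [hkinetic]
  rw [abs_le] at htaylor ⊢
  constructor <;> linarith

lemma measurePreserving_symplecticEuler [FiniteDimensional ℝ E] [MeasurableSpace E]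
    [BorelSpace E] (hG : Continuous G) :
    MeasurePreserving (symplecticEuler h G) (volume : Measure (E × E)) volume := by
  have hdrift : MeasurePreserving (fun p : E × E => (p.1, p.2 + h • p.1))
      (volume : Measure (E × E)) volume :=
    (MeasurePreserving.id _).skew_product (g := fun x v => v + h • x)
      (by fun_prop : Continuous fun p : E × E => p.2 + h • p.1).measurable
      (.of_forall fun x => (measurePreserving_add_right volume (h • x)).map_eq)
  have hkick : MeasurePreserving (fun p : E × E => (p.1, p.2 - h • G p.1))
      (volume : Measure (E × E)) volume :=
    (MeasurePreserving.id _).skew_product (g := fun x v => v - h • G x)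
      (by fun_prop : Continuous fun p : E × E => p.2 - h • G p.1).measurable
      (.of_forall fun x => (measurePreserving_sub_right volume (h • G x)).map_eq)
  have hswap : MeasurePreserving (Prod.swap : E × E → E × E) volume volume :=
    Measure.measurePreserving_swap
  exact hkick.comp (hswap.comp (hdrift.comp hswap))

end SymplecticEuler

section Boltzmann

lemma one_add_pow_three_le_exp {β t : ℝ} (hβ : 0 < β) (ht : 0 ≤ t) :
    (1 + t) ^ 3 ≤ Real.exp (9 / (4 * β) + β * t ^ 2) := by
  have hsq : 9 / (4 * β) + β * t ^ 2 - 3 * t = β * (t - 3 / (2 * β)) ^ 2 := by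
    field_simp
    ring
  calc (1 + t) ^ 3 ≤ Real.exp t ^ 3 := by
        gcongr
        linarith [Real.add_one_le_exp t]
    _ = Real.exp (3 * t) := by rw [← Real.exp_nat_mul, Nat.cast_ofNat]
    _ ≤ Real.exp (9 / (4 * β) + β * t ^ 2) := by
        rw [Real.exp_le_exp, ← sub_nonneg, hsq]
        positivity

lemma abs_exp_neg_sub_exp_neg_le (a b : ℝ) :
    |Real.exp (-a) - Real.exp (-b)| ≤ |b - a| * (Real.exp (-a) + Real.exp (-b)) := by
  wlog hab : a ≤ b generalizing a b
  · rw [abs_sub_comm, abs_sub_comm b, add_comm]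
    exact this b a (le_of_not_ge hab)
  have htangent : Real.exp (-a) * (a - b + 1) ≤ Real.exp (-b) := by
    rw [show -b = -a + (a - b) by ring, Real.exp_add]
    gcongr
    exact Real.add_one_le_exp _
  rw [abs_of_nonneg (sub_nonneg.2 (Real.exp_le_exp.2 (neg_le_neg hab))),
    abs_of_nonneg (sub_nonneg.2 hab)]
  linarith [mul_nonneg (sub_nonneg.2 hab) (Real.exp_pos (-b)).le]

variable {E : Type*} [NormedAddCommGroup E] [InnerProductSpace ℝ E] [FiniteDimensional ℝ E]
  [MeasurableSpace E] [BorelSpace E] {m C₁ : ℝ} {G : E → E} {U : E → ℝ}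

/-- The Boltzmann probability measure `π`, whose density is proportional to
`exp (-hamiltonian U)`. -/
noncomputable def boltzmann (U : E → ℝ) : Measure (E × E) :=
  volume.tilted fun z => -hamiltonian U z

/-- The moment of the Boltzmann measure entering all the bias estimates. -/
noncomputable def boltzmannMoment (U : E → ℝ) : ℝ :=
  ∫ z, (1 + ‖z‖) ^ 3 ∂(boltzmann U)

/-- The normalised density of `boltzmann U` with respect to Lebesgue measure. -/
noncomputable def boltzmannDensity (U : E → ℝ) (z : E × E) : ℝ :=
  Real.exp (-hamiltonian U z) / ∫ w, Real.exp (-hamiltonian U w)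

lemma boltzmannDensity_nonneg (z : E × E) : 0 ≤ boltzmannDensity U z :=
  div_nonneg (Real.exp_pos _).le (integral_nonneg fun _ => (Real.exp_pos _).le)

lemma integral_boltzmann (g : E × E → ℝ) :
    ∫ z, g z ∂(boltzmann U) = ∫ z, boltzmannDensity U z * g z :=
  integral_tilted _ g

lemma integral_boltzmann_eq_div (g : E × E → ℝ) :
    ∫ z, g z ∂(boltzmann U) =
      (∫ z, g z * Real.exp (-hamiltonian U z)) / ∫ z, Real.exp (-hamiltonian U z) := by
  rw [integral_boltzmann, ← integral_div]
  congr with z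
  rw [boltzmannDensity]
  ring

lemma boltzmannMoment_nonneg : 0 ≤ boltzmannMoment U :=
  integral_nonneg fun _ => by positivity

lemma boltzmann_eq_prod (hU : Continuous U) :
    boltzmann U = (volume.tilted fun x => -U x).prod (stdGaussian E) := by
  rw [stdGaussian_eq_tilted, tilted_prod (by fun_prop) (by fun_prop), boltzmann,
    Measure.volume_eq_prod]
  congr with z
  rw [hamiltonian]
  ring



lemma IsMonotoneC11.integrable_one_add_norm_pow_three_mul_exp (hG : IsMonotoneC11 m C₁ G)
    (hm : 0 < m) (hU : ∀ x, HasGradientAt U (G x) x) :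
    Integrable fun z : E × E => (1 + ‖z‖) ^ 3 * Real.exp (-hamiltonian U z) := by
  have hH := continuous_hamiltonian (continuous_of_hasGradientAt hU)
  obtain ⟨β, hβ, hβ4, hβm⟩ : ∃ β : ℝ, 0 < β ∧ β ≤ 1 / 4 ∧ β ≤ m / 8 :=
    ⟨min (1 / 4) (m / 8), by positivity, min_le_left _ _, min_le_right _ _⟩
  set K := ‖G 0‖ ^ 2 / m - U 0
  have hdom := ((integrable_exp_neg_mul_sq_norm (E := E) hβ).mul_prod
    (integrable_exp_neg_mul_sq_norm (E := E) hβ)).const_mul (Real.exp (9 / (4 * β) + K))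
  refine hdom.mono' (by fun_prop) (.of_forall fun z => ?_)
  have hnorm : ‖z‖ ^ 2 ≤ ‖z.1‖ ^ 2 + ‖z.2‖ ^ 2 := by
    rw [Prod.norm_def]
    rcases max_choice ‖z.1‖ ‖z.2‖ with hmax | hmax <;> rw [hmax] <;>
      linarith [sq_nonneg ‖z.1‖, sq_nonneg ‖z.2‖]
  have hpotential := hG.mul_norm_sq_sub_le_potential hm hU z.1
  rw [Real.norm_of_nonneg (by positivity), ← Real.exp_add, ← Real.exp_add]
  calc (1 + ‖z‖) ^ 3 * Real.exp (-hamiltonian U z)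
      ≤ Real.exp (9 / (4 * β) + β * ‖z‖ ^ 2) * Real.exp (-hamiltonian U z) := by
        gcongr
        exact one_add_pow_three_le_exp hβ (norm_nonneg z)
    _ ≤ Real.exp (9 / (4 * β) + K + (-β * ‖z.1‖ ^ 2 + -β * ‖z.2‖ ^ 2)) := by
        rw [← Real.exp_add, Real.exp_le_exp, hamiltonian]
        have h1 := mul_le_mul_of_nonneg_left hnorm hβ.le
        have h2 := mul_le_mul_of_nonneg_right hβ4 (sq_nonneg ‖z.2‖)
        have h3 := mul_le_mul_of_nonneg_right hβm (sq_nonneg ‖z.1‖)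
        linarith

lemma IsMonotoneC11.integrable_exp_neg_hamiltonian (hG : IsMonotoneC11 m C₁ G)
    (hm : 0 < m) (hU : ∀ x, HasGradientAt U (G x) x) :
    Integrable fun z : E × E => Real.exp (-hamiltonian U z) := by
  have hH := continuous_hamiltonian (continuous_of_hasGradientAt hU)
  refine (hG.integrable_one_add_norm_pow_three_mul_exp hm hU).mono' (by fun_prop)
    (.of_forall fun z => ?_)
  rw [Real.norm_of_nonneg (Real.exp_pos _).le]
  exact le_mul_of_one_le_left (Real.exp_pos _).le (one_le_pow₀ (by linarith [norm_nonneg z]))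

lemma IsMonotoneC11.isProbabilityMeasure_boltzmann (hG : IsMonotoneC11 m C₁ G)
    (hm : 0 < m) (hU : ∀ x, HasGradientAt U (G x) x) : IsProbabilityMeasure (boltzmann U) :=
  isProbabilityMeasure_tilted (hG.integrable_exp_neg_hamiltonian hm hU)

lemma IsMonotoneC11.integrable_boltzmannDensity_mul (hG : IsMonotoneC11 m C₁ G)
    (hm : 0 < m) (hU : ∀ x, HasGradientAt U (G x) x) {g : E × E → ℝ}
    (hg : Integrable g (boltzmann U)) : Integrable fun z => boltzmannDensity U z * g z := by
  refine (((integrable_tilted_iff (hG.integrable_exp_neg_hamiltonian hm hU) g).1 hg).div_const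
    (∫ z, Real.exp (-hamiltonian U z))).congr (.of_forall fun z => ?_)
  simp only [boltzmannDensity, smul_eq_mul, div_mul_eq_mul_div]

lemma IsMonotoneC11.integrable_one_add_norm_pow_three (hG : IsMonotoneC11 m C₁ G)
    (hm : 0 < m) (hU : ∀ x, HasGradientAt U (G x) x) :
    Integrable (fun z : E × E => (1 + ‖z‖) ^ 3) (boltzmann U) := by
  rw [boltzmann, integrable_tilted_iff (hG.integrable_exp_neg_hamiltonian hm hU)]
  simpa only [smul_eq_mul, mul_comm] using
    hG.integrable_one_add_norm_pow_three_mul_exp hm hU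

lemma IsMonotoneC11.integrable_boltzmann_of_abs_le (hG : IsMonotoneC11 m C₁ G)
    (hm : 0 < m) (hU : ∀ x, HasGradientAt U (G x) x) {g : E × E → ℝ} {A : ℝ} (hA : 0 ≤ A)
    (hg : Continuous g) (hgA : ∀ z, |g z| ≤ A * (1 + ‖z‖)) : Integrable g (boltzmann U) := by
  refine ((hG.integrable_one_add_norm_pow_three hm hU).const_mul A).mono'
    hg.aestronglyMeasurable (.of_forall fun z => (hgA z).trans ?_)
  gcongr
  exact le_self_pow₀ (by linarith [norm_nonneg z]) three_ne_zero

lemma IsMonotoneC11.integrable_boltzmann_of_lipschitzWith (hG : IsMonotoneC11 m C₁ G)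
    (hm : 0 < m) (hU : ∀ x, HasGradientAt U (G x) x) {g : E × E → ℝ} {K : NNReal}
    (hg : LipschitzWith K g) : Integrable g (boltzmann U) := by
  have := hG.isProbabilityMeasure_boltzmann hm hU
  refine integrable_comp_of_lipschitzWith hg (X := id) ?_
  refine (integrable_norm_iff (by fun_prop)).1 ?_
  refine hG.integrable_boltzmann_of_abs_le hm hU zero_le_one (by fun_prop) fun z => ?_
  rw [abs_norm, id, one_mul]
  exact le_add_of_nonneg_left zero_le_one

end Boltzmann

section NearInvariance

variable {E : Type*} [NormedAddCommGroup E] [InnerProductSpace ℝ E] [FiniteDimensional ℝ E]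
  [MeasurableSpace E] [BorelSpace E] {m C₁ γ h σ : ℝ} {G : E → E} {U : E → ℝ}

/-- The constant in the `O(h²)` bound on how far the symplectic Euler step is from preserving
averages with respect to the Boltzmann measure. -/
noncomputable def invarianceConst (C₁ : ℝ) : ℝ :=
  2 * (2 + 2 * C₁) ^ 4 * (2 * C₁ ^ 2 + C₁)

lemma invarianceConst_nonneg (hC : 0 ≤ C₁) : 0 ≤ invarianceConst C₁ := by
  unfold invarianceConst
  positivity

lemma IsMonotoneC11.abs_boltzmannDensity_sub_le (hG : IsMonotoneC11 m C₁ G)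
    (hU : ∀ x, HasGradientAt U (G x) x) (hC : 0 ≤ C₁) (hh : 0 ≤ h) (hh1 : h ≤ 1) (z : E × E) :
    |boltzmannDensity U z - boltzmannDensity U (symplecticEuler h G z)| ≤
      (2 * C₁ ^ 2 + C₁) * h ^ 2 * (1 + ‖z‖) ^ 2 *
        (boltzmannDensity U z + boltzmannDensity U (symplecticEuler h G z)) := by
  have hZ : 0 ≤ ∫ w, Real.exp (-hamiltonian U w) := integral_nonneg fun _ => (Real.exp_pos _).le
  simp only [boltzmannDensity]
  rw [← sub_div, ← add_div, abs_div, abs_of_nonneg hZ, mul_div_assoc']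
  gcongr
  exact (abs_exp_neg_sub_exp_neg_le _ _).trans
    (by gcongr; exact hG.abs_hamiltonian_symplecticEuler_sub_le hU hC hh hh1 z)

lemma IsMonotoneC11.abs_mul_boltzmannDensity_sub_le (hG : IsMonotoneC11 m C₁ G)
    (hU : ∀ x, HasGradientAt U (G x) x) (hC : 0 ≤ C₁) (hh : 0 ≤ h) (hh1 : h ≤ 1)
    {g : E × E → ℝ} {K : ℝ} (hK : 0 ≤ K) (hgK : ∀ z, |g z| ≤ K * (1 + ‖z‖)) (z : E × E) :
    |boltzmannDensity U z * g (symplecticEuler h G z) -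
        boltzmannDensity U (symplecticEuler h G z) * g (symplecticEuler h G z)| ≤
      (2 + 2 * C₁) ^ 4 * (2 * C₁ ^ 2 + C₁) * K * h ^ 2 *
        (boltzmannDensity U z * (1 + ‖z‖) ^ 3 +
          boltzmannDensity U (symplecticEuler h G z) * (1 + ‖symplecticEuler h G z‖) ^ 3) := by
  set T := 2 + 2 * C₁
  set B := 2 * C₁ ^ 2 + C₁
  set y := symplecticEuler h G z
  have hp := boltzmannDensity_nonneg (U := U) z
  have hp' := boltzmannDensity_nonneg (U := U) y
  have hT1 : 1 ≤ T ^ 3 := one_le_pow₀ (by grind)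
  have hgrow : |g y| ≤ K * (T * (1 + ‖z‖)) :=
    (hgK y).trans (by gcongr; exact hG.one_add_norm_symplecticEuler_le hC hh hh1 z)
  have hback : (1 + ‖z‖) ^ 3 ≤ T ^ 3 * (1 + ‖y‖) ^ 3 := by
    rw [← mul_pow]
    gcongr
    exact hG.one_add_norm_le_symplecticEuler hC hh hh1 z
  rw [← sub_mul, abs_mul]
  calc |boltzmannDensity U z - boltzmannDensity U y| * |g y|
      ≤ B * h ^ 2 * (1 + ‖z‖) ^ 2 * (boltzmannDensity U z + boltzmannDensity U y) *
          (K * (T * (1 + ‖z‖))) := by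
        gcongr
        exact hG.abs_boltzmannDensity_sub_le hU hC hh hh1 z
    _ = T * B * K * h ^ 2 * (boltzmannDensity U z * (1 * (1 + ‖z‖) ^ 3) +
          boltzmannDensity U y * (1 + ‖z‖) ^ 3) := by ring
    _ ≤ T * B * K * h ^ 2 * (boltzmannDensity U z * (T ^ 3 * (1 + ‖z‖) ^ 3) +
          boltzmannDensity U y * (T ^ 3 * (1 + ‖y‖) ^ 3)) := by
        gcongr
    _ = _ := by ring

lemma IsMonotoneC11.integrable_comp_symplecticEuler (hG : IsMonotoneC11 m C₁ G) (hm : 0 < m)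
    (hU : ∀ x, HasGradientAt U (G x) x) (hC : 0 ≤ C₁) (hh : 0 ≤ h) (hh1 : h ≤ 1)
    {g : E × E → ℝ} {K : ℝ} (hK : 0 ≤ K) (hg : Continuous g) (hgK : ∀ z, |g z| ≤ K * (1 + ‖z‖)) :
    Integrable (fun z => g (symplecticEuler h G z)) (boltzmann U) := by
  refine hG.integrable_boltzmann_of_abs_le hm hU (A := K * (2 + 2 * C₁)) (by positivity)
    (hg.comp (continuous_symplecticEuler hG.differentiable.continuous)) fun z => (hgK _).trans ?_
  rw [mul_assoc]
  gcongr
  exact hG.one_add_norm_symplecticEuler_le hC hh hh1 z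

lemma IsMonotoneC11.abs_integral_comp_symplecticEuler_sub_le_of_abs_le
    (hG : IsMonotoneC11 m C₁ G) (hm : 0 < m) (hU : ∀ x, HasGradientAt U (G x) x) (hC : 0 ≤ C₁)
    (hh : 0 ≤ h) (hh1 : h ≤ 1) {g : E × E → ℝ} {K : ℝ} (hK : 0 ≤ K) (hg : Continuous g)
    (hgK : ∀ z, |g z| ≤ K * (1 + ‖z‖)) :
    |∫ z, g (symplecticEuler h G z) ∂(boltzmann U) - ∫ z, g z ∂(boltzmann U)| ≤
      invarianceConst C₁ * K * h ^ 2 * boltzmannMoment U := by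
  set S := symplecticEuler h G
  set p := boltzmannDensity U
  have : Continuous S := continuous_symplecticEuler hG.differentiable.continuous
  have hpc : Continuous p :=
    (continuous_hamiltonian (continuous_of_hasGradientAt hU)).neg.rexp.div_const _
  have hS_vol : MeasurePreserving S volume volume :=
    measurePreserving_symplecticEuler hG.differentiable.continuous
  have hS_int {φ : E × E → ℝ} (hφ : Continuous φ) : ∫ z, φ (S z) = ∫ z, φ z := by
    rw [← integral_map hS_vol.measurable.aemeasurable hφ.aestronglyMeasurable, hS_vol.map_eq]
  have hgS : Integrable (fun z => p z * g (S z)) :=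
    hG.integrable_boltzmannDensity_mul hm hU <|
      hG.integrable_comp_symplecticEuler hm hU hC hh hh1 hK hg hgK
  have hpgS : Integrable (fun z => p (S z) * g (S z)) :=
    hS_vol.integrable_comp_of_integrable <| hG.integrable_boltzmannDensity_mul hm hU <|
      hG.integrable_boltzmann_of_abs_le hm hU hK hg hgK
  have hmoment := hG.integrable_boltzmannDensity_mul hm hU
    (hG.integrable_one_add_norm_pow_three hm hU)
  have hmomentS : Integrable fun z => p (S z) * (1 + ‖S z‖) ^ 3 :=
    hS_vol.integrable_comp_of_integrable hmoment
  -- Volume preservation moves the difference onto the density, which changes by `O(h²)`.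
  rw [integral_boltzmann, integral_boltzmann, ← hS_int (φ := fun z => p z * g z) (by fun_prop),
    ← integral_sub hgS hpgS, ← Real.norm_eq_abs]
  refine (norm_integral_le_of_norm_le ((hmoment.add hmomentS).const_mul _)
    (.of_forall (hG.abs_mul_boltzmannDensity_sub_le hU hC hh hh1 hK hgK))).trans_eq ?_
  rw [integral_const_mul, integral_add' hmoment hmomentS,
    hS_int (φ := fun z => p z * (1 + ‖z‖) ^ 3) (by fun_prop), ← integral_boltzmann,
    ← boltzmannMoment, invarianceConst]
  ring

lemma IsMonotoneC11.abs_integral_comp_symplecticEuler_sub_le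
    (hG : IsMonotoneC11 m C₁ G) (hm : 0 < m) (hU : ∀ x, HasGradientAt U (G x) x) (hC : 0 ≤ C₁)
    (hh : 0 ≤ h) (hh1 : h ≤ 1) {g : E × E → ℝ} {K : NNReal} (hg : LipschitzWith K g) :
    |∫ z, g (symplecticEuler h G z) ∂(boltzmann U) - ∫ z, g z ∂(boltzmann U)| ≤
      invarianceConst C₁ * K * h ^ 2 * boltzmannMoment U := by
  have := hG.isProbabilityMeasure_boltzmann hm hU
  have hgrowth (z : E × E) : |g z - g 0| ≤ K * (1 + ‖z‖) := by
    have hz := hg.dist_le_mul z 0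
    rw [dist_zero_right, Real.dist_eq] at hz
    exact hz.trans (by gcongr; linarith)
  have hcont : Continuous fun z => g z - g 0 := hg.continuous.sub continuous_const
  have hgS : Integrable (fun z => g (symplecticEuler h G z)) (boltzmann U) :=
    ((hG.integrable_comp_symplecticEuler hm hU hC hh hh1 K.coe_nonneg hcont hgrowth).add
      (integrable_const (g 0))).congr (.of_forall fun z => sub_add_cancel _ _)
  have hcentred := hG.abs_integral_comp_symplecticEuler_sub_le_of_abs_le hm hU hC hh hh1
    K.coe_nonneg hcont hgrowth
  rwa [integral_sub hgS (integrable_const _), integral_sub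
    (hG.integrable_boltzmann_of_lipschitzWith hm hU hg) (integrable_const _),
    sub_sub_sub_cancel_right] at hcentred

/-- The Ornstein–Uhlenbeck step of the velocity: averaging `g` over `v ↦ η v + σ ξ` with `ξ`
standard Gaussian. -/
noncomputable def ouOp (η σ : ℝ) (g : E × E → ℝ) (z : E × E) : ℝ :=
  ∫ ξ, g (z.1, η • z.2 + σ • ξ) ∂(stdGaussian E)

lemma integrable_comp_ouStep {g : E × E → ℝ} {K : NNReal} (hg : LipschitzWith K g) (η σ : ℝ)
    (z : E × E) : Integrable (fun ξ => g (z.1, η • z.2 + σ • ξ)) (stdGaussian E) := by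
  simpa using integrable_comp_add_noise (ν := stdGaussian E)
    ((IsGaussian.memLp_id _ 1 (by simp)).integrable le_rfl) hg (z.1, η • z.2) σ

lemma lipschitzWith_ouOp {η : ℝ} (hη : |η| ≤ 1) {g : E × E → ℝ} {K : NNReal}
    (hg : LipschitzWith K g) : LipschitzWith K (ouOp η σ g) := .of_dist_le_mul fun z z' => by
  have hstep (ξ : E) : ‖g (z.1, η • z.2 + σ • ξ) - g (z'.1, η • z'.2 + σ • ξ)‖ ≤
      K * dist z z' := by
    refine (hg.dist_le_mul _ _).trans ?_
    gcongr
    rw [Prod.dist_eq, Prod.dist_eq, dist_add_right, dist_smul₀, Real.norm_eq_abs]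
    exact max_le_max le_rfl (mul_le_of_le_one_left dist_nonneg hη)
  rw [dist_eq_norm, ouOp, ouOp,
    ← integral_sub (integrable_comp_ouStep hg η σ z) (integrable_comp_ouStep hg η σ z')]
  exact (norm_integral_le_of_norm_le_const (.of_forall hstep)).trans_eq
    (by rw [probReal_univ, mul_one])

lemma IsMonotoneC11.integral_ouOp {η : ℝ} (hG : IsMonotoneC11 m C₁ G) (hm : 0 < m)
    (hU : ∀ x, HasGradientAt U (G x) x) (hησ : η ^ 2 + σ ^ 2 = 1) {g : E × E → ℝ} {K : NNReal}
    (hg : LipschitzWith K g) :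
    ∫ z, ouOp η σ g z ∂(boltzmann U) = ∫ z, g z ∂(boltzmann U) := by
  have hη : |η| ≤ 1 := by
    rw [← sq_le_one_iff_abs_le_one]
    linarith [sq_nonneg σ]
  have hint := hG.integrable_boltzmann_of_lipschitzWith hm hU hg
  have hint' := hG.integrable_boltzmann_of_lipschitzWith hm hU (lipschitzWith_ouOp (σ := σ) hη hg)
  rw [boltzmann_eq_prod (continuous_of_hasGradientAt hU)] at hint hint' ⊢
  rw [integral_prod _ hint, integral_prod _ hint']
  congr with x
  have hx : Integrable (fun v => g (x, v)) (stdGaussian E) := by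
    simpa using integrable_comp_ouStep hg 1 1 (x, 0)
  exact integral_integral_smul_add_smul_stdGaussian hησ
    (hg.continuous.comp (Continuous.prodMk_right x)) hx

omit [BorelSpace E] in
lemma refOp_eq_ouOp_symplecticEuler (g : E × E → ℝ) (z : E × E) :
    refOp (stdGaussian E) γ h σ G g z = ouOp (1 - γ * h) σ g (symplecticEuler h G z) := by
  simp only [refOp, ouOp, dampedEuler, symplecticEuler, Prod.mk_add_mk, add_zero]

lemma IsMonotoneC11.abs_integral_refOp_sub_le (hG : IsMonotoneC11 m C₁ G)
    (hU : ∀ x, HasGradientAt U (G x) x) (hp : Admissible γ m C₁ h)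
    (hσ : σ ^ 2 = 2 * γ * h - γ ^ 2 * h ^ 2) {g : E × E → ℝ} {K : NNReal}
    (hg : LipschitzWith K g) :
    |∫ z, refOp (stdGaussian E) γ h σ G g z ∂(boltzmann U) - ∫ z, g z ∂(boltzmann U)| ≤
      invarianceConst C₁ * K * h ^ 2 * boltzmannMoment U := by
  have hησ : (1 - γ * h) ^ 2 + σ ^ 2 = 1 := by rw [hσ]; ring
  have hη : |1 - γ * h| ≤ 1 := by
    rw [← sq_le_one_iff_abs_le_one]
    linarith [sq_nonneg σ]
  simp only [refOp_eq_ouOp_symplecticEuler]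
  rw [← hG.integral_ouOp hp.m_pos hU hησ hg]
  exact hG.abs_integral_comp_symplecticEuler_sub_le hp.m_pos hU hp.C₁_pos.le hp.h_pos.le
    hp.h_le_one (lipschitzWith_ouOp hη hg)

variable {L M : ℝ} {f : E × E → ℝ}

lemma IsMonotoneC11.abs_integral_refOp_iterate_sub_le (hG : IsMonotoneC11 m C₁ G)
    (hU : ∀ x, HasGradientAt U (G x) x) (hp : Admissible γ m C₁ h)
    (hσ : σ ^ 2 = 2 * γ * h - γ ^ 2 * h ^ 2) (hL : 0 ≤ L) (hM : 0 ≤ M)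
    (hLM : 2 * (2 / γ * C₁ * L) ≤ m / (32 * γ) * M) (hf : TwistedC11 (2 / γ) L M f) (k : ℕ) :
    |∫ z, (refOp (stdGaussian E) γ h σ G)^[k] f z ∂(boltzmann U) - ∫ z, f z ∂(boltzmann U)| ≤
      32 * γ / m * (L * (2 + 2 / γ)) * invarianceConst C₁ * boltzmannMoment U * h := by
  have hγ := hp.γ_pos
  have hm := hp.m_pos
  have hh := hp.h_pos
  set A := 32 * γ / m * (L * (2 + 2 / γ)) * invarianceConst C₁ * boltzmannMoment U * h
  have hA : 0 ≤ A := by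
    have := invarianceConst_nonneg hp.C₁_pos.le
    have := boltzmannMoment_nonneg (U := U)
    positivity
  have hr := hp.contractionRate_nonneg
  have hgeom : |∫ z, (refOp (stdGaussian E) γ h σ G)^[k] f z ∂(boltzmann U) -
      ∫ z, f z ∂(boltzmann U)| ≤ (1 - contractionRate γ m h ^ k) * A := by
    induction k with
    | zero => simp
    | succ k ih =>
      have hreg := TwistedC11.refOp_iterate (ν := stdGaussian E) (σ := σ)
        ((IsGaussian.memLp_id _ 1 (by simp)).integrable le_rfl) hp hG hL hM hLM hf k
      have hstep := hG.abs_integral_refOp_sub_le hU hp hσ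
        (hreg.lipschitzWith (by positivity) (by positivity))
      rw [Real.coe_toNNReal _ (by positivity)] at hstep
      rw [Function.iterate_succ_apply']
      refine (abs_sub_le _ _ _).trans ((add_le_add hstep ih).trans_eq ?_)
      have hh2 : h ^ 2 = (1 - contractionRate γ m h) * (32 * γ / m) * h := by
        unfold contractionRate
        field_simp
        ring
      rw [hh2, pow_succ]
      ring
  exact hgeom.trans (mul_le_of_le_one_left hA (by linarith [pow_nonneg hr k]))

lemma IsMonotoneC11.abs_sub_integral_boltzmann_le (hG : IsMonotoneC11 m C₁ G) (hm : 0 < m)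
    (hU : ∀ x, HasGradientAt U (G x) x) {g : E × E → ℝ} {K : NNReal}
    (hg : LipschitzWith K g) (z : E × E) :
    |g z - ∫ w, g w ∂(boltzmann U)| ≤ K * boltzmannMoment U * (1 + ‖z‖) := by
  have := hG.isProbabilityMeasure_boltzmann hm hU
  have hgint := hG.integrable_boltzmann_of_lipschitzWith hm hU hg
  have hpt (w : E × E) : ‖g z - g w‖ ≤ K * (1 + ‖z‖) * (1 + ‖w‖) ^ 3 := by
    calc ‖g z - g w‖ ≤ K * ‖z - w‖ := by simpa only [dist_eq_norm] using hg.dist_le_mul z w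
      _ ≤ K * ((1 + ‖z‖) * (1 + ‖w‖)) := by
          gcongr
          linarith [_root_.norm_sub_le z w, mul_nonneg (norm_nonneg z) (norm_nonneg w)]
      _ ≤ K * ((1 + ‖z‖) * (1 + ‖w‖) ^ 3) := by
          gcongr
          exact le_self_pow₀ (by linarith [norm_nonneg w]) three_ne_zero
      _ = K * (1 + ‖z‖) * (1 + ‖w‖) ^ 3 := by ring
  have hconst : g z = ∫ _, g z ∂(boltzmann U) := by simp
  rw [hconst, ← integral_sub (integrable_const _) hgint, ← Real.norm_eq_abs]
  refine (norm_integral_le_of_norm_le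
    ((hG.integrable_one_add_norm_pow_three hm hU).const_mul _) (.of_forall hpt)).trans_eq ?_
  rw [integral_const_mul, boltzmannMoment]
  ring

lemma IsMonotoneC11.exists_abs_refOp_iterate_sub_integral_le (hG : IsMonotoneC11 m C₁ G)
    (hU : ∀ x, HasGradientAt U (G x) x) (hp : Admissible γ m C₁ h)
    (hσ : σ ^ 2 = 2 * γ * h - γ ^ 2 * h ^ 2) (hL : 0 ≤ L) (hM : 0 ≤ M)
    (hLM : 2 * (2 / γ * C₁ * L) ≤ m / (32 * γ) * M) (hf : TwistedC11 (2 / γ) L M f) :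
    ∃ k : ℕ, ∀ z, |(refOp (stdGaussian E) γ h σ G)^[k] f z - ∫ w, f w ∂(boltzmann U)| ≤
      L * (2 + 2 / γ) * (1 + 32 * γ / m * invarianceConst C₁) * boltzmannMoment U * h *
        (1 + ‖z‖) := by
  have hγ := hp.γ_pos
  have hm := hp.m_pos
  have hh := hp.h_pos
  have hr := hp.contractionRate_nonneg
  have hI := invarianceConst_nonneg hp.C₁_pos.le
  have hB := boltzmannMoment_nonneg (U := U)
  obtain ⟨k, hk⟩ := exists_pow_lt_of_lt_one hh hp.contractionRate_lt_one
  refine ⟨k, fun z => ?_⟩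
  have hreg := TwistedC11.refOp_iterate (ν := stdGaussian E) (σ := σ)
    ((IsGaussian.memLp_id _ 1 (by simp)).integrable le_rfl) hp hG hL hM hLM hf k
  have hmixing := hG.abs_sub_integral_boltzmann_le hm hU
    (hreg.lipschitzWith (by positivity) (by positivity)) z
  have hbias := hG.abs_integral_refOp_iterate_sub_le hU hp hσ hL hM hLM hf k
  rw [Real.coe_toNNReal _ (by positivity)] at hmixing
  set B := boltzmannMoment U
  set I := invarianceConst C₁
  calc _ ≤ contractionRate γ m h ^ k * L * (2 + 2 / γ) * B * (1 + ‖z‖) +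
        32 * γ / m * (L * (2 + 2 / γ)) * I * B * h :=
        (abs_sub_le _ _ _).trans (add_le_add hmixing hbias)
    _ ≤ h * L * (2 + 2 / γ) * B * (1 + ‖z‖) +
        32 * γ / m * (L * (2 + 2 / γ)) * I * B * h * (1 + ‖z‖) := by
        refine add_le_add (by gcongr) (le_mul_of_one_le_right (by positivity) ?_)
        exact le_add_of_nonneg_right (norm_nonneg z)
    _ = _ := by ring

end NearInvariance

section Chain

variable {E : Type*} [NormedAddCommGroup E] [InnerProductSpace ℝ E] [MeasurableSpace E]
  {Ω' : Type*} [MeasurableSpace Ω'] {Ω : Type*} {mΩ : MeasurableSpace Ω} {P : Measure Ω}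
  {m C₀ C₁ γ h L M : ℝ} {G : E → E} {g : E × E → ℝ} {ν : Measure E} {μ : Measure Ω'}
  {b : E → Ω' → E} {ℱ : Filtration ℕ mΩ} {Z : ℕ → Ω → E × E} {ζ : ℕ → Ω → E × Ω'}

/-- `Z` is the stochastic gradient Euler–Maruyama chain driven by the innovations `ζ n`: these have
law `ν.prod μ`, and `ζ n` is independent of the past `ℱ n`. -/
structure IsStochasticGradientChain (P : Measure Ω) (ν : Measure E) (μ : Measure Ω') (γ h : ℝ)
    (b : E → Ω' → E) (ℱ : Filtration ℕ mΩ) (Z : ℕ → Ω → E × E) (ζ : ℕ → Ω → E × Ω') : Prop where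
  measurable_zero : Measurable[ℱ 0] (Z 0)
  measurable_innovation : ∀ n, Measurable[ℱ (n + 1)] (ζ n)
  indep : ∀ n, Indep (ℱ n) (MeasurableSpace.comap (ζ n) inferInstance) P
  map_innovation : ∀ n, P.map (ζ n) = ν.prod μ
  succ_eq : ∀ n ω, Z (n + 1) ω = sgStep γ h b (Z n ω) (ζ n ω)

namespace IsStochasticGradientChain

lemma lintegral_comp_prodMk [IsFiniteMeasure P] [SFinite ν] [SFinite μ]
    (hZ : IsStochasticGradientChain P ν μ γ h b ℱ Z ζ)
    {T' : Type*} [MeasurableSpace T'] {n : ℕ} {T : Ω → T'} (hT : Measurable[ℱ n] T)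
    {Φ : T' × (E × Ω') → ℝ≥0∞} (hΦ : Measurable Φ) :
    ∫⁻ ω, Φ (T ω, ζ n ω) ∂P = ∫⁻ ω, ∫⁻ p, Φ (T ω, p) ∂(ν.prod μ) ∂P := by
  have hTm : Measurable T := hT.mono (ℱ.le n) le_rfl
  have hζm : Measurable (ζ n) := (hZ.measurable_innovation n).mono (ℱ.le (n + 1)) le_rfl
  have hind : IndepFun T (ζ n) P :=
    (IndepFun_iff_Indep _ _ _).2 (indep_of_indep_of_le_left (hZ.indep n) hT.comap_le)
  rw [← lintegral_map hΦ (hTm.prodMk hζm),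
    hind.map_prod_eq_prod_map_map hTm.aemeasurable hζm.aemeasurable, hZ.map_innovation n,
    lintegral_prod _ hΦ.aemeasurable, lintegral_map hΦ.lintegral_prod_right' hTm]

variable [BorelSpace E] [SecondCountableTopology E]

lemma measurable_filtration (hZ : IsStochasticGradientChain P ν μ γ h b ℱ Z ζ)
    (hb : IsStochasticGradient m C₀ C₁ μ G b) (n : ℕ) : Measurable[ℱ n] (Z n) := by
  induction n with
  | zero => exact hZ.measurable_zero
  | succ n ih =>
    rw [funext (hZ.succ_eq n)]
    exact hb.measurable_sgStep.comp
      ((ih.mono (ℱ.mono n.le_succ) le_rfl).prodMk (hZ.measurable_innovation n))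

lemma measurable (hZ : IsStochasticGradientChain P ν μ γ h b ℱ Z ζ)
    (hb : IsStochasticGradient m C₀ C₁ μ G b) (n : ℕ) : Measurable (Z n) :=
  (hZ.measurable_filtration hb n).mono (ℱ.le n) le_rfl

end IsStochasticGradientChain

section Moments

lemma le_add_of_affine_recursion {a : ℕ → ℝ≥0∞} {θ c : ℝ} (hθ : 0 ≤ θ) (hθ1 : θ ≤ 1)
    (hc : 0 ≤ c)
    (ha : ∀ n, a (n + 1) ≤ ENNReal.ofReal (1 - θ) * a n + ENNReal.ofReal (θ * c)) (n : ℕ) :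
    a n ≤ a 0 + ENNReal.ofReal c := by
  induction n with
  | zero => exact le_self_add
  | succ n ih =>
    calc a (n + 1) ≤ ENNReal.ofReal (1 - θ) * (a 0 + ENNReal.ofReal c) +
          ENNReal.ofReal (θ * c) := (ha n).trans (by gcongr)
      _ = ENNReal.ofReal (1 - θ) * a 0 + ENNReal.ofReal c := by
        rw [mul_add, add_assoc, ← ENNReal.ofReal_mul (by linarith),
          ← ENNReal.ofReal_add (mul_nonneg (by linarith) hc) (by positivity)]
        ring_nf
      _ ≤ a 0 + ENNReal.ofReal c := by
        gcongr
        exact mul_le_of_le_one_left' (ENNReal.ofReal_le_one.2 (by linarith))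

omit [InnerProductSpace ℝ E] in
lemma lyapunovConst_nonneg (hp : Admissible γ m C₁ h) (hC₀ : 0 ≤ C₀) :
    0 ≤ lyapunovConst ν γ m C₀ := by
  have := hp.γ_pos
  have := hp.m_pos
  unfold lyapunovConst squaredLyapunovConst
  positivity

variable [BorelSpace E] [SecondCountableTopology E]

lemma measurable_twistedNorm (c : ℝ) : Measurable (twistedNorm c : E × E → ℝ) := by
  unfold twistedNorm
  fun_prop

variable [CompleteSpace E] [IsProbabilityMeasure ν] [IsProbabilityMeasure μ]
  [IsProbabilityMeasure P]

lemma IsStochasticGradientChain.lintegral_twistedNorm_pow_four_le (hν : MemLp id 4 ν)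
    (hν0 : ∫ ξ, ξ ∂ν = 0) (hp : Admissible γ m C₁ h) (hC₀ : 0 ≤ C₀)
    (hb : IsStochasticGradient m C₀ C₁ μ G b)
    (hZ : IsStochasticGradientChain P ν μ γ h b ℱ Z ζ) (n : ℕ) :
    ∫⁻ ω, ENNReal.ofReal (twistedNorm (2 / γ) (Z n ω) ^ 4) ∂P ≤
      ∫⁻ ω, ENNReal.ofReal (twistedNorm (2 / γ) (Z 0 ω) ^ 4) ∂P +
        ENNReal.ofReal (lyapunovConst ν γ m C₀ / (m / (4 * γ) / 2)) := by
  have hγ := hp.γ_pos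
  have hm := hp.m_pos
  have hh := hp.h_pos
  have hR : 0 ≤ lyapunovConst ν γ m C₀ := lyapunovConst_nonneg hp hC₀
  set κ := m / (4 * γ) / 2 with hκ
  have hκ0 : 0 < κ := by positivity
  have hκh : κ * h ≤ 1 := by
    have : κ ≤ γ / 8 := by
      rw [hκ, div_div, div_le_iff₀ (by positivity)]
      nlinarith [hp.m_le_sq]
    linarith [mul_le_mul_of_nonneg_right this hh.le, hp.γh_le_half]
  refine le_add_of_affine_recursion
    (a := fun n => ∫⁻ ω, ENNReal.ofReal (twistedNorm (2 / γ) (Z n ω) ^ 4) ∂P)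
    (by positivity : 0 ≤ κ * h) hκh (by positivity) (fun n => ?_) n
  calc ∫⁻ ω, ENNReal.ofReal (twistedNorm (2 / γ) (Z (n + 1) ω) ^ 4) ∂P
      = ∫⁻ ω, ∫⁻ p, ENNReal.ofReal (twistedNorm (2 / γ) (sgStep γ h b (Z n ω) p) ^ 4)
          ∂(ν.prod μ) ∂P := by
        simp only [hZ.succ_eq]
        exact hZ.lintegral_comp_prodMk (hZ.measurable_filtration hb n)
          (Φ := fun q => ENNReal.ofReal (twistedNorm (2 / γ) (sgStep γ h b q.1 q.2) ^ 4))
          (((measurable_twistedNorm _).comp hb.measurable_sgStep).pow_const 4).ennreal_ofReal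
    _ ≤ ∫⁻ ω, (ENNReal.ofReal (1 - κ * h) * ENNReal.ofReal (twistedNorm (2 / γ) (Z n ω) ^ 4) +
          ENNReal.ofReal (κ * h * (lyapunovConst ν γ m C₀ / κ))) ∂P := by
        refine lintegral_mono fun ω =>
          (hb.lintegral_twistedNorm_sgStep_le hν hν0 hp hC₀ (Z n ω)).trans_eq ?_
        rw [← ENNReal.ofReal_mul (by linarith), ← ENNReal.ofReal_add
          (mul_nonneg (by linarith) (pow_nonneg (twistedNorm_nonneg _ _) 4)) (by positivity)]
        congr 2
        field_simp
    _ = _ := by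
        rw [lintegral_add_right _ measurable_const,
          lintegral_const_mul' _ _ ENNReal.ofReal_ne_top, lintegral_const, measure_univ, mul_one]

/-- The factor by which the fourth moments of the chain exceed the initial one, uniformly in
time. -/
noncomputable def momentConst (ν : Measure E) (γ m C₀ : ℝ) : ℝ :=
  8 + 8 * (1 + γ) ^ 4 * ((2 + 2 / γ) ^ 4 + lyapunovConst ν γ m C₀ / (m / (4 * γ) / 2))

lemma IsStochasticGradientChain.lintegral_one_add_norm_pow_four_le (hν : MemLp id 4 ν)
    (hν0 : ∫ ξ, ξ ∂ν = 0) (hp : Admissible γ m C₁ h) (hC₀ : 0 ≤ C₀)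
    (hb : IsStochasticGradient m C₀ C₁ μ G b)
    (hZ : IsStochasticGradientChain P ν μ γ h b ℱ Z ζ) (n : ℕ) :
    ∫⁻ ω, ENNReal.ofReal ((1 + ‖Z n ω‖) ^ 4) ∂P ≤ ENNReal.ofReal (momentConst ν γ m C₀) *
      ∫⁻ ω, ENNReal.ofReal ((‖(Z 0 ω).1‖ + ‖(Z 0 ω).2‖ + 1) ^ 4) ∂P := by
  have hγ := hp.γ_pos
  have hm := hp.m_pos
  have hR : 0 ≤ lyapunovConst ν γ m C₀ := lyapunovConst_nonneg hp hC₀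
  set I := ∫⁻ ω, ENNReal.ofReal ((‖(Z 0 ω).1‖ + ‖(Z 0 ω).2‖ + 1) ^ 4) ∂P
  set V := fun n => ∫⁻ ω, ENNReal.ofReal (twistedNorm (2 / γ) (Z n ω) ^ 4) ∂P
  set R := lyapunovConst ν γ m C₀ / (m / (4 * γ) / 2)
  have hI : 1 ≤ I := by
    calc (1 : ℝ≥0∞) = ∫⁻ _, 1 ∂P := by rw [lintegral_one, measure_univ]
      _ ≤ I := lintegral_mono fun ω =>
        ENNReal.one_le_ofReal.2 (one_le_pow₀ (le_add_of_nonneg_left (by positivity)))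
  have hV0 : V 0 ≤ ENNReal.ofReal ((2 + 2 / γ) ^ 4) * I := by
    rw [← lintegral_const_mul' _ _ ENNReal.ofReal_ne_top]
    refine lintegral_mono fun ω => ?_
    rw [← ENNReal.ofReal_mul (by positivity)]
    exact ENNReal.ofReal_le_ofReal (twistedNorm_pow_four_le hγ _)
  calc ∫⁻ ω, ENNReal.ofReal ((1 + ‖Z n ω‖) ^ 4) ∂P
      ≤ ∫⁻ ω, (ENNReal.ofReal 8 + ENNReal.ofReal (8 * (1 + γ) ^ 4) *
          ENNReal.ofReal (twistedNorm (2 / γ) (Z n ω) ^ 4)) ∂P := by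
        refine lintegral_mono fun ω => ?_
        rw [← ENNReal.ofReal_mul (by positivity), ← ENNReal.ofReal_add (by norm_num)
          (mul_nonneg (by positivity) (pow_nonneg (twistedNorm_nonneg _ _) 4))]
        exact ENNReal.ofReal_le_ofReal (one_add_norm_pow_four_le hγ _)
    _ = ENNReal.ofReal 8 + ENNReal.ofReal (8 * (1 + γ) ^ 4) * V n := by
        rw [lintegral_add_left measurable_const, lintegral_const_mul' _ _ ENNReal.ofReal_ne_top,
          lintegral_const, measure_univ, mul_one]
    _ ≤ ENNReal.ofReal 8 * I + ENNReal.ofReal (8 * (1 + γ) ^ 4) *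
          (ENNReal.ofReal ((2 + 2 / γ) ^ 4) * I + ENNReal.ofReal R * I) := by
        gcongr
        · exact le_mul_of_one_le_right' hI
        · exact (hZ.lintegral_twistedNorm_pow_four_le hν hν0 hp hC₀ hb n).trans
            (add_le_add hV0 (le_mul_of_one_le_right' hI))
    _ = _ := by
        rw [momentConst, ENNReal.ofReal_add (by norm_num) (by positivity),
          ENNReal.ofReal_mul (q := (2 + 2 / γ) ^ 4 + R) (by positivity),
          ENNReal.ofReal_add (by positivity) (by positivity)]
        ring

end Moments

section Martingale

/-- The martingale part of `g (Z n)`, the sum of the increments `g (Z (k + 1))` centred by their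
conditional expectation `chainOp ν μ γ h b g (Z k)` given `ℱ k`. -/
noncomputable def martingalePart (ν : Measure E) (μ : Measure Ω') (γ h : ℝ) (b : E → Ω' → E)
    (g : E × E → ℝ) (Z : ℕ → Ω → E × E) (n : ℕ) (ω : Ω) : ℝ :=
  ∑ k ∈ Finset.range n, (g (Z (k + 1) ω) - chainOp ν μ γ h b g (Z k ω))

omit [InnerProductSpace ℝ E] in
lemma martingaleConst_nonneg (hγ : 0 ≤ γ) : 0 ≤ martingaleConst ν γ C₁ L := by
  unfold martingaleConst
  positivity

variable [BorelSpace E] [SecondCountableTopology E] [IsProbabilityMeasure ν]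
  [IsProbabilityMeasure μ]

lemma IsStochasticGradient.measurable_chainOp (hb : IsStochasticGradient m C₀ C₁ μ G b)
    (hg : Measurable g) : Measurable (chainOp ν μ γ h b g) :=
  (hg.comp hb.measurable_sgStep).stronglyMeasurable.integral_prod_right'.measurable

lemma IsStochasticGradientChain.measurable_martingalePart
    (hb : IsStochasticGradient m C₀ C₁ μ G b) (hg : Measurable g)
    (hZ : IsStochasticGradientChain P ν μ γ h b ℱ Z ζ) (n : ℕ) :
    Measurable[ℱ n] (martingalePart ν μ γ h b g Z n) := by
  unfold martingalePart
  refine Finset.measurable_fun_sum _ fun k hk => ?_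
  have hk' := Finset.mem_range.1 hk
  exact (hg.comp ((hZ.measurable_filtration hb (k + 1)).mono (ℱ.mono hk') le_rfl)).sub
    ((hb.measurable_chainOp hg).comp
      ((hZ.measurable_filtration hb k).mono (ℱ.mono hk'.le) le_rfl))

variable [IsProbabilityMeasure P]

lemma IsStochasticGradientChain.lintegral_martingalePart_succ_sq_le (hp : Admissible γ m C₁ h)
    (hG : IsMonotoneC11 m C₁ G) (hb : IsStochasticGradient m C₀ C₁ μ G b) (hν : MemLp id 2 ν)
    (hL : 0 ≤ L) (hg : TwistedC11 (2 / γ) L M g)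
    (hZ : IsStochasticGradientChain P ν μ γ h b ℱ Z ζ) (n : ℕ) :
    ∫⁻ ω, ENNReal.ofReal (martingalePart ν μ γ h b g Z (n + 1) ω ^ 2) ∂P ≤
      ∫⁻ ω, ENNReal.ofReal (martingalePart ν μ γ h b g Z n ω ^ 2) ∂P +
        ENNReal.ofReal (martingaleConst ν γ C₁ L * h) *
          ∫⁻ ω, ENNReal.ofReal ((1 + ‖Z n ω‖) ^ 2) ∂P := by
  have hgm : Measurable g := hg.differentiable.continuous.measurable
  have hc : 0 ≤ martingaleConst ν γ C₁ L * h :=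
    mul_nonneg (martingaleConst_nonneg hp.γ_pos.le) hp.h_pos.le
  have hMart := hZ.measurable_martingalePart hb hgm n
  have hΦ : Measurable fun q : ((E × E) × ℝ) × (E × Ω') => ENNReal.ofReal
      ((q.1.2 + (g (sgStep γ h b q.1.1 q.2) - chainOp ν μ γ h b g q.1.1)) ^ 2) := by
    have hstep : Measurable fun q : ((E × E) × ℝ) × (E × Ω') => g (sgStep γ h b q.1.1 q.2) :=
      hgm.comp (hb.measurable_sgStep.comp
        ((measurable_fst.comp measurable_fst).prodMk measurable_snd))
    exact (((measurable_snd.comp measurable_fst).add (hstep.sub ((hb.measurable_chainOp hgm).comp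
      (measurable_fst.comp measurable_fst)))).pow_const 2).ennreal_ofReal
  calc _ = ∫⁻ ω, ENNReal.ofReal ((martingalePart ν μ γ h b g Z n ω +
          (g (sgStep γ h b (Z n ω) (ζ n ω)) - chainOp ν μ γ h b g (Z n ω))) ^ 2) ∂P := by
        simp only [martingalePart, Finset.sum_range_succ, ← hZ.succ_eq]
    _ = ∫⁻ ω, ∫⁻ p, ENNReal.ofReal ((martingalePart ν μ γ h b g Z n ω +
          (g (sgStep γ h b (Z n ω) p) - chainOp ν μ γ h b g (Z n ω))) ^ 2) ∂(ν.prod μ) ∂P :=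
        hZ.lintegral_comp_prodMk ((hZ.measurable_filtration hb n).prodMk hMart) hΦ
    _ ≤ ∫⁻ ω, (ENNReal.ofReal (martingalePart ν μ γ h b g Z n ω ^ 2) +
          ENNReal.ofReal (martingaleConst ν γ C₁ L * h) * ENNReal.ofReal ((1 + ‖Z n ω‖) ^ 2))
            ∂P := by
        refine lintegral_mono fun ω =>
          (hb.lintegral_add_increment_sq_le hp hG hν hL hg (Z n ω) _).trans_eq ?_
        rw [← ENNReal.ofReal_mul hc, ← ENNReal.ofReal_add (by positivity) (by positivity)]
    _ = _ := by
        rw [lintegral_add_left ((hMart.mono (ℱ.le n) le_rfl).pow_const 2).ennreal_ofReal,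
          lintegral_const_mul' _ _ ENNReal.ofReal_ne_top]

lemma IsStochasticGradientChain.lintegral_martingalePart_sq_le (hp : Admissible γ m C₁ h)
    (hG : IsMonotoneC11 m C₁ G) (hb : IsStochasticGradient m C₀ C₁ μ G b) (hν : MemLp id 2 ν)
    (hL : 0 ≤ L) (hg : TwistedC11 (2 / γ) L M g)
    (hZ : IsStochasticGradientChain P ν μ γ h b ℱ Z ζ) {S : ℝ≥0∞}
    (hS : ∀ n, ∫⁻ ω, ENNReal.ofReal ((1 + ‖Z n ω‖) ^ 2) ∂P ≤ S) (n : ℕ) :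
    ∫⁻ ω, ENNReal.ofReal (martingalePart ν μ γ h b g Z n ω ^ 2) ∂P ≤
      n * (ENNReal.ofReal (martingaleConst ν γ C₁ L * h) * S) := by
  induction n with
  | zero => simp [martingalePart]
  | succ n ih =>
    calc _ ≤ _ := hZ.lintegral_martingalePart_succ_sq_le hp hG hb hν hL hg n
      _ ≤ n * (ENNReal.ofReal (martingaleConst ν γ C₁ L * h) * S) +
          ENNReal.ofReal (martingaleConst ν γ C₁ L * h) * S := by
        gcongr
        exact hS n
      _ = _ := by
        push_cast
        ring

end Martingale

end Chain

section ApproximatePoisson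

variable {α : Type*} {f φ ψ w : α → ℝ} {c h A ε : ℝ}

lemma abs_average_sub_le_of_approx_poisson (hh : 0 < h)
    (hφ : ∀ y z, |φ y - φ z| ≤ A * (w y + w z))
    (hpoisson : ∀ z, |f z - c - (φ z - ψ z) / h| ≤ ε * w z) (z : ℕ → α) {N : ℕ} (hN : 1 ≤ N) :
    |(N : ℝ)⁻¹ * ∑ n ∈ Finset.range N, f (z n) - c| ≤
      (N * h)⁻¹ * (A * (w (z 0) + w (z N))) +
        (N * h)⁻¹ * |∑ n ∈ Finset.range N, (φ (z (n + 1)) - ψ (z n))| +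
        ε * ((N : ℝ)⁻¹ * ∑ n ∈ Finset.range N, w (z n)) := by
  have hN0 : (0 : ℝ) < N := by exact_mod_cast hN
  set Mart := ∑ n ∈ Finset.range N, (φ (z (n + 1)) - ψ (z n)) with hMart
  set r : α → ℝ := fun y => f y - c - (φ y - ψ y) / h with hr
  have hdecomp : (N : ℝ)⁻¹ * ∑ n ∈ Finset.range N, f (z n) - c =
      (N * h)⁻¹ * (φ (z 0) - φ (z N)) + (N * h)⁻¹ * Mart +
        (N : ℝ)⁻¹ * ∑ n ∈ Finset.range N, r (z n) := by
    have hsplit (n : ℕ) : f (z n) = c + r (z n) +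
        ((φ (z n) - φ (z (n + 1))) / h + (φ (z (n + 1)) - ψ (z n)) / h) := by
      rw [hr]
      ring
    simp only [hsplit, Finset.sum_add_distrib, ← Finset.sum_div, Finset.sum_range_sub', ← hMart,
      Finset.sum_const, Finset.card_range, nsmul_eq_mul]
    field_simp
    ring
  have hremainder : |∑ n ∈ Finset.range N, r (z n)| ≤ ε * ∑ n ∈ Finset.range N, w (z n) := by
    rw [Finset.mul_sum]
    exact (Finset.abs_sum_le_sum_abs _ _).trans (Finset.sum_le_sum fun n _ => hpoisson _)
  rw [hdecomp]
  refine (abs_add_three _ _ _).trans ?_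
  rw [abs_mul, abs_mul, abs_mul, abs_of_pos (inv_pos.2 (mul_pos hN0 hh)),
    abs_of_pos (inv_pos.2 hN0), mul_left_comm ε]
  gcongr
  exact hφ _ _

lemma eLpNorm_average_le {β : Type*} [MeasurableSpace β] {ρ : Measure β} {p S : ℝ≥0∞}
    (hp : 1 ≤ p) {W : ℕ → β → ℝ} (hW : ∀ n, AEStronglyMeasurable (W n) ρ)
    (hWS : ∀ n, eLpNorm (W n) p ρ ≤ S) {N : ℕ} (hN : 1 ≤ N) :
    eLpNorm ((N : ℝ)⁻¹ • ∑ n ∈ Finset.range N, W n) p ρ ≤ S := by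
  have hN0 : (0 : ℝ) < N := by exact_mod_cast hN
  have hsum : eLpNorm (∑ n ∈ Finset.range N, W n) p ρ ≤ N * S := by
    refine (eLpNorm_sum_le (fun n _ => hW n) hp).trans
      ((Finset.sum_le_sum fun n _ => hWS n).trans_eq ?_)
    rw [Finset.sum_const, Finset.card_range, nsmul_eq_mul]
  calc _ ≤ ENNReal.ofReal (N : ℝ)⁻¹ * (N * S) := by
        rw [eLpNorm_const_smul, Real.enorm_of_nonneg (by positivity)]
        gcongr
    _ = S := by
        rw [← mul_assoc, ← ENNReal.ofReal_natCast, ← ENNReal.ofReal_mul (by positivity),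
          inv_mul_cancel₀ hN0.ne', ENNReal.ofReal_one, one_mul]

lemma eLpNorm_average_sub_le_of_approx_poisson {β : Type*} [MeasurableSpace β] {ρ : Measure β}
    {p S : ℝ≥0∞} (hp : 1 ≤ p) (hh : 0 < h) (hA : 0 ≤ A) (hε : 0 ≤ ε)
    (hφ : ∀ y z, |φ y - φ z| ≤ A * (w y + w z))
    (hpoisson : ∀ z, |f z - c - (φ z - ψ z) / h| ≤ ε * w z) {Z : ℕ → β → α}
    (hw : ∀ n, AEStronglyMeasurable (fun a => w (Z n a)) ρ)
    (hwS : ∀ n, eLpNorm (fun a => w (Z n a)) p ρ ≤ S) {N : ℕ} (hN : 1 ≤ N) {R : ℝ} (hR : 0 ≤ R)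
    (hm : AEStronglyMeasurable
      (fun a => ∑ n ∈ Finset.range N, (φ (Z (n + 1) a) - ψ (Z n a))) ρ)
    (hmR : eLpNorm (fun a => ∑ n ∈ Finset.range N, (φ (Z (n + 1) a) - ψ (Z n a))) p ρ ≤
      ENNReal.ofReal R * S) :
    eLpNorm (fun a => (N : ℝ)⁻¹ * ∑ n ∈ Finset.range N, f (Z n a) - c) p ρ ≤
      ENNReal.ofReal ((N * h)⁻¹ * (A * 2) + (N * h)⁻¹ * R + ε) * S := by
  let W : ℕ → β → ℝ := fun n a => w (Z n a)
  set Mart : β → ℝ := fun a => ∑ n ∈ Finset.range N, (φ (Z (n + 1) a) - ψ (Z n a))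
  have hTm : AEStronglyMeasurable (W 0 + W N) ρ := (hw 0).add (hw N)
  have hT : eLpNorm (W 0 + W N) p ρ ≤ ENNReal.ofReal 2 * S := by
    refine (eLpNorm_add_le (hw 0) (hw N) hp).trans ((add_le_add (hwS 0) (hwS N)).trans_eq ?_)
    rw [ENNReal.ofReal_ofNat, two_mul]
  let avg : β → ℝ := (N : ℝ)⁻¹ • ∑ n ∈ Finset.range N, W n
  have havg : AEStronglyMeasurable avg ρ :=
    (Finset.aestronglyMeasurable_sum _ fun n _ => hw n).const_smul _
  calc _ ≤ eLpNorm ((N * h)⁻¹ • A • (W 0 + W N) + (N * h)⁻¹ • (fun a => ‖Mart a‖) + ε • avg)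
          p ρ := by
        refine eLpNorm_mono_real fun a => ?_
        simp only [avg, W, Mart, Pi.add_apply, Pi.smul_apply, Finset.sum_apply, smul_eq_mul,
          Real.norm_eq_abs]
        exact abs_average_sub_le_of_approx_poisson hh hφ hpoisson (fun n => Z n a) hN
    _ ≤ eLpNorm ((N * h)⁻¹ • A • (W 0 + W N)) p ρ +
          eLpNorm ((N * h)⁻¹ • fun a => ‖Mart a‖) p ρ + eLpNorm (ε • avg) p ρ := by
        have hboundary := (hTm.const_smul A).const_smul (N * h)⁻¹
        have hmart := hm.norm.const_smul (N * h)⁻¹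
        refine (eLpNorm_add_le (hboundary.add hmart) (havg.const_smul ε) hp).trans ?_
        gcongr
        exact eLpNorm_add_le hboundary hmart hp
    _ ≤ ENNReal.ofReal (N * h)⁻¹ * (ENNReal.ofReal A * (ENNReal.ofReal 2 * S)) +
          ENNReal.ofReal (N * h)⁻¹ * (ENNReal.ofReal R * S) + ENNReal.ofReal ε * S := by
        simp only [eLpNorm_const_smul, eLpNorm_norm]
        rw [Real.enorm_of_nonneg (by positivity), Real.enorm_of_nonneg hA,
          Real.enorm_of_nonneg hε]
        gcongr
        exact eLpNorm_average_le hp hw hwS hN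
    _ = _ := by
        rw [ENNReal.ofReal_add (by positivity) hε, ENNReal.ofReal_add (by positivity)
          (by positivity), ENNReal.ofReal_mul (by positivity), ENNReal.ofReal_mul hA,
          ENNReal.ofReal_mul (by positivity)]
        ring

lemma abs_sub_le_of_lipschitzWith {F : Type*} [SeminormedAddCommGroup F] {g : F → ℝ}
    {K : NNReal} (hg : LipschitzWith K g) (y z : F) :
    |g y - g z| ≤ K * ((1 + ‖y‖) ^ 2 + (1 + ‖z‖) ^ 2) := by
  have hlip := hg.dist_le_mul y z
  rw [Real.dist_eq, dist_eq_norm] at hlip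
  refine hlip.trans (mul_le_mul_of_nonneg_left ?_ K.2)
  nlinarith [norm_sub_le y z, norm_nonneg y, norm_nonneg z, sq_nonneg ‖y‖, sq_nonneg ‖z‖]

end ApproximatePoisson

section SecondMoment

variable {Ω : Type*} [MeasurableSpace Ω] {P : Measure Ω} {X : Ω → ℝ} {T : ℝ≥0∞}

lemma lintegral_ofReal_sq_eq_eLpNorm_sq :
    ∫⁻ ω, ENNReal.ofReal (X ω ^ 2) ∂P = eLpNorm X 2 P ^ 2 := by
  have h := eLpNorm_nnreal_pow_eq_lintegral (f := X) (μ := P) (p := 2) two_ne_zero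
  simp only [NNReal.coe_ofNat, ENNReal.rpow_ofNat, ENNReal.coe_ofNat] at h
  rw [h]
  refine lintegral_congr fun ω => ?_
  rw [Real.enorm_eq_ofReal_abs, ← ENNReal.ofReal_pow (abs_nonneg _), sq_abs]

lemma eLpNorm_two_le_iff : eLpNorm X 2 P ≤ T ↔ ∫⁻ ω, ENNReal.ofReal (X ω ^ 2) ∂P ≤ T ^ 2 := by
  rw [lintegral_ofReal_sq_eq_eLpNorm_sq, ENNReal.pow_le_pow_left_iff two_ne_zero]

end SecondMoment

section ErgodicAverage

variable {E : Type*} [NormedAddCommGroup E] [InnerProductSpace ℝ E] [FiniteDimensional ℝ E]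
  [MeasurableSpace E] [BorelSpace E] {Ω' : Type*} [MeasurableSpace Ω']
  {γ m C₀ C₁ h L M : ℝ} {G : E → E} {U : E → ℝ} {f : E × E → ℝ} {μ : Measure Ω'}
  [IsProbabilityMeasure μ] {b : E → Ω' → E}

/-- The constant in front of `h (1 + ‖z‖)²` in the residual of the approximate Poisson equation:
the local error of the chain plus the bias of the iterated reference operator. -/
noncomputable def poissonResidualConst (U : E → ℝ) (γ m C₁ L M : ℝ) : ℝ :=
  localErrorConst (stdGaussian E) γ C₁ (32 * γ / m * L) (32 * γ / m * M) +
    L * (2 + 2 / γ) * (1 + 32 * γ / m * invarianceConst C₁) * boltzmannMoment U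

lemma poissonResidualConst_nonneg (hp : Admissible γ m C₁ h) (hL : 0 ≤ L) (hM : 0 ≤ M) :
    0 ≤ poissonResidualConst U γ m C₁ L M := by
  have hγ := hp.γ_pos
  have hm := hp.m_pos
  have hlocal := localErrorConst_nonneg (ν := stdGaussian E) hγ.le hp.C₁_pos.le
    (show 0 ≤ 32 * γ / m * L by positivity) (show 0 ≤ 32 * γ / m * M by positivity)
  have hinv := invarianceConst_nonneg hp.C₁_pos.le
  have hmoment := boltzmannMoment_nonneg (U := U)
  unfold poissonResidualConst
  positivity

lemma exists_approx_poisson (hp : Admissible γ m C₁ h) (hG : IsMonotoneC11 m C₁ G)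
    (hU : ∀ x, HasGradientAt U (G x) x) (hb : IsStochasticGradient m C₀ C₁ μ G b) (hL : 0 ≤ L)
    (hM : 0 ≤ M) (hLM : 2 * (2 / γ * C₁ * L) ≤ m / (32 * γ) * M) (hf : TwistedC11 (2 / γ) L M f) :
    ∃ φ, TwistedC11 (2 / γ) (32 * γ / m * L) (32 * γ / m * M) φ ∧
      ∀ z, |f z - ∫ w, f w ∂boltzmann U - (φ z - chainOp (stdGaussian E) μ γ h b φ z) / h| ≤
        poissonResidualConst U γ m C₁ L M * h * (1 + ‖z‖) ^ 2 := by
  have hγ := hp.γ_pos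
  have hm := hp.m_pos
  have hh := hp.h_pos
  set σ := √(2 * γ * h - γ ^ 2 * h ^ 2)
  have hσ : σ ^ 2 = 2 * γ * h - γ ^ 2 * h ^ 2 :=
    Real.sq_sqrt (by nlinarith [hp.γh_le_half, mul_pos hγ hh])
  have hν : MemLp id 2 (stdGaussian E) := IsGaussian.memLp_id _ 2 (by simp)
  obtain ⟨k, hk⟩ := hG.exists_abs_refOp_iterate_sub_integral_le hU hp hσ hL hM hLM hf
  have hν1 := hν.integrable one_le_two
  set φ := poissonSum (stdGaussian E) γ h σ G f k
  have hφ := TwistedC11.poissonSum (σ := σ) hν1 hp hG hL hM hLM hf k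
  refine ⟨φ, hφ, fun z => ?_⟩
  have hpoisson : φ z - refOp (stdGaussian E) γ h σ G φ z =
      h * (f z - (refOp (stdGaussian E) γ h σ G)^[k] f z) :=
    poissonSum_sub_refOp hν1 hp hG hL hM hLM hf k z
  have hlocal := hb.abs_chainOp_sub_refOp_le hp hG hν integral_id_stdGaussian (by positivity)
    (by positivity) hφ (Real.sqrt_nonneg _) hσ z
  have hbias := hk z
  have hsplit : f z - ∫ w, f w ∂boltzmann U - (φ z - chainOp (stdGaussian E) μ γ h b φ z) / h =
      ((refOp (stdGaussian E) γ h σ G)^[k] f z - ∫ w, f w ∂boltzmann U) +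
        (chainOp (stdGaussian E) μ γ h b φ z - refOp (stdGaussian E) γ h σ G φ z) / h := by
    rw [eq_add_of_sub_eq' hpoisson]
    field_simp
    ring
  rw [hsplit]
  refine (abs_add_le _ _).trans ?_
  rw [abs_div, abs_of_pos hh]
  have hinv := invarianceConst_nonneg hp.C₁_pos.le
  have hmoment := boltzmannMoment_nonneg (U := U)
  calc _ ≤ L * (2 + 2 / γ) * (1 + 32 * γ / m * invarianceConst C₁) * boltzmannMoment U * h *
          (1 + ‖z‖) ^ 2 +
        localErrorConst (stdGaussian E) γ C₁ (32 * γ / m * L) (32 * γ / m * M) * h ^ 2 *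
          (1 + ‖z‖) ^ 2 / h := by
        refine add_le_add (hbias.trans ?_) (by gcongr)
        gcongr
        exact le_self_pow₀ (by linarith [norm_nonneg z]) two_ne_zero
    _ = poissonResidualConst U γ m C₁ L M * h * (1 + ‖z‖) ^ 2 := by
        unfold poissonResidualConst
        field_simp
        ring

variable {Ω : Type*} {mΩ : MeasurableSpace Ω} {P : Measure Ω} [IsProbabilityMeasure P]
  {ℱ : Filtration ℕ mΩ} {Z : ℕ → Ω → E × E} {ζ : ℕ → Ω → E × Ω'} {S : ℝ≥0∞} {N : ℕ}

lemma IsStochasticGradientChain.eLpNorm_average_sub_le (hp : Admissible γ m C₁ h)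
    (hG : IsMonotoneC11 m C₁ G) (hU : ∀ x, HasGradientAt U (G x) x)
    (hb : IsStochasticGradient m C₀ C₁ μ G b) (hL : 0 ≤ L) (hM : 0 ≤ M)
    (hLM : 2 * (2 / γ * C₁ * L) ≤ m / (32 * γ) * M) (hf : TwistedC11 (2 / γ) L M f)
    (hZ : IsStochasticGradientChain P (stdGaussian E) μ γ h b ℱ Z ζ)
    (hS : ∀ n, ∫⁻ ω, ENNReal.ofReal ((1 + ‖Z n ω‖) ^ 4) ∂P ≤ S ^ 2) (hN : 1 ≤ N) :
    eLpNorm (fun ω => (N : ℝ)⁻¹ * ∑ n ∈ Finset.range N, f (Z n ω) - ∫ w, f w ∂boltzmann U) 2 P ≤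
      ENNReal.ofReal ((N * h)⁻¹ * (32 * γ / m * L * (2 + 2 / γ) * 2) +
        (N * h)⁻¹ * √(martingaleConst (stdGaussian E) γ C₁ (32 * γ / m * L) * (N * h)) +
          poissonResidualConst U γ m C₁ L M * h) * S := by
  have hγ := hp.γ_pos
  have hm := hp.m_pos
  have hh := hp.h_pos
  have hL' : 0 ≤ 32 * γ / m * L := by positivity
  obtain ⟨φ, hφ, hpoisson⟩ := exists_approx_poisson hp hG hU hb hL hM hLM hf
  have hlip := hφ.lipschitzWith (by positivity) hL'
  have hmartConst := martingaleConst_nonneg (ν := stdGaussian E) (C₁ := C₁) (L := 32 * γ / m * L)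
    hγ.le
  have hmeas := hZ.measurable hb
  have hmart := (hZ.measurable_martingalePart hb hlip.continuous.measurable N).mono (ℱ.le N) le_rfl
  refine eLpNorm_average_sub_le_of_approx_poisson (w := fun z => (1 + ‖z‖) ^ 2) one_le_two hh
    (by positivity) (mul_nonneg (poissonResidualConst_nonneg hp hL hM) hh.le) (fun y z => ?_)
    hpoisson (fun n => ((hmeas n).norm.const_add 1).pow_const 2 |>.aestronglyMeasurable)
    (fun n => ?_) hN (Real.sqrt_nonneg _)
    hmart.aestronglyMeasurable ?_
  · simpa [Real.coe_toNNReal _ (show 0 ≤ 32 * γ / m * L * (2 + 2 / γ) by positivity)] using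
      abs_sub_le_of_lipschitzWith hlip y z
  · rw [eLpNorm_two_le_iff]
    simpa only [← pow_mul] using hS n
  · have hS2 (n : ℕ) : ∫⁻ ω, ENNReal.ofReal ((1 + ‖Z n ω‖) ^ 2) ∂P ≤ S ^ 2 := by
      refine (lintegral_mono fun ω => ENNReal.ofReal_le_ofReal ?_).trans (hS n)
      exact pow_le_pow_right₀ (by linarith [norm_nonneg (Z n ω)]) (by norm_num)
    refine eLpNorm_two_le_iff.2 ((hZ.lintegral_martingalePart_sq_le hp hG hb
      (IsGaussian.memLp_id _ 2 (by simp)) hL' hφ hS2 N).trans_eq ?_)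
    rw [mul_pow, ← ENNReal.ofReal_pow (Real.sqrt_nonneg _), Real.sq_sqrt (by positivity),
      ← ENNReal.ofReal_natCast, ← mul_assoc, ← ENNReal.ofReal_mul (by positivity)]
    ring_nf

omit [IsProbabilityMeasure μ] [IsProbabilityMeasure P] in
lemma IsStochasticGradientChain.eLpNorm_average_sub_le_of_lipschitzWith
    (hG : IsMonotoneC11 m C₁ G) (hm : 0 < m) (hU : ∀ x, HasGradientAt U (G x) x)
    (hb : IsStochasticGradient m C₀ C₁ μ G b) {K : NNReal} (hf : LipschitzWith K f)
    (hZ : IsStochasticGradientChain P (stdGaussian E) μ γ h b ℱ Z ζ)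
    (hS : ∀ n, ∫⁻ ω, ENNReal.ofReal ((1 + ‖Z n ω‖) ^ 4) ∂P ≤ S ^ 2) (hN : 1 ≤ N) :
    eLpNorm (fun ω => (N : ℝ)⁻¹ * ∑ n ∈ Finset.range N, f (Z n ω) - ∫ w, f w ∂boltzmann U) 2 P ≤
      ENNReal.ofReal (K * boltzmannMoment U) * S := by
  have hmeas := hZ.measurable hb
  have hmoment := boltzmannMoment_nonneg (U := U)
  simpa using eLpNorm_average_sub_le_of_approx_poisson (φ := 0) (ψ := 0) (A := 0) (h := 1)
    (R := 0) (w := fun z => (1 + ‖z‖) ^ 2) (ρ := P) (S := S) one_le_two one_pos le_rfl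
    (show 0 ≤ K * boltzmannMoment U by positivity) (by simp)
    (fun z => by
      simpa using (hG.abs_sub_integral_boltzmann_le hm hU hf z).trans
        (mul_le_mul_of_nonneg_left (le_self_pow₀ (by linarith [norm_nonneg z]) two_ne_zero)
          (by positivity)))
    (fun n => ((hmeas n).norm.const_add 1).pow_const 2 |>.aestronglyMeasurable)
    (fun n => by rw [eLpNorm_two_le_iff]; simpa only [← pow_mul] using hS n) hN le_rfl
    (by simpa using aestronglyMeasurable_const) (by simp)

lemma ergodic_error_sq_le {A c D x : ℝ} (hc : 0 ≤ c) (hx : 1 ≤ x) :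
    (x⁻¹ * (A * 2) + x⁻¹ * √(c * x) + D * h) ^ 2 ≤
      (12 * A ^ 2 + 3 * c + 3 * D ^ 2) * (h ^ 2 + 1 / x) := by
  have hx0 : 0 < x := one_pos.trans_le hx
  have hboundary : (x⁻¹ * (A * 2)) ^ 2 ≤ 4 * A ^ 2 * (1 / x) := by
    have hinv : (1 / x) * (1 / x) ≤ 1 / x :=
      mul_le_of_le_one_left (by positivity) ((div_le_one hx0).2 hx)
    calc (x⁻¹ * (A * 2)) ^ 2 = 4 * A ^ 2 * ((1 / x) * (1 / x)) := by field_simp; ring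
      _ ≤ _ := by gcongr
  have hmart : (x⁻¹ * √(c * x)) ^ 2 = c * (1 / x) := by
    rw [mul_pow, Real.sq_sqrt (by positivity)]
    field_simp
  have hxinv : 0 ≤ 1 / x := by positivity
  have hA := mul_nonneg (sq_nonneg A) (sq_nonneg h)
  have hD := mul_nonneg (sq_nonneg D) hxinv
  have hch := mul_nonneg hc (sq_nonneg h)
  set B := x⁻¹ * (A * 2)
  set R := x⁻¹ * √(c * x)
  nlinarith [sq_nonneg (B - R), sq_nonneg (B - D * h), sq_nonneg (R - D * h)]

/-- The constant in the mean square error bound `h² + 1 / (N h)`, relative to the fourth moments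
of the chain: the first three terms bound the error for `N h ≥ 1`, the last one for `N h ≤ 1`. -/
noncomputable def ergodicConst (U : E → ℝ) (γ m C₁ L M : ℝ) : ℝ :=
  12 * (32 * γ / m * L * (2 + 2 / γ)) ^ 2 +
    3 * martingaleConst (stdGaussian E) γ C₁ (32 * γ / m * L) +
    3 * poissonResidualConst U γ m C₁ L M ^ 2 + (L * (2 + 2 / γ) * boltzmannMoment U) ^ 2

lemma ergodicConst_nonneg (hγ : 0 ≤ γ) : 0 ≤ ergodicConst U γ m C₁ L M := by
  have hmart := martingaleConst_nonneg (ν := stdGaussian E) (C₁ := C₁) (L := 32 * γ / m * L) hγ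
  unfold ergodicConst
  positivity

lemma IsStochasticGradientChain.eLpNorm_average_sub_le_ergodicConst (hp : Admissible γ m C₁ h)
    (hG : IsMonotoneC11 m C₁ G) (hU : ∀ x, HasGradientAt U (G x) x)
    (hb : IsStochasticGradient m C₀ C₁ μ G b) (hL : 0 ≤ L) (hM : 0 ≤ M)
    (hLM : 2 * (2 / γ * C₁ * L) ≤ m / (32 * γ) * M) (hf : TwistedC11 (2 / γ) L M f)
    (hZ : IsStochasticGradientChain P (stdGaussian E) μ γ h b ℱ Z ζ)
    (hS : ∀ n, ∫⁻ ω, ENNReal.ofReal ((1 + ‖Z n ω‖) ^ 4) ∂P ≤ S ^ 2) (hN : 1 ≤ N) :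
    eLpNorm (fun ω => (N : ℝ)⁻¹ * ∑ n ∈ Finset.range N, f (Z n ω) - ∫ w, f w ∂boltzmann U) 2 P ≤
      ENNReal.ofReal √(ergodicConst U γ m C₁ L M * (h ^ 2 + 1 / (N * h))) * S := by
  have hγ := hp.γ_pos
  have hh := hp.h_pos
  have hx : 0 < (N : ℝ) * h := mul_pos (by exact_mod_cast hN) hh
  have hmart := martingaleConst_nonneg (ν := stdGaussian E) (C₁ := C₁) (L := 32 * γ / m * L) hγ.le
  rcases le_total 1 ((N : ℝ) * h) with hlong | hshort
  · refine (hZ.eLpNorm_average_sub_le hp hG hU hb hL hM hLM hf hS hN).trans ?_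
    gcongr
    refine Real.le_sqrt_of_sq_le ((ergodic_error_sq_le hmart hlong).trans ?_)
    gcongr
    exact le_add_of_nonneg_right (sq_nonneg _)
  · have hlip := hf.lipschitzWith (by positivity) hL
    refine (hZ.eLpNorm_average_sub_le_of_lipschitzWith hG hp.m_pos hU hb hlip hS hN).trans ?_
    rw [Real.coe_toNNReal _ (by positivity)]
    gcongr
    refine Real.le_sqrt_of_sq_le ((le_mul_of_one_le_right (b := h ^ 2 + 1 / (N * h))
      (sq_nonneg _) ?_).trans ?_)
    · exact le_add_of_nonneg_of_le (sq_nonneg h) (one_le_one_div hx hshort)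
    · gcongr
      exact le_add_of_nonneg_left (by positivity)

lemma IsStochasticGradientChain.lintegral_average_sub_sq_le (hp : Admissible γ m C₁ h)
    (hG : IsMonotoneC11 m C₁ G) (hU : ∀ x, HasGradientAt U (G x) x) (hC₀ : 0 ≤ C₀)
    (hb : IsStochasticGradient m C₀ C₁ μ G b) (hL : 0 ≤ L) (hM : 0 ≤ M)
    (hLM : 2 * (2 / γ * C₁ * L) ≤ m / (32 * γ) * M) (hf : TwistedC11 (2 / γ) L M f)
    (hZ : IsStochasticGradientChain P (stdGaussian E) μ γ h b ℱ Z ζ) (hN : 1 ≤ N) :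
    ∫⁻ ω, ENNReal.ofReal
        (((N : ℝ)⁻¹ * ∑ n ∈ Finset.range N, f (Z n ω) - ∫ w, f w ∂boltzmann U) ^ 2) ∂P ≤
      ENNReal.ofReal (ergodicConst U γ m C₁ L M * momentConst (stdGaussian E) γ m C₀ *
        (h ^ 2 + 1 / (N * h))) *
        ∫⁻ ω, ENNReal.ofReal ((‖(Z 0 ω).1‖ + ‖(Z 0 ω).2‖ + 1) ^ 4) ∂P := by
  set I := ∫⁻ ω, ENNReal.ofReal ((‖(Z 0 ω).1‖ + ‖(Z 0 ω).2‖ + 1) ^ 4) ∂P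
  have hh := hp.h_pos
  have hergodic := ergodicConst_nonneg (U := U) (m := m) (C₁ := C₁) (L := L) (M := M) hp.γ_pos.le
  obtain ⟨S, hS⟩ : ∃ S, ENNReal.ofReal (momentConst (stdGaussian E) γ m C₀) * I = S ^ 2 :=
    ⟨_, (ENNReal.rpow_inv_natCast_pow two_ne_zero _).symm⟩
  have hmoment (n : ℕ) : ∫⁻ ω, ENNReal.ofReal ((1 + ‖Z n ω‖) ^ 4) ∂P ≤ S ^ 2 :=
    hS ▸ hZ.lintegral_one_add_norm_pow_four_le (IsGaussian.memLp_id _ 4 (by simp))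
      integral_id_stdGaussian hp hC₀ hb n
  refine (eLpNorm_two_le_iff.1 (hZ.eLpNorm_average_sub_le_ergodicConst hp hG hU hb hL hM hLM hf
    hmoment hN)).trans_eq ?_
  rw [mul_pow, ← hS, ← ENNReal.ofReal_pow (Real.sqrt_nonneg _), Real.sq_sqrt (by positivity),
    ← mul_assoc, ← ENNReal.ofReal_mul (by positivity), mul_right_comm]

end ErgodicAverage

section Smooth

lemma norm_fderiv_sub_le_of_norm_iteratedFDeriv_two_le {V W : Type*} [NormedAddCommGroup V]
    [NormedSpace ℝ V] [NormedAddCommGroup W] [NormedSpace ℝ W] {g : V → W} {C : ℝ}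
    (hg : ContDiff ℝ 2 g) (hC : ∀ x, ‖iteratedFDeriv ℝ 2 g x‖ ≤ C) (x y : V) :
    ‖fderiv ℝ g x - fderiv ℝ g y‖ ≤ C * ‖x - y‖ := by
  have hg' : Differentiable ℝ (fderiv ℝ g) :=
    (hg.fderiv_right (m := 1) (by norm_num)).differentiable (by norm_num)
  refine convex_univ.norm_image_sub_le_of_norm_fderiv_le (fun z _ => hg' z) (fun z _ => ?_)
    trivial trivial
  rw [← norm_iteratedFDeriv_one, norm_iteratedFDeriv_fderiv]
  exact hC z

variable {E : Type*} [NormedAddCommGroup E] [InnerProductSpace ℝ E]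

lemma twistedC11_of_norm_fderiv_le {f : E × E → ℝ} {γ C₂ : ℝ} (hγ : 0 < γ)
    (hf : Differentiable ℝ f) (hf1 : ∀ z, ‖fderiv ℝ f z‖ ≤ C₂)
    (hf2 : ∀ z z', ‖fderiv ℝ f z - fderiv ℝ f z'‖ ≤ C₂ * ‖z - z'‖) :
    TwistedC11 (2 / γ) (C₂ * (1 + γ)) (C₂ * (1 + γ) ^ 2) f := by
  have hC₂ : 0 ≤ C₂ := (norm_nonneg _).trans (hf1 0)
  have hnorm (k : E × E) : ‖k‖ ≤ (1 + γ) * twistedNorm (2 / γ) k := by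
    simpa only [div_div_cancel₀ (two_ne_zero (α := ℝ))] using
      norm_le_twistedNorm (c := 2 / γ) (by positivity) k
  have htwisted (k : E × E) : 0 ≤ twistedNorm (2 / γ) k := twistedNorm_nonneg _ k
  refine ⟨hf, fun z k => ?_, fun z z' k => ?_⟩
  · calc |fderiv ℝ f z k| ≤ ‖fderiv ℝ f z‖ * ‖k‖ := (fderiv ℝ f z).le_opNorm k
      _ ≤ C₂ * ((1 + γ) * twistedNorm (2 / γ) k) := by gcongr <;> [exact hf1 z; exact hnorm k]
      _ = C₂ * (1 + γ) * twistedNorm (2 / γ) k := by ring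
  · have hle := htwisted (z - z')
    calc |fderiv ℝ f z k - fderiv ℝ f z' k|
        ≤ ‖fderiv ℝ f z - fderiv ℝ f z'‖ * ‖k‖ := (fderiv ℝ f z - fderiv ℝ f z').le_opNorm k
      _ ≤ C₂ * ‖z - z'‖ * ‖k‖ := by gcongr; exact hf2 z z'
      _ ≤ C₂ * ((1 + γ) * twistedNorm (2 / γ) (z - z')) * ((1 + γ) * twistedNorm (2 / γ) k) := by
        gcongr <;> exact hnorm _
      _ = C₂ * (1 + γ) ^ 2 * twistedNorm (2 / γ) (z - z') * twistedNorm (2 / γ) k := by ring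

variable [CompleteSpace E] {U : E → ℝ} {m C₁ : ℝ}

/-- The Riesz representation as an `ℝ`-linear isometry (that of Mathlib is conjugate-linear), so
that `gradient U = realRiesz ∘ fderiv ℝ U`. -/
noncomputable def realRiesz : (E →L[ℝ] ℝ) ≃ₗᵢ[ℝ] E := (InnerProductSpace.toDual ℝ E).symm

lemma contDiff_gradient {n : ℕ} (hU : ContDiff ℝ (n + 1) U) : ContDiff ℝ n (gradient U) :=
  realRiesz.contDiff.comp (hU.fderiv_right le_rfl)

lemma norm_iteratedFDeriv_gradient (n : ℕ) (x : E) :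
    ‖iteratedFDeriv ℝ n (gradient U) x‖ = ‖iteratedFDeriv ℝ (n + 1) U x‖ :=
  (realRiesz.norm_iteratedFDeriv_comp_left (fderiv ℝ U) x n).trans norm_iteratedFDeriv_fderiv

lemma inner_fderiv_gradient (x k l : E) :
    ⟪k, fderiv ℝ (gradient U) x l⟫ = iteratedFDeriv ℝ 2 U x ![l, k] := by
  have hfderiv : fderiv ℝ (gradient U) x l = realRiesz (fderiv ℝ (fderiv ℝ U) x l) :=
    congr($(realRiesz.comp_fderiv (f := fderiv ℝ U) (x := x)) l)
  rw [hfderiv, real_inner_comm, iteratedFDeriv_two_apply]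
  exact InnerProductSpace.toDual_symm_apply

lemma isMonotoneC11_gradient (hU : ContDiff ℝ 3 U)
    (hU1 : ∀ x, ‖gradient U x‖ ≤ C₁ * (‖x‖ + 1))
    (hU2 : ∀ x, ‖iteratedFDeriv ℝ 2 U x‖ ≤ C₁) (hU3 : ∀ x, ‖iteratedFDeriv ℝ 3 U x‖ ≤ C₁)
    (hconv : ∀ x y, m * ‖y‖ ^ 2 ≤ iteratedFDeriv ℝ 2 U x ![y, y]) :
    IsMonotoneC11 m C₁ (gradient U) where
  differentiable := (contDiff_gradient (n := 2) hU).differentiable (by norm_num)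
  norm_fderiv_le x := by
    rw [← norm_iteratedFDeriv_one, norm_iteratedFDeriv_gradient]
    exact hU2 x
  coercive x k := (inner_fderiv_gradient x k k).symm ▸ hconv x k
  norm_fderiv_sub_le :=
    norm_fderiv_sub_le_of_norm_iteratedFDeriv_two_le (contDiff_gradient (n := 2) hU)
      fun x => (norm_iteratedFDeriv_gradient 2 x).trans_le (hU3 x)
  norm_le := hU1

end Smooth

section Independence

variable {Ω : Type*} {mΩ : MeasurableSpace Ω} {P : Measure Ω} {ι : Type*}
  {𝒮 : ι → MeasurableSpace Ω} {τ : ι → ℕ}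

/-- The filtration of the information available at each time when the source `𝒮 i` of randomness
is revealed at time `τ i`. -/
def revealFiltration (h𝒮 : ∀ i, 𝒮 i ≤ mΩ) (τ : ι → ℕ) : Filtration ℕ mΩ where
  seq n := ⨆ i ∈ {i | τ i ≤ n}, 𝒮 i
  mono' _ _ hst := biSup_mono fun _ hi => hi.trans hst
  le' _ := iSup₂_le fun i _ => h𝒮 i

lemma le_revealFiltration (h𝒮 : ∀ i, 𝒮 i ≤ mΩ) {n : ℕ} {i : ι} (hi : τ i ≤ n) :
    𝒮 i ≤ revealFiltration h𝒮 τ n :=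
  le_biSup 𝒮 (show i ∈ {i | τ i ≤ n} from hi)

lemma indep_revealFiltration (h𝒮 : ∀ i, 𝒮 i ≤ mΩ) (hind : iIndep 𝒮 P) (n : ℕ) :
    Indep (revealFiltration h𝒮 τ n) (⨆ i ∈ {i | n < τ i}, 𝒮 i) P :=
  indep_iSup_of_disjoint h𝒮 hind
    (Set.disjoint_left.2 fun i (hi : τ i ≤ n) => hi.not_gt)

variable {E : Type*} [MeasurableSpace E] {Ω' : Type*} [MeasurableSpace Ω'] {X V ξ : ℕ → Ω → E}
  {w : ℕ → Ω → Ω'}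

/-- The sources of randomness of the chain: the initial data and the noises `ξ n` and `w n`. -/
abbrev chainSource (X V ξ : ℕ → Ω → E) (w : ℕ → Ω → Ω') (i : Option (ℕ ⊕ ℕ)) : MeasurableSpace Ω :=
  Option.elim i (MeasurableSpace.comap (fun ω => (X 0 ω, V 0 ω)) inferInstance)
    (Sum.elim (fun n => MeasurableSpace.comap (ξ n) inferInstance)
      fun n => MeasurableSpace.comap (w n) inferInstance)

/-- The time at which a source of randomness of the chain is known. -/
def revealTime : Option (ℕ ⊕ ℕ) → ℕ
  | none => 0
  | some (Sum.inl n) => n + 1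
  | some (Sum.inr n) => n + 1

lemma chainSource_le (hX : Measurable (X 0)) (hV : Measurable (V 0)) (hξ : ∀ n, Measurable (ξ n))
    (hw : ∀ n, Measurable (w n)) : ∀ i, chainSource X V ξ w i ≤ mΩ
  | none => (hX.prodMk hV).comap_le
  | some (Sum.inl n) => (hξ n).comap_le
  | some (Sum.inr n) => (hw n).comap_le

lemma measurable_noise_of_chainSource_le {n : ℕ} {𝒜 : MeasurableSpace Ω}
    (hξ : chainSource X V ξ w (some (Sum.inl n)) ≤ 𝒜)
    (hw : chainSource X V ξ w (some (Sum.inr n)) ≤ 𝒜) :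
    Measurable[𝒜] fun ω => (ξ n ω, w n ω) :=
  (measurable_iff_comap_le.2 hξ).prodMk (measurable_iff_comap_le.2 hw)

lemma isStochasticGradientChain_of_iIndep [NormedAddCommGroup E] [InnerProductSpace ℝ E]
    {ν : Measure E} {μ : Measure Ω'} [IsProbabilityMeasure P] {γ h : ℝ} {b : E → Ω' → E}
    (hX : Measurable (X 0)) (hV : Measurable (V 0))
    (hξ : ∀ n, Measurable (ξ n)) (hw : ∀ n, Measurable (w n))
    (hξν : ∀ n, P.map (ξ n) = ν) (hwμ : ∀ n, P.map (w n) = μ)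
    (hind : iIndep (chainSource X V ξ w) P)
    (hXsucc : ∀ n ω, X (n + 1) ω = X n ω + h • V n ω)
    (hVsucc : ∀ n ω, V (n + 1) ω = V n ω - h • b (X n ω) (w n ω) - (γ * h) • V n ω +
      √(2 * γ * h) • ξ n ω) :
    IsStochasticGradientChain P ν μ γ h b
      (revealFiltration (chainSource_le hX hV hξ hw) revealTime) (fun n ω => (X n ω, V n ω))
      (fun n ω => (ξ n ω, w n ω)) where
  measurable_zero := measurable_iff_comap_le.2
    (le_revealFiltration (chainSource_le hX hV hξ hw) (i := none) le_rfl)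
  measurable_innovation _ := measurable_noise_of_chainSource_le
    (le_revealFiltration _ le_rfl) (le_revealFiltration _ le_rfl)
  indep n := indep_of_indep_of_le_right (indep_revealFiltration _ hind n)
    (measurable_noise_of_chainSource_le (le_biSup (chainSource X V ξ w) n.lt_succ_self)
      (le_biSup (chainSource X V ξ w) n.lt_succ_self)).comap_le
  map_innovation n := by
    have hnoise : IndepFun (ξ n) (w n) P := (IndepFun_iff_Indep _ _ _).2
      (hind.indep (i := some (Sum.inl n)) (j := some (Sum.inr n)) (by simp))
    rw [hnoise.map_prod_eq_prod_map_map (hξ n).aemeasurable (hw n).aemeasurable, hξν, hwμ]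
  succ_eq n ω := Prod.ext (hXsucc n ω) (hVsucc n ω)

end Independence

lemma map_eq_stdGaussian_of_map_eq_pi {ι Ω : Type*} [Fintype ι] [MeasurableSpace Ω]
    {P : Measure Ω} {ξ : Ω → EuclideanSpace ℝ ι} (hξ : Measurable ξ)
    (hlaw : P.map (fun ω i => ξ ω i) = Measure.pi fun _ => gaussianReal 0 1) :
    P.map ξ = stdGaussian (EuclideanSpace ℝ ι) := by
  rw [← map_pi_eq_stdGaussian, ← hlaw, Measure.map_map (by fun_prop) (by fun_prop)]
  rfl

lemma Admissible.of_threshold {γ m C₁ h : ℝ} (hm : 0 < m) (hC₁ : 0 < C₁)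
    (hγ : 1 + m + 32 * C₁ ^ 2 / m ≤ γ) (hh : 0 < h)
    (hh₀ : h ≤ min (1 / (2 * γ)) (min (m * γ / (8 * C₁ ^ 2)) 1)) : Admissible γ m C₁ h := by
  have hratio : 0 < 32 * C₁ ^ 2 / m := by positivity
  have hγ1 : 1 ≤ γ := by linarith
  have hγ_le_sq : γ ≤ γ ^ 2 := le_self_pow₀ hγ1 two_ne_zero
  obtain ⟨hhγ, hhm, hh1⟩ : h * (2 * γ) ≤ 1 ∧ h * (8 * C₁ ^ 2) ≤ m * γ ∧ h ≤ 1 := by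
    rwa [le_min_iff, le_min_iff, le_div_iff₀ (by positivity), le_div_iff₀ (by positivity)] at hh₀
  have hdamping : 32 * C₁ ^ 2 ≤ m * γ ^ 2 := (div_le_iff₀' hm).1 (by linarith)
  exact
    { γ_pos := by linarith
      m_pos := hm
      C₁_pos := hC₁
      h_pos := hh
      h_le_one := hh1
      damping_large := hdamping
      m_le_sq := by linarith
      γh_le_half := by linarith
      hC₁_small := by linarith }

end UnderdampedLangevin

theorem statement16_general {E : Type*} [NormedAddCommGroup E] [InnerProductSpace ℝ E]
    [FiniteDimensional ℝ E] [MeasurableSpace E] [BorelSpace E] {Ω' : Type*} [MeasurableSpace Ω']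
    {μ : Measure Ω'} [IsProbabilityMeasure μ] {U : E → ℝ} {G : E → E} {b : E → Ω' → E}
    {f : E × E → ℝ} {C₀ C₁ m C₂ : ℝ} (hC₀ : 0 ≤ C₀) (hC₁ : 0 < C₁) (hm : 0 < m)
    (hG : UnderdampedLangevin.IsMonotoneC11 m C₁ G) (hU : ∀ x, HasGradientAt U (G x) x)
    (hb : UnderdampedLangevin.IsStochasticGradient m C₀ C₁ μ G b)
    (hf : Differentiable ℝ f) (hf1 : ∀ z, ‖fderiv ℝ f z‖ ≤ C₂)
    (hf2 : ∀ z z', ‖fderiv ℝ f z - fderiv ℝ f z'‖ ≤ C₂ * ‖z - z'‖) :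
    ∃ γ₀ > (0 : ℝ), ∀ γ ≥ γ₀, ∃ C > (0 : ℝ), ∃ h₀ > (0 : ℝ), ∀ h : ℝ, 0 < h → h ≤ h₀ →
      ∀ {Ω : Type*} {_ : MeasurableSpace Ω} (P : Measure Ω) [IsProbabilityMeasure P]
        (ℱ : Filtration ℕ ‹_›) (Z : ℕ → Ω → E × E) (ζ : ℕ → Ω → E × Ω'),
        UnderdampedLangevin.IsStochasticGradientChain P (stdGaussian E) μ γ h b ℱ Z ζ →
        ∀ N : ℕ, 1 ≤ N →
          ∫⁻ ω, ENNReal.ofReal (((N : ℝ)⁻¹ * ∑ n ∈ Finset.range N, f (Z n ω) -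
              ∫ z, f z ∂UnderdampedLangevin.boltzmann U) ^ 2) ∂P ≤
            ENNReal.ofReal (C * (h ^ 2 + 1 / (N * h))) *
              ∫⁻ ω, ENNReal.ofReal ((‖(Z 0 ω).1‖ + ‖(Z 0 ω).2‖ + 1) ^ 4) ∂P := by
  open UnderdampedLangevin in
  refine ⟨1 + m + 32 * C₁ ^ 2 / m, by positivity, fun γ hγ => ?_⟩
  have hγ0 : 0 < γ := lt_of_lt_of_le (by positivity) hγ
  have hC₂ : 0 ≤ C₂ := (norm_nonneg (fderiv ℝ f 0)).trans (hf1 0)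
  set L := C₂ * (1 + γ)
  set M := C₂ * (1 + γ) ^ 2 + 2 * (2 / γ * C₁ * L) / (m / (32 * γ)) with hM
  have hreg : TwistedC11 (2 / γ) L M f := (twistedC11_of_norm_fderiv_le hγ0 hf hf1 hf2).mono
    le_rfl (le_add_of_nonneg_right (by positivity))
  have hLM : 2 * (2 / γ * C₁ * L) ≤ m / (32 * γ) * M := by
    rw [hM, mul_add, mul_div_cancel₀ _ (by positivity)]
    exact le_add_of_nonneg_left (by positivity)
  refine ⟨max 1 (ergodicConst U γ m C₁ L M * momentConst (stdGaussian E) γ m C₀), by positivity,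
    min (1 / (2 * γ)) (min (m * γ / (8 * C₁ ^ 2)) 1), by positivity, ?_⟩
  intro h hh hh₀ Ω _ P _ ℱ Z ζ hZ N hN
  refine (hZ.lintegral_average_sub_sq_le (.of_threshold hm hC₁ hγ hh hh₀) hG hU hC₀ hb
    (by positivity) (by positivity) hLM hreg hN).trans ?_
  gcongr
  exact le_max_right _ _

/-- statistical error of the stochastic gradient Euler–Maruyama integrator
(strong order `p = 1, q = 1`) for the underdamped Langevin dynamics, under A1, A2', A3, A4:
`E[e²(N,h)] ≤ C(h² + 1/(Nh))·E(|X̃₀|+|Ṽ₀|+1)⁴`, where `π` is the Boltzmann measure with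
density proportional to `exp(−|v|²/2 − U(x))`. -/
theorem statement16 (d : ℕ) (hd : 1 ≤ d) (U : EuclideanSpace ℝ (Fin d) → ℝ)
    (f : EuclideanSpace ℝ (Fin d) × EuclideanSpace ℝ (Fin d) → ℝ)
    (C₀ C₁ m C₂ : ℝ) (hC₀ : 0 < C₀) (hC₁ : 0 < C₁) (hm : 0 < m) (hC₂ : 0 < C₂)
    -- A1
    (hU : ContDiff ℝ 3 U)
    (hU0 : ∀ x, |U x| ≤ C₁ * (‖x‖ + 1) ^ 2)
    (hU1 : ∀ x, ‖gradient U x‖ ≤ C₁ * (‖x‖ + 1))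
    (hU2 : ∀ x, ‖iteratedFDeriv ℝ 2 U x‖ ≤ C₁)
    (hU3 : ∀ x, ‖iteratedFDeriv ℝ 3 U x‖ ≤ C₁)
    -- A2'
    (hconv : ∀ x y, m * ‖y‖ ^ 2 ≤ iteratedFDeriv ℝ 2 U x ![y, y])
    -- A3
    (hf : ContDiff ℝ 3 f)
    (hf1 : ∀ z, ‖iteratedFDeriv ℝ 1 f z‖ ≤ C₂)
    (hf2 : ∀ z, ‖iteratedFDeriv ℝ 2 f z‖ ≤ C₂)
    (hf3 : ∀ z, ‖iteratedFDeriv ℝ 3 f z‖ ≤ C₂)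
    -- A4: the stochastic gradient b on a probability space (Ω', 𝒢, μ)
    (Ω' : Type) (𝒢 : MeasurableSpace Ω') (μ : Measure Ω') (hμ : IsProbabilityMeasure μ)
    (b : EuclideanSpace ℝ (Fin d) → Ω' → EuclideanSpace ℝ (Fin d))
    (hbmeas : Measurable (Function.uncurry b))
    (hbgrowth : ∀ x ω', ‖b x ω'‖ ≤ C₁ * (1 + ‖x‖))
    (hbdiff : ∀ ω', Differentiable ℝ (fun y => b y ω'))
    (hbderiv : ∀ x ω', ‖fderiv ℝ (fun y => b y ω') x‖ ≤ C₁)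
    (hbdrift : ∀ x ω', m * ‖x‖ ^ 2 - C₀ ≤ ⟪x, b x ω'⟫)
    (hbunbiased : ∀ x, (∫ ω', b x ω' ∂μ) = gradient U x)
    -- the ensemble average π(f) of f under the Boltzmann distribution
    (πf : ℝ)
    (hπf : πf = (∫ z : EuclideanSpace ℝ (Fin d) × EuclideanSpace ℝ (Fin d),
          f z * Real.exp (-(‖z.2‖ ^ 2 / 2 + U z.1))) /
        (∫ z : EuclideanSpace ℝ (Fin d) × EuclideanSpace ℝ (Fin d),
          Real.exp (-(‖z.2‖ ^ 2 / 2 + U z.1)))) :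
    ∃ γ₀ > (0 : ℝ), ∀ γ ≥ γ₀, ∃ C > (0 : ℝ), ∃ h₀ > (0 : ℝ), ∀ h : ℝ, 0 < h → h ≤ h₀ →
      ∀ (Ω : Type) (_ : MeasurableSpace Ω) (P : Measure Ω), IsProbabilityMeasure P →
      ∀ (X V ξ : ℕ → Ω → EuclideanSpace ℝ (Fin d)) (w : ℕ → Ω → Ω'),
        Measurable (X 0) → Measurable (V 0) →
        (∀ n, Measurable (ξ n)) → (∀ n, Measurable (w n)) →
        -- each ξ_n is a standard Gaussian random vector in ℝ^d
        (∀ n, Measure.map (fun ω i => ξ n ω i) P =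
          Measure.pi fun _ : Fin d => gaussianReal 0 1) →
        -- each ω_n has law μ
        (∀ n, Measure.map (w n) P = μ) →
        -- (X₀,V₀), ξ₀, ξ₁, …, ω₀, ω₁, … are mutually independent
        iIndep (fun i : Option (ℕ ⊕ ℕ) =>
          Option.elim i (MeasurableSpace.comap (fun ω => (X 0 ω, V 0 ω)) inferInstance)
            (Sum.elim (fun n => MeasurableSpace.comap (ξ n) inferInstance)
              fun n => MeasurableSpace.comap (w n) inferInstance)) P →
        -- stochastic gradient Euler–Maruyama recursion
        (∀ n ω, X (n + 1) ω = X n ω + h • V n ω) →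
        (∀ n ω, V (n + 1) ω = V n ω - h • b (X n ω) (w n ω) - (γ * h) • V n ω
            + Real.sqrt (2 * γ * h) • ξ n ω) →
        -- finite initial fourth moment
        (∫⁻ ω, ENNReal.ofReal ((‖X 0 ω‖ + ‖V 0 ω‖ + 1) ^ 4) ∂P) < ∞ →
        ∀ N : ℕ, 1 ≤ N →
          (∫⁻ ω, ENNReal.ofReal
              ((((N : ℝ))⁻¹ * (∑ n ∈ Finset.range N, f (X n ω, V n ω)) - πf) ^ 2) ∂P) ≤
            ENNReal.ofReal (C * (h ^ 2 + 1 / (N * h))) *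
              ∫⁻ ω, ENNReal.ofReal ((‖X 0 ω‖ + ‖V 0 ω‖ + 1) ^ 4) ∂P := by
  open UnderdampedLangevin in
  obtain rfl : πf = ∫ z, f z ∂boltzmann U := hπf.trans (integral_boltzmann_eq_div f).symm
  have hb : IsStochasticGradient m C₀ C₁ μ (gradient U) b :=
    ⟨hbmeas, hbgrowth, hbdrift, hbunbiased⟩
  obtain ⟨γ₀, hγ₀, H⟩ := statement16_general hC₀.le hC₁ hm
    (isMonotoneC11_gradient hU hU1 hU2 hU3 hconv)
    (fun x => (hU.differentiable (by norm_num) x).hasGradientAt) hb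
    (hf.differentiable (by norm_num))
    (fun z => norm_iteratedFDeriv_one (𝕜 := ℝ) f ▸ hf1 z)
    (norm_fderiv_sub_le_of_norm_iteratedFDeriv_two_le (hf.of_le (by norm_num)) hf2)
  refine ⟨γ₀, hγ₀, fun γ hγ => ?_⟩
  obtain ⟨C, hC, h₀, hh₀, H⟩ := H γ hγ
  refine ⟨C, hC, h₀, hh₀, fun h hh hhh₀ Ω _ P _ X V ξ w hX hV hξ hw hξlaw hwlaw hind hXsucc hVsucc
    _ N hN => ?_⟩
  exact H h hh hhh₀ P _ _ _
    (isStochasticGradientChain_of_iIndep hX hV hξ hw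
      (fun n => map_eq_stdGaussian_of_map_eq_pi (hξ n) (hξlaw n)) hwlaw hind hXsucc hVsucc) N hN
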